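/- arXiv:2601.16053 — 11 statements merged into one kernel-verified Lean document; each statement's English description precedes it below -/
import Mathlib

section
/- Let 𝒜 be a unital C*-algebra and let p ≥ 1 be a real number. Then there exists a constant c > 0 such that for all positive elements A, B of 𝒜 one has ‖A^p − B^p‖ ≤ c · ‖A^{p−1}·(A − B) + (A − B)·B^{p−1}‖, where the real powers of positive elements are defined via the continuous functional calculus. -/
open scoped NNReal

namespace NonlinEst

/-- A closed set of reals containing `0` and stable under two contractions contains `[0,1]`. -/
lemma Icc_subset_of_closed (T : Set ℝ) (hT : IsClosed T) (h0 : (0 : ℝ) ∈ T)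
    (h1 : ∀ θ ∈ T, 0 ≤ θ → θ ≤ 1 → θ / 2 ∈ T)
    (h2 : ∀ θ ∈ T, 0 ≤ θ → θ ≤ 1 → 1 - θ / 2 ∈ T) :
    ∀ θ : ℝ, 0 ≤ θ → θ ≤ 1 → θ ∈ T := by
  have key : ∀ n : ℕ, ∀ θ : ℝ, 0 ≤ θ → θ ≤ 1 →
      ∃ η ∈ T, 0 ≤ η ∧ η ≤ 1 ∧ |η - θ| ≤ (1 / 2 : ℝ) ^ n := by
    intro n
    induction n with
    | zero =>
      intro θ h h'
      refine ⟨0, h0, le_rfl, zero_le_one, ?_⟩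
      simp [abs_of_nonneg h, h']
    | succ n ih =>
      intro θ h h'
      rcases le_total θ (1 / 2) with hc | hc
      · obtain ⟨η, hη, ha, hb, hd⟩ := ih (2 * θ) (by linarith) (by linarith)
        refine ⟨η / 2, h1 η hη ha hb, by linarith, by linarith, ?_⟩
        rw [pow_succ]
        rw [abs_le] at hd ⊢
        constructor <;> linarith [hd.1, hd.2]
      · obtain ⟨η, hη, ha, hb, hd⟩ := ih (2 - 2 * θ) (by linarith) (by linarith)
        refine ⟨1 - η / 2, h2 η hη ha hb, by linarith, by linarith, ?_⟩
        rw [pow_succ]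
        rw [abs_le] at hd ⊢
        constructor <;> linarith [hd.1, hd.2]
  intro θ h h'
  rw [← hT.closure_eq, Metric.mem_closure_iff]
  intro ε hε
  obtain ⟨n, hn⟩ := exists_pow_lt_of_lt_one hε (by norm_num : (1 / 2 : ℝ) < 1)
  obtain ⟨η, hη, -, -, hd⟩ := key n θ h h'
  refine ⟨η, hη, ?_⟩
  rw [dist_comm, Real.dist_eq]
  exact lt_of_le_of_lt hd hn

section Abstract

variable {E : Type*} [NormedAddCommGroup E] [NormedSpace ℝ E] (V : ℝ → E →ₗ[ℝ] E)

/-- The hyperbolic cosine combination never increases when the parameter shrinks. -/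
lemma cosh_mono (hV0 : ∀ Y, V 0 Y = Y) (hV : ∀ s t Y, V s (V t Y) = V (s + t) Y)
    (hc : ∀ Y, Continuous fun s => V s Y)
    (hcpr : ∀ s Y, 2 * ‖Y‖ ≤ ‖V s Y + V (-s) Y‖) (t : ℝ) (Y : E) (θ : ℝ)
    (h0 : 0 ≤ θ) (h1 : θ ≤ 1) :
    ‖V (θ * t) Y + V (-(θ * t)) Y‖ ≤ ‖V t Y + V (-t) Y‖ := by
  have mid : ∀ α : ℝ, ‖V (α * t) Y + V (-(α * t)) Y‖ ≤ ‖V t Y + V (-t) Y‖ →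
      ‖V ((1 + α) / 2 * t) Y + V (-((1 + α) / 2 * t)) Y‖ ≤ ‖V t Y + V (-t) Y‖ := by
    intro α hα
    have h := hcpr ((1 - α) / 2 * t) (V ((1 + α) / 2 * t) Y + V (-((1 + α) / 2 * t)) Y)
    have e : V ((1 - α) / 2 * t) (V ((1 + α) / 2 * t) Y + V (-((1 + α) / 2 * t)) Y) +
        V (-((1 - α) / 2 * t)) (V ((1 + α) / 2 * t) Y + V (-((1 + α) / 2 * t)) Y) =
        (V t Y + V (-t) Y) + (V (α * t) Y + V (-(α * t)) Y) := by
      simp only [map_add, hV]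
      rw [show (1 - α) / 2 * t + (1 + α) / 2 * t = t by ring,
        show (1 - α) / 2 * t + -((1 + α) / 2 * t) = -(α * t) by ring,
        show -((1 - α) / 2 * t) + (1 + α) / 2 * t = α * t by ring,
        show -((1 - α) / 2 * t) + -((1 + α) / 2 * t) = -t by ring]
      abel
    rw [e] at h
    have := norm_add_le (V t Y + V (-t) Y) (V (α * t) Y + V (-(α * t)) Y)
    linarith
  have main := Icc_subset_of_closed
    {φ : ℝ | ‖V ((1 - φ) * t) Y + V (-((1 - φ) * t)) Y‖ ≤ ‖V t Y + V (-t) Y‖} ?_ ?_ ?_ ?_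
    (1 - θ) (by linarith) (by linarith)
  · simpa using main
  · refine isClosed_le (Continuous.norm (Continuous.add ?_ ?_)) continuous_const
    · exact (hc Y).comp (by fun_prop)
    · exact (hc Y).comp (by fun_prop)
  · simp
  · intro φ hφ _ _
    have := mid (1 - φ) hφ
    simp only [Set.mem_ofPred_eq]
    rwa [show (1 - φ / 2) = (1 + (1 - φ)) / 2 by ring]
  · intro φ hφ _ _
    have hφ' : ‖V (-(1 - φ) * t) Y + V (-(-(1 - φ) * t)) Y‖ ≤ ‖V t Y + V (-t) Y‖ := by
      rw [add_comm, show -(-(1 - φ) * t) = (1 - φ) * t by ring,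
        show -(1 - φ) * t = -((1 - φ) * t) by ring]
      exact hφ
    have := mid (-(1 - φ)) hφ'
    simp only [Set.mem_ofPred_eq]
    rwa [show (1 - (1 - φ / 2)) = (1 + -(1 - φ)) / 2 by ring]

/-- Hyperbolic sine comparison. -/
lemma sinh_bound (hV0 : ∀ Y, V 0 Y = Y) (hV : ∀ s t Y, V s (V t Y) = V (s + t) Y)
    (hc : ∀ Y, Continuous fun s => V s Y)
    (hcpr : ∀ s Y, 2 * ‖Y‖ ≤ ‖V s Y + V (-s) Y‖) (θ : ℝ)
    (h0 : 0 ≤ θ) (h1 : θ ≤ 1) :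
    ∀ (t : ℝ) (Y : E), ‖V (θ * t) Y - V (-(θ * t)) Y‖ ≤ 2 * ‖V t Y - V (-t) Y‖ := by
  have half : ∀ θ : ℝ, (∀ (t : ℝ) (Y : E),
      ‖V (θ * t) Y - V (-(θ * t)) Y‖ ≤ 2 * ‖V t Y - V (-t) Y‖) →
      ∀ (t : ℝ) (Y : E), ‖V (θ / 2 * t) Y - V (-(θ / 2 * t)) Y‖ ≤ ‖V t Y - V (-t) Y‖ := by
    intro θ h t Y
    have h' := h (t / 2) Y
    have h'' := hcpr (t / 2) (V (t / 2) Y - V (-(t / 2)) Y)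
    simp only [map_sub, hV] at h''
    rw [show t / 2 + t / 2 = t by ring, show t / 2 + -(t / 2) = 0 by ring,
      show -(t / 2) + t / 2 = 0 by ring, show -(t / 2) + -(t / 2) = -t by ring,
      sub_add_sub_cancel] at h''
    rw [show θ / 2 * t = θ * (t / 2) by ring]
    linarith
  refine Icc_subset_of_closed
    {θ : ℝ | ∀ (t : ℝ) (Y : E), ‖V (θ * t) Y - V (-(θ * t)) Y‖ ≤ 2 * ‖V t Y - V (-t) Y‖}
    ?_ ?_ ?_ ?_ θ h0 h1
  · simp only [Set.ofPred_forall]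
    refine isClosed_iInter fun t => isClosed_iInter fun Y => ?_
    refine isClosed_le (Continuous.norm (Continuous.sub ?_ ?_)) continuous_const
    · exact (hc Y).comp (by fun_prop)
    · exact (hc Y).comp (by fun_prop)
  · intro t Y
    simp
  · intro θ h _ _ t Y
    have := half θ h t Y
    have := norm_nonneg (V t Y - V (-t) Y)
    linarith
  · intro θ h a0 a1 t Y
    have b1 := half θ h t Y
    have b2 := cosh_mono V hV0 hV hc hcpr (t / 2) (V (t / 2) Y - V (-(t / 2)) Y) (1 - θ)
      (by linarith) (by linarith)
    simp only [map_sub, hV] at b2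
    rw [show t / 2 + t / 2 = t by ring, show t / 2 + -(t / 2) = 0 by ring,
      show -(t / 2) + t / 2 = 0 by ring, show -(t / 2) + -(t / 2) = -t by ring,
      sub_add_sub_cancel,
      show (1 - θ) * (t / 2) + t / 2 = (1 - θ / 2) * t by ring,
      show (1 - θ) * (t / 2) + -(t / 2) = -(θ / 2 * t) by ring,
      show -((1 - θ) * (t / 2)) + t / 2 = θ / 2 * t by ring,
      show -((1 - θ) * (t / 2)) + -(t / 2) = -((1 - θ / 2) * t) by ring] at b2
    have e : V ((1 - θ / 2) * t) Y - V (-((1 - θ / 2) * t)) Y =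
        (V ((1 - θ / 2) * t) Y - V (-(θ / 2 * t)) Y +
          (V (θ / 2 * t) Y - V (-((1 - θ / 2) * t)) Y)) -
        (V (θ / 2 * t) Y - V (-(θ / 2 * t)) Y) := by abel
    rw [e]
    refine (norm_sub_le _ _).trans ?_
    linarith

/-- The abstract form of the estimate. -/
lemma abstract_bound (hV0 : ∀ Y, V 0 Y = Y) (hV : ∀ s t Y, V s (V t Y) = V (s + t) Y)
    (hc : ∀ Y, Continuous fun s => V s Y)
    (hcpr : ∀ s Y, 2 * ‖Y‖ ≤ ‖V s Y + V (-s) Y‖) (q : ℝ) (hq : 0 ≤ q) (Y : E) (n : ℕ) :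
    ∀ s : ℝ, -(1 / 2) ≤ s → s ≤ n + 1 / 2 → s - 1 / 2 ≤ q / 2 →
    ‖V s Y - V (-s) Y‖ ≤ (n + 1) * ‖V (q / 2) (V (1 / 2) Y - V (-(1 / 2)) Y) +
      V (-(q / 2)) (V (1 / 2) Y - V (-(1 / 2)) Y)‖ := by
  set D := V (1 / 2) Y - V (-(1 / 2)) Y with hD
  set Z := V (q / 2) D + V (-(q / 2)) D with hZ
  have hDZ : 2 * ‖D‖ ≤ ‖Z‖ := hcpr _ _
  have base0 : ∀ s : ℝ, 0 ≤ s → s ≤ 1 / 2 → ‖V s Y - V (-s) Y‖ ≤ ‖Z‖ := by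
    intro s a b
    have := sinh_bound V hV0 hV hc hcpr (2 * s) (by linarith) (by linarith) (1 / 2) Y
    rw [show 2 * s * (1 / 2) = s by ring] at this
    linarith
  have base : ∀ s : ℝ, -(1 / 2) ≤ s → s ≤ 1 / 2 → ‖V s Y - V (-s) Y‖ ≤ ‖Z‖ := by
    intro s a b
    rcases le_total 0 s with h | h
    · exact base0 s h b
    · have := base0 (-s) (by linarith) (by linarith)
      rw [neg_neg, norm_sub_rev] at this
      exact this
  have hch0 : ∀ s : ℝ, 0 ≤ s → s ≤ q / 2 → ‖V s D + V (-s) D‖ ≤ ‖Z‖ := by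
    intro s a b
    rcases hq.eq_or_lt with h | h
    · have : s = q / 2 := by linarith
      rw [this]
    · have := cosh_mono V hV0 hV hc hcpr (q / 2) D (s / (q / 2)) (by positivity)
        (by rw [div_le_one (by linarith)]; exact b)
      rwa [div_mul_cancel₀ _ (by linarith : q / 2 ≠ 0)] at this
  induction n with
  | zero =>
    intro s a b _
    simpa using base s a (by simpa using b)
  | succ n ih =>
    intro s a b c
    rcases le_total s (1 / 2) with h | h
    · refine (base s a h).trans ?_
      have : 0 ≤ ((n + 1 : ℕ) : ℝ) := Nat.cast_nonneg _
      nlinarith [norm_nonneg Z]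
    · push_cast at b ⊢
      have i1 := ih (s - 1) (by linarith) (by linarith) (by linarith)
      have i2 := hch0 (s - 1 / 2) (by linarith) c
      have e : V s Y - V (-s) Y = (V (s - 1 / 2) D + V (-(s - 1 / 2)) D) +
          (V (s - 1) Y - V (-(s - 1)) Y) := by
        simp only [hD, map_sub, hV]
        rw [show s - 1 / 2 + 1 / 2 = s by ring, show s - 1 / 2 + -(1 / 2) = s - 1 by ring,
          show -(s - 1 / 2) + 1 / 2 = -(s - 1) by ring,
          show -(s - 1 / 2) + -(1 / 2) = -s by ring]
        abel
      rw [e]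
      refine (norm_add_le _ _).trans ?_
      linarith

end Abstract

section CStar

variable {𝒜 : Type*} [CStarAlgebra 𝒜] [PartialOrder 𝒜] [StarOrderedRing 𝒜]

/-- A strictly accretive element is invertible. -/
lemma isUnit_of_accretive (a : 𝒜) (h : IsStrictlyPositive (a + star a)) : IsUnit a := by
  have h' := h
  set s : 𝒜 := (a + star a) ^ (-(1 / 2) : ℝ) with hs
  have hsp : IsStrictlyPositive s := IsStrictlyPositive.rpow _ _ h
  have hss : star s = s := hsp.isSelfAdjoint
  have h1 : s * (a + star a) * s = 1 := by
    conv_lhs => rw [← CFC.rpow_one (a + star a) h.nonneg]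
    rw [hs, CFC.rpow_one (a + star a) h.nonneg]
    nth_rewrite 2 [← CFC.rpow_one (a + star a) h.nonneg]
    rw [← CFC.rpow_add h.isUnit, ← CFC.rpow_add h.isUnit]
    norm_num
    exact CFC.rpow_zero _ h.nonneg
  set b := s * a * s with hb
  have hbs : star b = 1 - b := by
    rw [eq_sub_iff_add_eq, ← h1, hb]
    simp only [star_mul, hss]
    noncomm_ring
  have hbb : IsUnit (b * star b) := by
    have h4 : (4 : ℝ) • (b * star b) = 1 + star (b - star b) * (b - star b) := by
      have : star (b - star b) = -(b - star b) := by simp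
      rw [this, hbs]
      have : (4 : ℝ) • (b * (1 - b)) = 4 * (b * (1 - b)) := by
        rw [Algebra.smul_def, map_ofNat]
      rw [this]
      noncomm_ring
    have hp : IsStrictlyPositive ((4 : ℝ) • (b * star b)) := by
      rw [h4]
      exact IsStrictlyPositive.of_le isStrictlyPositive_one
        (le_add_of_nonneg_right (star_mul_self_nonneg _))
    have := hp.isUnit
    have h5 : b * star b = algebraMap ℝ 𝒜 (1 / 4) * ((4 : ℝ) • (b * star b)) := by
      rw [← Algebra.smul_def, smul_smul]; norm_num
    rw [h5]
    exact ((by norm_num : IsUnit (1 / 4 : ℝ)).map (algebraMap ℝ 𝒜)).mul this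
  have hcomm : Commute b (star b) := by
    rw [hbs]; exact (Commute.one_right b).sub_right (Commute.refl b)
  have hbu : IsUnit b := (hcomm.isUnit_mul_iff.mp hbb).1
  obtain ⟨u, hu⟩ := hsp.isUnit
  rw [hb, ← hu] at hbu
  simpa using hbu

/-- The Corach, Porta and Recht inequality. -/
lemma cpr (u v : 𝒜ˣ) (hu : star (u : 𝒜) = u) (hv : star (v : 𝒜) = v) (Y : 𝒜) :
    2 * ‖Y‖ ≤ ‖(u : 𝒜) * Y * (v⁻¹ : 𝒜ˣ) + (u⁻¹ : 𝒜ˣ) * Y * v‖ := by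
  nontriviality 𝒜
  have hui : star ((u⁻¹ : 𝒜ˣ) : 𝒜) = (u⁻¹ : 𝒜ˣ) := by
    have : star u = u := Units.ext hu
    rw [← Units.coe_star_inv, this]
  set W := (u : 𝒜) * Y * (v⁻¹ : 𝒜ˣ) + (u⁻¹ : 𝒜ˣ) * Y * v with hW
  by_contra! hlt
  set n : 𝒜 := v * star Y * (u⁻¹ : 𝒜ˣ) with hn
  have hns : star n = (u⁻¹ : 𝒜ˣ) * Y * v := by
    simp only [hn, star_mul, star_star, hui, hv, mul_assoc]
  have hWn : (W - star n) * n = u * (Y * star Y) * (u⁻¹ : 𝒜ˣ) := by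
    rw [hns, hW, add_sub_cancel_right, hn]
    simp [mul_assoc]
  have hspec : ‖Y‖ ^ 2 ∈ spectrum ℝ (u * (Y * star Y) * (u⁻¹ : 𝒜ˣ) : 𝒜) := by
    rw [spectrum.units_conjugate]
    have := CStarAlgebra.norm_mem_spectrum_of_nonneg (mul_star_self_nonneg Y)
    rwa [CStarRing.norm_self_mul_star, ← sq] at this
  rw [← hWn, spectrum.mem_iff] at hspec
  apply hspec
  apply isUnit_of_accretive
  have hpos : 0 < 2 * ‖Y‖ ^ 2 - ‖W‖ ^ 2 / 2 := by nlinarith [norm_nonneg W, norm_nonneg Y]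
  refine IsStrictlyPositive.of_le (isStrictlyPositive_algebraMap (A := 𝒜) hpos) ?_
  have hle := CStarAlgebra.mul_star_le_algebraMap_norm_sq (a := W)
  have hsq : 0 ≤ star (n - (1 / 2 : ℝ) • star W) * (n - (1 / 2 : ℝ) • star W) :=
    star_mul_self_nonneg _
  have h2 : 0 ≤ (2 : ℝ) • (star (n - (1 / 2 : ℝ) • star W) * (n - (1 / 2 : ℝ) • star W)) +
      (1 / 2 : ℝ) • (algebraMap ℝ 𝒜 (‖W‖ ^ 2) - W * star W) :=
    add_nonneg (smul_nonneg (by norm_num) hsq)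
      (smul_nonneg (by norm_num) (sub_nonneg.mpr hle))
  rw [← sub_nonneg]
  refine h2.trans_eq ?_
  simp only [Algebra.algebraMap_eq_smul_one, star_sub, star_smul, star_mul, star_star, star_one,
    star_trivial, sub_mul, mul_sub, smul_mul_assoc, mul_smul_comm, smul_sub]
  module

lemma continuous_rpow_exponent (A : 𝒜) (hA : IsStrictlyPositive A) :
    Continuous fun s : ℝ => A ^ s := by
  rw [continuous_iff_continuousAt]
  intro s₀
  simp only [CFC.rpow_def]
  have hne : ∀ x ∈ spectrum ℝ≥0 A, x ≠ 0 := fun x hx h =>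
    spectrum.zero_notMem ℝ≥0 hA.isUnit (h ▸ hx)
  have hcomp : IsCompact (Metric.closedBall s₀ 1 ×ˢ spectrum ℝ≥0 A) :=
    (isCompact_closedBall s₀ 1).prod (ContinuousFunctionalCalculus.isCompact_spectrum A)
  refine continuousAt_cfc_fun (f := fun (s : ℝ) (x : ℝ≥0) => x ^ s) ?_ ?_
  · have hU : UniformContinuousOn (↿fun (s : ℝ) (x : ℝ≥0) => x ^ s)
        (Metric.closedBall s₀ 1 ×ˢ spectrum ℝ≥0 A) := by
      refine hcomp.uniformContinuousOn_of_continuous ?_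
      rintro ⟨s, x⟩ ⟨_, hx⟩
      apply ContinuousAt.continuousWithinAt
      exact (NNReal.continuousAt_rpow (x := x) (y := s) (.inl (hne x hx))).comp
        (f := fun z : ℝ × ℝ≥0 => (z.2, z.1)) (x := (s, x)) (by fun_prop)
    have := hU.tendstoUniformlyOn (x := s₀) (Metric.mem_closedBall_self zero_le_one)
    rwa [nhdsWithin_eq_nhds.mpr (Metric.closedBall_mem_nhds s₀ one_pos)] at this
  · exact Filter.Eventually.of_forall fun s =>
      NNReal.continuousOn_rpow_const (.inl fun h => hne 0 h rfl)

/-- The two-sided multiplication group `Y ↦ A ^ s * Y * B ^ (-s)`. -/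
noncomputable def flow (A B : 𝒜) (s : ℝ) : 𝒜 →ₗ[ℝ] 𝒜 :=
  (LinearMap.mulLeft ℝ (A ^ s)) ∘ₗ (LinearMap.mulRight ℝ (B ^ (-s)))

lemma flow_apply (A B : 𝒜) (s : ℝ) (Y : 𝒜) : flow A B s Y = A ^ s * Y * B ^ (-s) := by
  simp [flow, mul_assoc]

/-- The estimate for invertible positive elements. -/
lemma strict_bound (q : ℝ) (hq : 0 ≤ q) (n : ℕ) (hn : q / 2 ≤ n) (A B : 𝒜)
    (hA : IsStrictlyPositive A) (hB : IsStrictlyPositive B) :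
    ‖A ^ (q + 1) - B ^ (q + 1)‖ ≤ (n + 1) * ‖A ^ q * (A - B) + (A - B) * B ^ q‖ := by
  have hV0 : ∀ Y, flow A B 0 Y = Y := by
    intro Y
    simp [flow_apply, CFC.rpow_zero A hA.nonneg, CFC.rpow_zero B hB.nonneg]
  have hV : ∀ s t Y, flow A B s (flow A B t Y) = flow A B (s + t) Y := by
    intro s t Y
    simp only [flow_apply]
    rw [show -(s + t) = -t + -s by ring, CFC.rpow_add hA.isUnit, CFC.rpow_add hB.isUnit]
    simp only [mul_assoc]
  have hc : ∀ Y, Continuous fun s => flow A B s Y := by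
    intro Y
    simp only [flow_apply]
    exact ((continuous_rpow_exponent A hA).mul continuous_const).mul
      ((continuous_rpow_exponent B hB).comp continuous_neg)
  have hcpr : ∀ s Y, 2 * ‖Y‖ ≤ ‖flow A B s Y + flow A B (-s) Y‖ := by
    intro s Y
    let u : 𝒜ˣ := ⟨A ^ s, A ^ (-s), CFC.rpow_mul_rpow_neg s hA, CFC.rpow_neg_mul_rpow s hA⟩
    let v : 𝒜ˣ := ⟨B ^ s, B ^ (-s), CFC.rpow_mul_rpow_neg s hB, CFC.rpow_neg_mul_rpow s hB⟩
    have := cpr u v (IsSelfAdjoint.of_nonneg (CFC.rpow_nonneg (a := A) (y := s)))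
      (IsSelfAdjoint.of_nonneg (CFC.rpow_nonneg (a := B) (y := s))) Y
    simp only [flow_apply, neg_neg]
    exact this
  set p := q + 1 with hp
  have hfl : ∀ s : ℝ, flow A B s (A ^ (p / 2) * B ^ (p / 2)) =
      A ^ (s + p / 2) * B ^ (p / 2 - s) := by
    intro s
    rw [flow_apply, CFC.rpow_add hA.isUnit, sub_eq_add_neg, CFC.rpow_add hB.isUnit]
    simp only [mul_assoc]
  have hm := abstract_bound (flow A B) hV0 hV hc hcpr q hq (A ^ (p / 2) * B ^ (p / 2)) n (p / 2)
    (by rw [hp]; linarith) (by rw [hp]; linarith) (by rw [hp]; linarith)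
  simp only [map_sub, hV] at hm
  simp only [hfl] at hm
  rw [show p / 2 + p / 2 = q + 1 by rw [hp]; ring, show p / 2 - p / 2 = 0 by ring,
    show -(p / 2) + p / 2 = 0 by ring, show p / 2 - -(p / 2) = q + 1 by rw [hp]; ring,
    show q / 2 + 1 / 2 + p / 2 = q + 1 by rw [hp]; ring,
    show p / 2 - (q / 2 + 1 / 2) = 0 by rw [hp]; ring,
    show q / 2 + -(1 / 2) + p / 2 = q by rw [hp]; ring,
    show p / 2 - (q / 2 + -(1 / 2)) = 1 by rw [hp]; ring,
    show -(q / 2) + 1 / 2 + p / 2 = 1 by rw [hp]; ring,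
    show p / 2 - (-(q / 2) + 1 / 2) = q by rw [hp]; ring,
    show -(q / 2) + -(1 / 2) + p / 2 = 0 by rw [hp]; ring,
    show p / 2 - (-(q / 2) + -(1 / 2)) = 1 + q by rw [hp]; ring,
    CFC.rpow_zero A hA.nonneg, CFC.rpow_zero B hB.nonneg, CFC.rpow_one A hA.nonneg,
    CFC.rpow_one B hB.nonneg, mul_one, one_mul] at hm
  refine hm.trans_eq ?_
  congr 2
  rw [CFC.rpow_add hA.isUnit, CFC.rpow_add hB.isUnit, CFC.rpow_one A hA.nonneg,
    CFC.rpow_one B hB.nonneg]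
  noncomm_ring

lemma tendsto_rpow_shift (A : 𝒜) (hA : 0 ≤ A) (r : ℝ) (hr : 0 ≤ r) :
    Filter.Tendsto (fun ε : ℝ => (A + algebraMap ℝ 𝒜 ε) ^ r) (nhdsWithin 0 (Set.Ioi 0))
      (nhds (A ^ r)) := by
  have h : ContinuousOn (fun ε : ℝ => cfc (fun x : ℝ≥0 => x ^ r) (A + algebraMap ℝ 𝒜 ε))
      (Set.Ici 0) := by
    refine ContinuousOn.cfc_nnreal_of_mem_nhdsSet (s := Set.univ) _ Filter.univ_mem ?_ ?_ ?_
    · exact (continuous_const.add (continuous_algebraMap ℝ 𝒜)).continuousOn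
    · intro ε hε
      exact add_nonneg hA (algebraMap_nonneg 𝒜 hε)
    · exact (NNReal.continuous_rpow_const hr).continuousOn
  have h2 := (h 0 (Set.self_mem_Ici)).tendsto.mono_left
    (nhdsWithin_mono 0 (Set.Ioi_subset_Ici_self))
  simpa [CFC.rpow_def] using h2

end CStar
end NonlinEst

/-- **Nonlinearity estimate in a unital C*-algebra** (operator-norm case of the paper's
Theorem 4.1): for `p ≥ 1` there is a constant `c > 0` such that for all positive
elements `A, B`, `‖A^p − B^p‖ ≤ c ‖A^{p−1}(A − B) + (A − B)B^{p−1}‖`, where real powers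
of positive elements are taken via the continuous functional calculus (`CFC.rpow`). -/
theorem nonlinearity_estimate_cstar
    {𝒜 : Type*} [CStarAlgebra 𝒜] [PartialOrder 𝒜] [StarOrderedRing 𝒜]
    (p : ℝ) (hp : 1 ≤ p) :
    ∃ c : ℝ, 0 < c ∧ ∀ A B : 𝒜, 0 ≤ A → 0 ≤ B →
      ‖CFC.rpow A p - CFC.rpow B p‖ ≤
        c * ‖CFC.rpow A (p - 1) * (A - B) + (A - B) * CFC.rpow B (p - 1)‖ := by
  obtain ⟨n, hn⟩ := exists_nat_ge ((p - 1) / 2)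
  refine ⟨n + 1, by positivity, fun A B hA hB => ?_⟩
  simp only [CFC.rpow_eq_pow]
  have hA1 := NonlinEst.tendsto_rpow_shift A hA p (by linarith)
  have hB1 := NonlinEst.tendsto_rpow_shift B hB p (by linarith)
  have hA2 := NonlinEst.tendsto_rpow_shift A hA (p - 1) (by linarith)
  have hB2 := NonlinEst.tendsto_rpow_shift B hB (p - 1) (by linarith)
  refine le_of_tendsto_of_tendsto (hA1.sub hB1).norm
    ((((hA2.mul_const (A - B)).add (hB2.const_mul (A - B))).norm).const_mul ((n : ℝ) + 1)) ?_
  filter_upwards [self_mem_nhdsWithin] with ε hε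
  have hε' : IsStrictlyPositive (algebraMap ℝ 𝒜 ε) := isStrictlyPositive_algebraMap hε
  have := NonlinEst.strict_bound (p - 1) (by linarith) n hn (A + algebraMap ℝ 𝒜 ε)
    (B + algebraMap ℝ 𝒜 ε) (IsStrictlyPositive.of_le hε' (le_add_of_nonneg_left hA))
    (IsStrictlyPositive.of_le hε' (le_add_of_nonneg_left hB))
  rwa [sub_add_cancel, add_sub_add_right_eq_sub] at this
end

section
/- Let 𝒜 be a unital C*-algebra and let p ≥ 1 be a real number. Then there exists a constant C > 0 such that for all positive elements A, B of 𝒜 one has ‖A^p − B^p‖ ≤ C · ‖A − B‖ · (‖A‖^{p−1} + ‖B‖^{p−1}), where the real powers of positive elements are defined via the continuous functional calculus. -/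
open scoped NNReal

namespace PowerDiff

open Real Set MeasureTheory

variable {𝒜 : Type*} [CStarAlgebra 𝒜] [PartialOrder 𝒜] [StarOrderedRing 𝒜]

/-- The resolvent of a positive element and the facts we need about it. -/
lemma resolvent_facts (p : ℝ) {t M : ℝ} (ht : 0 < t) (hM : 0 < M) {A : 𝒜} (hA : 0 ≤ A)
    (hAM : ‖A‖ ≤ M) :
    ∃ u : 𝒜, ‖u‖ ≤ 1 ∧ ‖1 - u‖ ≤ M / (t + M) ∧ u * (t • (1 : 𝒜) + A) = t • (1 : 𝒜) ∧
      (t • (1 : 𝒜) + A) * u = t • (1 : 𝒜) ∧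
      cfcₙ (rpowIntegrand₁₂ p t) A = t ^ (p - 1) • (t⁻¹ • A + u - 1) := by
  have hsa : IsSelfAdjoint A := .of_nonneg hA
  have hspec : ∀ x ∈ spectrum ℝ A, 0 ≤ x := fun x hx => spectrum_nonneg_of_nonneg hA hx
  have hspecM : ∀ x ∈ spectrum ℝ A, x ≤ M := fun x hx => by
    cases subsingleton_or_nontrivial 𝒜
    · simp at hx
    · exact (le_abs_self x).trans ((spectrum.norm_le_norm_of_mem hx).trans hAM)
  have hc : ContinuousOn (fun x : ℝ => t * (t + x)⁻¹) (spectrum ℝ A) := by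
    refine ContinuousOn.mul continuousOn_const (ContinuousOn.inv₀ (by fun_prop) ?_)
    intro x hx
    have := hspec x hx
    positivity
  have h1 : t • (1 : 𝒜) + A = cfc (fun x : ℝ => t + x) A := by
    rw [cfc_const_add t (fun x => x) A, cfc_id' ℝ A, Algebra.algebraMap_eq_smul_one]
  have hone : cfc (fun _ : ℝ => t) A = t • (1 : 𝒜) := by
    rw [cfc_const t A, Algebra.algebraMap_eq_smul_one]
  refine ⟨cfc (fun x : ℝ => t * (t + x)⁻¹) A, ?_, ?_, ?_, ?_, ?_⟩
  · refine norm_cfc_le zero_le_one fun x hx => ?_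
    have := hspec x hx
    rw [Real.norm_of_nonneg (by positivity), ← div_eq_mul_inv, div_le_one (by positivity)]
    linarith
  · rw [← cfc_one ℝ A, ← cfc_sub _ _ A (by fun_prop) hc]
    refine norm_cfc_le (by positivity) fun x hx => ?_
    have h0 := hspec x hx
    have h2 := hspecM x hx
    have : (1 : ℝ → ℝ) x - t * (t + x)⁻¹ = x / (t + x) := by
      simp only [Pi.one_apply]
      field_simp
      ring
    rw [this, Real.norm_of_nonneg (by positivity), div_le_div_iff₀ (by positivity) (by positivity)]
    nlinarith
  · rw [h1, ← cfc_mul _ _ A hc (by fun_prop), ← hone]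
    refine cfc_congr fun x hx => ?_
    have h0 := hspec x hx
    field_simp
  · rw [h1, ← cfc_mul _ _ A (by fun_prop) hc, ← hone]
    refine cfc_congr fun x hx => ?_
    have h0 := hspec x hx
    field_simp
  · have hc' : ContinuousOn (fun x : ℝ => t⁻¹ * x + t * (t + x)⁻¹) (spectrum ℝ A) :=
      ContinuousOn.add (by fun_prop) hc
    have hq : ∀ x ∈ quasispectrum ℝ A, 0 ≤ x := fun x hx =>
      quasispectrum_nonneg_of_nonneg A hA x hx
    have e : cfc (rpowIntegrand₁₂ p t) A
        = cfc (fun x : ℝ => t ^ (p - 1) • ((t⁻¹ * x + t * (t + x)⁻¹) - 1)) A := rfl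
    have hcI : ContinuousOn (rpowIntegrand₁₂ p t) (quasispectrum ℝ A) := by
      refine ContinuousOn.mul continuousOn_const (ContinuousOn.sub
        (ContinuousOn.add (by fun_prop) (ContinuousOn.mul continuousOn_const
          (ContinuousOn.inv₀ (by fun_prop) ?_))) continuousOn_const)
      intro x hx
      have := hq x hx
      positivity
    rw [cfcₙ_eq_cfc hcI (rpowIntegrand₁₂_zero ht), e, cfc_smul _ _ A (by fun_prop),
      cfc_sub (fun x : ℝ => t⁻¹ * x + t * (t + x)⁻¹) (fun _ => 1) A hc' (by fun_prop),
      cfc_add A (fun x : ℝ => t⁻¹ * x) (fun x => t * (t + x)⁻¹) (by fun_prop) hc,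
      cfc_const_mul_id t⁻¹ A, cfc_const_one ℝ A]

lemma integrand_bound (p : ℝ) {t M : ℝ} (ht : 0 < t) (hM : 0 < M) {A B : 𝒜} (hA : 0 ≤ A)
    (hB : 0 ≤ B) (hAM : ‖A‖ ≤ M) (hBM : ‖B‖ ≤ M) :
    ‖cfcₙ (rpowIntegrand₁₂ p t) A - cfcₙ (rpowIntegrand₁₂ p t) B‖ ≤
      rpowIntegrand₁₂ p t M * (2 * M⁻¹ * ‖A - B‖) := by
  obtain ⟨u, hu, hu1, hua, -, eA⟩ := resolvent_facts p ht hM hA hAM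
  obtain ⟨v, hv, hv1, -, hvb, eB⟩ := resolvent_facts p ht hM hB hBM
  have key : u * (A - B) * v = t • (v - u) := by
    have h1 : u * (A - B) * v
        = u * (t • (1 : 𝒜) + A) * v - u * ((t • (1 : 𝒜) + B) * v) := by noncomm_ring
    rw [h1, hua, hvb]
    simp [smul_sub]
  have key2 : u - v = - (t⁻¹ • (u * (A - B) * v)) := by
    rw [key, smul_smul, inv_mul_cancel₀ ht.ne', one_smul]; abel
  have e : cfcₙ (rpowIntegrand₁₂ p t) A - cfcₙ (rpowIntegrand₁₂ p t) B
      = (t ^ (p - 1) * t⁻¹) • ((1 - u) * (A - B) + u * (A - B) * (1 - v)) := by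
    have h2 : (1 - u) * (A - B) + u * (A - B) * (1 - v) = (A - B) - u * (A - B) * v := by
      noncomm_ring
    rw [eA, eB, ← smul_sub, mul_smul, h2, smul_sub t⁻¹, sub_eq_add_neg (t⁻¹ • (A - B)), ← key2]
    congr 1
    rw [smul_sub]
    abel
  rw [e, norm_smul, Real.norm_of_nonneg (by positivity)]
  have b1 : ‖(1 - u) * (A - B)‖ ≤ M / (t + M) * ‖A - B‖ :=
    (norm_mul_le _ _).trans (by gcongr)
  have b2 : ‖u * (A - B) * (1 - v)‖ ≤ 1 * ‖A - B‖ * (M / (t + M)) := by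
    refine (norm_mul_le _ _).trans ?_
    gcongr
    exact (norm_mul_le _ _).trans (by gcongr)
  have hrI : rpowIntegrand₁₂ p t M = t ^ (p - 1) * t⁻¹ * (M / (t + M)) * M := by
    rw [rpowIntegrand₁₂]
    field_simp
    ring
  calc _ ≤ t ^ (p - 1) * t⁻¹ * (M / (t + M) * ‖A - B‖ + 1 * ‖A - B‖ * (M / (t + M))) := by
        gcongr
        exact (norm_add_le _ _).trans (add_le_add b1 b2)
    _ = _ := by
        rw [hrI]
        field_simp
        ring

lemma base_case {p : ℝ} (hp : p ∈ Ioo 1 2) {M : ℝ} (hM : 0 < M) {A B : 𝒜} (hA : 0 ≤ A)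
    (hB : 0 ≤ B) (hAM : ‖A‖ ≤ M) (hBM : ‖B‖ ≤ M) :
    ‖A ^ p - B ^ p‖ ≤ 2 * ‖A - B‖ * M ^ (p - 1) := by
  cases subsingleton_or_nontrivial 𝒜
  · rw [Subsingleton.elim (A ^ p - B ^ p) 0, norm_zero]; positivity
  have hp0 : 0 < p := by linarith [hp.1]
  obtain ⟨q, rfl⟩ : ∃ q : ℝ≥0, p = q := ⟨⟨p, hp0.le⟩, rfl⟩
  have hq0 : 0 < q := by exact_mod_cast hp0
  have hq : q ∈ Ioo (1 : ℝ≥0) 2 := ⟨by exact_mod_cast hp.1, by exact_mod_cast hp.2⟩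
  obtain ⟨μ, hμ⟩ :=
    CFC.exists_measure_nnrpow_eq_integral_cfcₙ_rpowIntegrand₁₂ (A := 𝒜) hq
  obtain ⟨iA, hA'⟩ := hμ A hA
  obtain ⟨iB, hB'⟩ := hμ B hB
  have hM1 : (0 : 𝒜) ≤ algebraMap ℝ 𝒜 M := by
    rw [Algebra.algebraMap_eq_smul_one]; exact smul_nonneg hM.le zero_le_one
  obtain ⟨iM, hM'⟩ := hμ (algebraMap ℝ 𝒜 M) hM1
  have hcM : ∀ t ∈ Ioi (0 : ℝ), cfcₙ (rpowIntegrand₁₂ q t) (algebraMap ℝ 𝒜 M)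
      = algebraMap ℝ 𝒜 (rpowIntegrand₁₂ q t M) := by
    intro t ht
    rw [cfcₙ_eq_cfc ?_ (rpowIntegrand₁₂_zero ht), cfc_algebraMap]
    refine ContinuousOn.mul continuousOn_const (ContinuousOn.sub
        (ContinuousOn.add (by fun_prop) (ContinuousOn.mul continuousOn_const
          (ContinuousOn.inv₀ (by fun_prop) ?_))) continuousOn_const)
    intro x hx
    have h1 := quasispectrum_nonneg_of_nonneg _ hM1 x hx
    have h2 : 0 < t := ht
    positivity
  have hnn : ∀ t ∈ Ioi (0 : ℝ), 0 ≤ rpowIntegrand₁₂ q t M := fun t ht =>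
    rpowIntegrand₁₂_nonneg hp.1 (le_of_lt ht) hM.le
  have iI : IntegrableOn (fun t => rpowIntegrand₁₂ q t M) (Ioi 0) μ := by
    refine (integrableOn_congr_fun (fun t ht => ?_) measurableSet_Ioi).mp iM.norm
    rw [hcM t ht, norm_algebraMap', Real.norm_of_nonneg (hnn t ht)]
  have hInt : ∫ t in Ioi 0, rpowIntegrand₁₂ q t M ∂μ = M ^ (q : ℝ) := by
    have h1 : ∫ t in Ioi 0, cfcₙ (rpowIntegrand₁₂ q t) (algebraMap ℝ 𝒜 M) ∂μ
        = algebraMap ℝ 𝒜 (∫ t in Ioi 0, rpowIntegrand₁₂ q t M ∂μ) := by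
      rw [setIntegral_congr_fun measurableSet_Ioi hcM]
      simp only [Algebra.algebraMap_eq_smul_one]
      rw [integral_smul_const]
    have h2 := congrArg norm hM'
    rw [h1, CFC.norm_nnrpow _ hq0 hM1, norm_algebraMap', norm_algebraMap',
      Real.norm_of_nonneg hM.le,
      Real.norm_of_nonneg (setIntegral_nonneg measurableSet_Ioi hnn)] at h2
    exact h2.symm
  rw [← CFC.nnrpow_eq_rpow hq0, ← CFC.nnrpow_eq_rpow hq0, hA', hB', ← integral_sub iA iB]
  calc _ ≤ ∫ t in Ioi 0, rpowIntegrand₁₂ q t M * (2 * M⁻¹ * ‖A - B‖) ∂μ := by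
        refine norm_integral_le_of_norm_le (iI.mul_const _) ?_
        filter_upwards [ae_restrict_mem measurableSet_Ioi] with t ht
        exact integrand_bound q ht hM hA hB hAM hBM
    _ = _ := by
        rw [integral_mul_const, hInt, Real.rpow_sub_one hM.ne']
        field_simp

lemma general_case {q : ℝ} (hq : q ∈ Ico 1 2) (n : ℕ) :
    ∃ C : ℝ, 0 < C ∧ ∀ (M : ℝ) (A B : 𝒜), 0 < M → 0 ≤ A → 0 ≤ B → ‖A‖ ≤ M → ‖B‖ ≤ M →
      ‖A ^ (q + n) - B ^ (q + n)‖ ≤ C * ‖A - B‖ * M ^ (q + n - 1) := by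
  induction n with
  | zero =>
    refine ⟨2, two_pos, fun M A B hM hA hB hAM hBM => ?_⟩
    simp only [Nat.cast_zero, add_zero]
    rcases hq.1.eq_or_lt with h | h
    · subst h
      rw [CFC.rpow_one A, CFC.rpow_one B]
      simp only [sub_self, Real.rpow_zero, mul_one]
      linarith [norm_nonneg (A - B)]
    · exact base_case ⟨h, hq.2⟩ hM hA hB hAM hBM
  | succ n ih =>
    obtain ⟨C, hC, h⟩ := ih
    refine ⟨C + 1, by positivity, fun M A B hM hA hB hAM hBM => ?_⟩
    have hr : 0 < q + n := by have := hq.1; positivity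
    rw [show q + ((n + 1 : ℕ) : ℝ) = 1 + (q + n) by push_cast; ring]
    have h := h M A B hM hA hB hAM hBM
    generalize q + n = r at h hr
    have hmul : ∀ X : 𝒜, 0 ≤ X → X ^ (1 + r) = X * X ^ r := fun X hX => by
      obtain ⟨s, rfl⟩ : ∃ s : ℝ≥0, r = s := ⟨⟨r, hr.le⟩, rfl⟩
      have hs : 0 < s := by exact_mod_cast hr
      have := CFC.nnrpow_add (a := X) one_pos hs
      rw [CFC.nnrpow_one X, CFC.nnrpow_eq_rpow hs, CFC.nnrpow_eq_rpow (by positivity)] at this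
      simpa using this
    have e : A ^ (1 + r) - B ^ (1 + r) = A * (A ^ r - B ^ r) + (A - B) * B ^ r := by
      rw [hmul A hA, hmul B hB]; noncomm_ring
    have b1 : ‖A * (A ^ r - B ^ r)‖ ≤ M * (C * ‖A - B‖ * M ^ (r - 1)) :=
      (norm_mul_le _ _).trans (by gcongr)
    have b2 : ‖(A - B) * B ^ r‖ ≤ ‖A - B‖ * M ^ r := by
      refine (norm_mul_le _ _).trans ?_
      rw [CFC.norm_rpow B hr]
      gcongr
    rw [e]
    refine (norm_add_le _ _).trans ((add_le_add b1 b2).trans (le_of_eq ?_))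
    rw [Real.rpow_sub_one hM.ne', add_sub_cancel_left]
    field_simp
    

end PowerDiff


/-- **Lipschitz-type estimate for powers in a unital C*-algebra** (operator-norm case of the
paper's Corollary 4.2): for `p ≥ 1` there is a constant `C > 0` such that for all positive
elements `A, B`, `‖A^p − B^p‖ ≤ C ‖A − B‖ (‖A‖^{p−1} + ‖B‖^{p−1})`, where real powers of
positive elements are taken via the continuous functional calculus (`CFC.rpow`). -/
theorem power_difference_estimate_cstar
    {𝒜 : Type*} [CStarAlgebra 𝒜] [PartialOrder 𝒜] [StarOrderedRing 𝒜]
    (p : ℝ) (hp : 1 ≤ p) :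
    ∃ C : ℝ, 0 < C ∧ ∀ A B : 𝒜, 0 ≤ A → 0 ≤ B →
      ‖CFC.rpow A p - CFC.rpow B p‖ ≤
        C * ‖A - B‖ * (‖A‖ ^ (p - 1) + ‖B‖ ^ (p - 1)) := by
  have h0 : 0 ≤ p - 1 := by linarith
  have hf1 := Nat.floor_le h0
  have hf2 := Nat.lt_floor_add_one (p - 1)
  obtain ⟨C, hC, h⟩ := PowerDiff.general_case (𝒜 := 𝒜) (q := p - ⌊p - 1⌋₊)
    ⟨by linarith, by linarith⟩ ⌊p - 1⌋₊
  rw [sub_add_cancel] at h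
  refine ⟨C, hC, fun A B hA hB => ?_⟩
  change ‖A ^ p - B ^ p‖ ≤ _
  rcases (norm_nonneg A |>.trans (le_max_left ‖A‖ ‖B‖)).eq_or_lt with hM | hM
  · have hA0 : A = 0 := norm_le_zero_iff.mp (hM ▸ le_max_left ‖A‖ ‖B‖)
    have hB0 : B = 0 := norm_le_zero_iff.mp (hM ▸ le_max_right ‖A‖ ‖B‖)
    simp [hA0, hB0]
  · refine (h _ A B hM hA hB (le_max_left _ _) (le_max_right _ _)).trans ?_
    gcongr
    rcases max_choice ‖A‖ ‖B‖ with e | e <;> rw [e]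
    · exact le_add_of_nonneg_right (by positivity)
    · exact le_add_of_nonneg_left (by positivity)
end

section
/- Let p > 1 be a real number. There exists a Schwartz function g ∈ 𝓢(ℝ, ℝ) such that for every t ≠ 0, g(t) = sinh((p/2 − 1)·t) / ( cosh((p−1)·t/2) · sinh(t/2) ). (Equivalently: the function defined by this formula for t ≠ 0, extended by its limiting value p − 2 at t = 0, is a Schwartz function on ℝ.) -/
namespace SchwartzAux

/-- The algebra of functions generated by `tanh (a t)` and `coth (t / 2)`. -/
inductive Alg (a : ℝ) : (ℝ → ℝ) → Prop
  | const (c : ℝ) : Alg a (fun _ => c)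
  | T : Alg a (fun t => Real.sinh (a * t) / Real.cosh (a * t))
  | C : Alg a (fun t => Real.cosh (t / 2) / Real.sinh (t / 2))
  | add {f g : ℝ → ℝ} : Alg a f → Alg a g → Alg a (fun t => f t + g t)
  | mul {f g : ℝ → ℝ} : Alg a f → Alg a g → Alg a (fun t => f t * g t)

/-- Rapid decay away from the origin. -/
def Dec (f : ℝ → ℝ) : Prop := ∀ k : ℕ, ∃ M : ℝ, ∀ t : ℝ, 1 ≤ |t| → |t| ^ k * |f t| ≤ M

/-- Boundedness away from the origin. -/
def Bdd (f : ℝ → ℝ) : Prop := ∃ M : ℝ, ∀ t : ℝ, 1 ≤ |t| → |f t| ≤ M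

theorem Dec.add {f g : ℝ → ℝ} (hf : Dec f) (hg : Dec g) : Dec (fun t => f t + g t) := by
  intro k
  obtain ⟨M, hM⟩ := hf k
  obtain ⟨N, hN⟩ := hg k
  refine ⟨M + N, fun t ht => ?_⟩
  have h1 := hM t ht
  have h2 := hN t ht
  have h3 : |t| ^ k * |f t + g t| ≤ |t| ^ k * (|f t| + |g t|) := by
    gcongr
    exact abs_add_le _ _
  linarith

theorem Dec.mul {f g : ℝ → ℝ} (hf : Dec f) (hg : Bdd g) : Dec (fun t => f t * g t) := by
  intro k
  obtain ⟨M, hM⟩ := hf k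
  obtain ⟨N, hN⟩ := hg
  refine ⟨M * N, fun t ht => ?_⟩
  have h1 := hM t ht
  have h2 := hN t ht
  have h0 : 0 ≤ |t| ^ k * |f t| := by positivity
  calc |t| ^ k * |f t * g t| = (|t| ^ k * |f t|) * |g t| := by rw [abs_mul]; ring
    _ ≤ M * N := mul_le_mul h1 h2 (abs_nonneg _) (h0.trans h1)

theorem bdd_const (c : ℝ) : Bdd (fun _ => c) := ⟨|c|, fun _ _ => le_rfl⟩

theorem dec_cosh {a : ℝ} (ha : 0 < a) : Dec (fun t => 1 / Real.cosh (a * t) ^ 2) := by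
  intro k
  refine ⟨2 * k.factorial / a ^ k, fun t _ => ?_⟩
  have hc : 1 ≤ Real.cosh (a * t) := Real.one_le_cosh _
  have h1 := Real.pow_div_factorial_le_exp (x := |a * t|) (abs_nonneg _) k
  have h2 : Real.exp |a * t| ≤ 2 * Real.cosh (a * t) := by
    rw [← Real.cosh_abs (a * t), Real.cosh_eq]
    have := Real.exp_pos (-|a * t|)
    linarith
  have hf : (0 : ℝ) < k.factorial := by exact_mod_cast k.factorial_pos
  rw [div_le_iff₀ hf, abs_mul, abs_of_pos ha, mul_pow] at h1
  have h3 : (0 : ℝ) < Real.cosh (a * t) ^ 2 := by positivity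
  have h4 : Real.cosh (a * t) ≤ Real.cosh (a * t) ^ 2 := by nlinarith
  beta_reduce
  rw [abs_of_pos (one_div_pos.2 h3), mul_one_div, div_le_div_iff₀ h3 (by positivity)]
  rw [abs_mul, abs_of_pos ha] at h2
  calc |t| ^ k * a ^ k = a ^ k * |t| ^ k := by ring
    _ ≤ Real.exp (a * |t|) * k.factorial := h1
    _ ≤ (2 * Real.cosh (a * t) ^ 2) * k.factorial := by
        gcongr
        linarith
    _ = _ := by ring

theorem sinh_lower {t : ℝ} (ht : 1 ≤ |t|) :
    Real.sinh (1 / 2) ^ 2 ≤ Real.sinh (t / 2) ^ 2 := by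
  rw [← sq_abs (Real.sinh (t / 2)), Real.abs_sinh]
  have h0 : 0 ≤ Real.sinh (1 / 2) := Real.sinh_nonneg_iff.2 (by norm_num)
  have : Real.sinh (1 / 2) ≤ Real.sinh |t / 2| := by
    rw [Real.sinh_le_sinh, abs_div, abs_two]
    linarith
  gcongr

theorem s0_pos : 0 < Real.sinh (1 / 2) ^ 2 := by
  have : 0 < Real.sinh (1 / 2) := Real.sinh_pos_iff.2 (by norm_num)
  positivity

theorem bdd_inv_sinh : Bdd (fun t => 1 / Real.sinh (t / 2) ^ 2) := by
  refine ⟨1 / Real.sinh (1 / 2) ^ 2, fun t ht => ?_⟩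
  rw [abs_of_nonneg (by positivity)]
  exact one_div_le_one_div_of_le s0_pos (sinh_lower ht)

theorem dec_congr {f g : ℝ → ℝ} (hf : Dec f) (h : ∀ t, 1 ≤ |t| → g t = f t) : Dec g := by
  intro k
  obtain ⟨M, hM⟩ := hf k
  exact ⟨M, fun t ht => by rw [h t ht]; exact hM t ht⟩

theorem dec_sinh : Dec (fun t => 1 / Real.sinh (t / 2) ^ 2) := by
  have h1 := dec_cosh (a := 1 / 2) (by norm_num)
  refine dec_congr (h1.add (h1.mul bdd_inv_sinh)) fun t ht => ?_
  have h2 := s0_pos.trans_le (sinh_lower ht)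
  have h3 := Real.cosh_sq (t / 2)
  have h4 := Real.cosh_pos (t / 2)
  have h5 : (1 : ℝ) / 2 * t = t / 2 := by ring
  simp only [h5]
  have h6 : Real.sinh (t / 2) ≠ 0 := by
    intro h
    simp [h] at h2
  field_simp
  linarith

theorem bdd_T (a : ℝ) : Bdd (fun t => Real.sinh (a * t) / Real.cosh (a * t)) := by
  refine ⟨1, fun t _ => ?_⟩
  have h := Real.cosh_pos (a * t)
  rw [abs_div, abs_of_pos h, div_le_one h]
  refine abs_le_of_sq_le_sq ?_ h.le
  nlinarith [Real.cosh_sq (a * t)]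

theorem bdd_C : Bdd (fun t => Real.cosh (t / 2) / Real.sinh (t / 2)) := by
  obtain ⟨M, hM⟩ := bdd_inv_sinh
  refine ⟨1 + M, fun t ht => ?_⟩
  have h1 := hM t ht
  have h2 := s0_pos.trans_le (sinh_lower ht)
  have h0 : (0 : ℝ) ≤ 1 / Real.sinh (t / 2) ^ 2 := by positivity
  rw [abs_of_nonneg h0] at h1
  refine abs_le_of_sq_le_sq ?_ (by linarith)
  have : (Real.cosh (t / 2) / Real.sinh (t / 2)) ^ 2 = 1 + 1 / Real.sinh (t / 2) ^ 2 := by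
    rw [div_pow, Real.cosh_sq, add_div, div_self h2.ne']
  rw [this]
  nlinarith

theorem sinh_ne {t : ℝ} (ht : t ≠ 0) : Real.sinh (t / 2) ≠ 0 := by
  rw [Ne, Real.sinh_eq_zero]
  simpa using ht

theorem Alg.bdd {a : ℝ} {f : ℝ → ℝ} (hf : Alg a f) : Bdd f := by
  induction hf with
  | const c => exact bdd_const c
  | T => exact bdd_T a
  | C => exact bdd_C
  | add _ _ h1 h2 =>
    obtain ⟨M, hM⟩ := h1
    obtain ⟨N, hN⟩ := h2
    exact ⟨M + N, fun t ht => (abs_add_le _ _).trans (add_le_add (hM t ht) (hN t ht))⟩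
  | mul _ _ h1 h2 =>
    obtain ⟨M, hM⟩ := h1
    obtain ⟨N, hN⟩ := h2
    refine ⟨M * N, fun t ht => ?_⟩
    rw [abs_mul]
    exact mul_le_mul (hM t ht) (hN t ht) (abs_nonneg _) ((abs_nonneg _).trans (hM t ht))

theorem Alg.deriv {a : ℝ} (ha : 0 < a) {f : ℝ → ℝ} (hf : Alg a f) :
    ∃ f' : ℝ → ℝ, Alg a f' ∧ Dec f' ∧ ∀ t, t ≠ 0 → HasDerivAt f (f' t) t := by
  induction hf with
  | const c =>
    exact ⟨fun _ => 0, .const 0, fun k => ⟨0, by simp⟩, fun t _ => hasDerivAt_const t c⟩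
  | T =>
    refine ⟨_, .mul (.const a) (.add (.const 1) (.mul (.const (-1)) (.mul .T .T))), ?_, ?_⟩
    · refine dec_congr ((dec_cosh ha).mul (bdd_const a)) fun t _ => ?_
      have h := Real.cosh_pos (a * t)
      field_simp
      linarith [Real.cosh_sq (a * t)]
    · intro t _
      have h := Real.cosh_pos (a * t)
      have h1 : HasDerivAt (fun t : ℝ => a * t) a t := by
        simpa using (hasDerivAt_id t).const_mul a
      refine (h1.sinh.div h1.cosh h.ne').congr_deriv ?_
      field_simp
      ring
  | C =>
    refine ⟨_, .mul (.const (1 / 2)) (.add (.const 1) (.mul (.const (-1)) (.mul .C .C))), ?_, ?_⟩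
    · refine dec_congr (dec_sinh.mul (bdd_const (-1 / 2))) fun t ht => ?_
      have h := sinh_ne (t := t) (by rintro rfl; norm_num at ht)
      field_simp
      linarith [Real.cosh_sq (t / 2)]
    · intro t ht
      have h := sinh_ne ht
      have h1 : HasDerivAt (fun t : ℝ => t / 2) (1 / 2) t := (hasDerivAt_id t).div_const 2
      refine (h1.cosh.div h1.sinh h).congr_deriv ?_
      field_simp
      ring
  | add _ _ h1 h2 =>
    obtain ⟨u, hu, hu', hu''⟩ := h1
    obtain ⟨v, hv, hv', hv''⟩ := h2
    exact ⟨_, .add hu hv, hu'.add hv', fun t ht => (hu'' t ht).add (hv'' t ht)⟩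
  | mul hf hg h1 h2 =>
    obtain ⟨u, hu, hu', hu''⟩ := h1
    obtain ⟨v, hv, hv', hv''⟩ := h2
    refine ⟨_, .add (.mul hu hg) (.mul hv hf), (hu'.mul hg.bdd).add (hv'.mul hf.bdd),
      fun t ht => ?_⟩
    refine ((hu'' t ht).mul (hv'' t ht)).congr_deriv ?_
    ring

theorem iter {a : ℝ} (ha : 0 < a) {G f : ℝ → ℝ} (hf : Alg a f) (hd : Dec f)
    (h : ∀ t, t ≠ 0 → G t = f t) (n : ℕ) :
    ∃ u, Alg a u ∧ Dec u ∧ ∀ t, t ≠ 0 → iteratedDeriv n G t = u t := by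
  induction n with
  | zero => exact ⟨f, hf, hd, by simpa using h⟩
  | succ n ih =>
    obtain ⟨u, hu, _, hu'⟩ := ih
    obtain ⟨v, hv, hv', hv''⟩ := hu.deriv ha
    refine ⟨v, hv, hv', fun t ht => ?_⟩
    rw [iteratedDeriv_succ]
    refine ((hv'' t ht).congr_of_eventuallyEq ?_).deriv
    filter_upwards [isOpen_ne.mem_nhds ht] with s hs using hu' s hs

theorem contDiffAt_dslope_sinh (c : ℝ) (n : WithTop ℕ∞) :
    ContDiffAt ℝ n (dslope (fun t => Real.sinh (c * t)) 0) 0 := by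
  have h : AnalyticAt ℝ (fun t => Real.sinh (c * t)) 0 := by fun_prop
  obtain ⟨q, hq⟩ := h
  exact (show AnalyticAt ℝ _ _ from ⟨_, hq.has_fpower_series_dslope_fslope⟩).contDiffAt

end SchwartzAux

open SchwartzAux in
/-- **Schwartz-class lemma** (paper's Lemma 4.4): for `p > 1`, the function
`t ↦ sinh((p/2 − 1)t) / (cosh((p−1)t/2) · sinh(t/2))` (defined for `t ≠ 0` and extended
by its limiting value at `0`) belongs to the Schwartz class `𝓢(ℝ, ℝ)`. -/
theorem schwartz_class_lemma (p : ℝ) (hp : 1 < p) :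
    ∃ g : SchwartzMap ℝ ℝ, ∀ t : ℝ, t ≠ 0 →
      g t = Real.sinh ((p / 2 - 1) * t) /
        (Real.cosh ((p - 1) * t / 2) * Real.sinh (t / 2)) := by
  let a := (p - 1) / 2
  have ha : 0 < a := by simp only [a]; linarith
  let G : ℝ → ℝ := fun t => dslope (fun t => Real.sinh ((p / 2 - 1) * t)) 0 t /
    (Real.cosh ((p - 1) * t / 2) * dslope (fun t => Real.sinh (1 / 2 * t)) 0 t)
  have hG : ∀ t, t ≠ 0 → G t = Real.sinh ((p / 2 - 1) * t) /
        (Real.cosh ((p - 1) * t / 2) * Real.sinh (t / 2)) := by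
    intro t ht
    have h1 := sinh_ne ht
    have h2 := Real.cosh_pos ((p - 1) * t / 2)
    have h5 : (1 : ℝ) / 2 * t = t / 2 := by ring
    simp only [G]
    rw [dslope_of_ne _ ht, dslope_of_ne _ ht]
    simp only [slope_def_field, mul_zero, Real.sinh_zero, sub_zero, h5]
    field_simp
  have hsm : ContDiff ℝ (⊤ : ℕ∞) G := by
    rw [contDiff_iff_contDiffAt]
    intro t
    by_cases ht : t = 0
    · subst ht
      refine (contDiffAt_dslope_sinh _ _).div (ContDiffAt.mul ?_ (contDiffAt_dslope_sinh _ _)) ?_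
      · exact Real.contDiff_cosh.contDiffAt.comp _ (by fun_prop)
      · have h1 : HasDerivAt (fun t : ℝ => 1 / 2 * t) (1 / 2) 0 := by
          simpa using (hasDerivAt_id (0 : ℝ)).const_mul (1 / 2 : ℝ)
        rw [dslope_same, h1.sinh.deriv]
        simp
    · have h1 : ContDiffAt ℝ (⊤ : ℕ∞) (fun t => Real.sinh ((p / 2 - 1) * t) /
        (Real.cosh ((p - 1) * t / 2) * Real.sinh (t / 2))) t := by
        refine ContDiffAt.div ?_ (ContDiffAt.mul ?_ ?_) ?_
        · exact Real.contDiff_sinh.contDiffAt.comp t (by fun_prop)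
        · exact Real.contDiff_cosh.contDiffAt.comp t (by fun_prop)
        · exact Real.contDiff_sinh.contDiffAt.comp t (by fun_prop)
        · exact mul_ne_zero (Real.cosh_pos _).ne' (sinh_ne ht)
      refine h1.congr_of_eventuallyEq ?_
      filter_upwards [isOpen_ne.mem_nhds ht] with s hs using hG s hs
  -- the representation `tanh (a t) * coth (t / 2) - 1`
  have hA : Alg a (fun t => (Real.sinh (a * t) / Real.cosh (a * t)) *
      (Real.cosh (t / 2) / Real.sinh (t / 2)) + (-1)) := .add (.mul .T .C) (.const (-1))
  have hGA : ∀ t, t ≠ 0 → G t = (Real.sinh (a * t) / Real.cosh (a * t)) *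
      (Real.cosh (t / 2) / Real.sinh (t / 2)) + (-1) := by
    intro t ht
    rw [hG t ht]
    have h1 := sinh_ne ht
    have h2 := Real.cosh_pos (a * t)
    have e1 : (p / 2 - 1) * t = a * t - t / 2 := by simp only [a]; ring
    have e2 : (p - 1) * t / 2 = a * t := by simp only [a]; ring
    rw [e1, e2, Real.sinh_sub]
    field_simp
    ring
  have hD : Dec (fun t => (Real.sinh (a * t) / Real.cosh (a * t)) *
      (Real.cosh (t / 2) / Real.sinh (t / 2)) + (-1)) := by
    have hJ : Dec (fun t => (1 / Real.cosh (a * t) ^ 2) * (-1 + (-1) * (1 / Real.sinh (t / 2) ^ 2))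
        + 1 / Real.sinh (t / 2) ^ 2) := by
      refine ((dec_cosh ha).mul ?_).add dec_sinh
      obtain ⟨M, hM⟩ := bdd_inv_sinh
      refine ⟨1 + M, fun t ht => ?_⟩
      refine (abs_add_le _ _).trans ?_
      have := hM t ht
      rw [abs_mul]
      simp only [abs_neg, abs_one, one_mul]
      linarith
    intro k
    obtain ⟨M, hM⟩ := hJ k
    refine ⟨M, fun t ht => le_trans ?_ (hM t ht)⟩
    have ht0 : t ≠ 0 := by rintro rfl; norm_num at ht
    have h1 := sinh_ne ht0
    have h2 := Real.cosh_pos (a * t)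
    have h3 := Real.cosh_pos (t / 2)
    refine mul_le_mul_of_nonneg_left ?_ (by positivity)
    beta_reduce
    set X := (Real.sinh (a * t) / Real.cosh (a * t)) *
      (Real.cosh (t / 2) / Real.sinh (t / 2)) with hX
    have hXpos : 0 ≤ X := by
      rcases lt_or_gt_of_ne ht0 with h | h
      · have s1 : Real.sinh (a * t) < 0 := Real.sinh_neg_iff.2 (by nlinarith)
        have s2 : Real.sinh (t / 2) < 0 := Real.sinh_neg_iff.2 (by linarith)
        exact mul_nonneg_of_nonpos_of_nonpos (div_neg_of_neg_of_pos s1 h2).le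
          (div_neg_of_pos_of_neg h3 s2).le
      · have s1 : 0 < Real.sinh (a * t) := Real.sinh_pos_iff.2 (by positivity)
        have s2 : 0 < Real.sinh (t / 2) := Real.sinh_pos_iff.2 (by linarith)
        positivity
    have e : (1 / Real.cosh (a * t) ^ 2) * (-1 + (-1) * (1 / Real.sinh (t / 2) ^ 2))
        + 1 / Real.sinh (t / 2) ^ 2 = (X + -1) * (X + 1) := by
      have : (X + -1) * (X + 1) = X ^ 2 - 1 := by ring
      rw [this, hX, mul_pow, div_pow, div_pow, Real.cosh_sq (t / 2), Real.sinh_sq (a * t)]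
      field_simp
      ring
    rw [e, abs_mul]
    refine le_mul_of_one_le_right (abs_nonneg _) ?_
    rw [abs_of_nonneg (by linarith)]
    linarith
  refine ⟨⟨G, hsm, fun k n => ?_⟩, hG⟩
  obtain ⟨u, _, hu, hu'⟩ := iter ha hA hD hGA n
  obtain ⟨M, hM⟩ := hu k
  have hc : Continuous (fun t => |t| ^ k * |iteratedDeriv n G t|) := by
    have := hsm.continuous_iteratedDeriv n (by exact_mod_cast le_top)
    fun_prop
  obtain ⟨N, hN⟩ := (isCompact_Icc (a := (-1 : ℝ)) (b := 1)).bddAbove_image hc.continuousOn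
  refine ⟨max M N, fun t => ?_⟩
  rw [norm_iteratedFDeriv_eq_norm_iteratedDeriv, Real.norm_eq_abs, Real.norm_eq_abs]
  rcases le_total 1 |t| with ht | ht
  · have ht0 : t ≠ 0 := by rintro rfl; norm_num at ht
    rw [hu' t ht0]
    exact (hM t ht).trans (le_max_left _ _)
  · exact (hN ⟨t, abs_le.1 ht, rfl⟩).trans (le_max_right _ _)
end

section
/- Let p > 1 be a real number and let λ, μ > 0 with λ ≠ μ. Then (λ^p − μ^p) / ( (λ − μ)·(λ^{p−1} + μ^{p−1}) ) = 1 + sinh((p/2 − 1)·L) / ( 2 · cosh((p−1)·L/2) · sinh(L/2) ), where L = log λ − log μ. -/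
/-- **Scalar decomposition of the divided-difference symbol** (from the proof of the paper's
Lemma 4.5): for `p > 1` and `λ, μ > 0` with `λ ≠ μ`, setting `L = log λ − log μ`, one has
`(λ^p − μ^p)/((λ − μ)(λ^{p−1} + μ^{p−1})) = 1 + sinh((p/2 − 1)L)/(2 cosh((p−1)L/2) sinh(L/2))`. -/
theorem doi_symbol_decomposition (p : ℝ) (hp : 1 < p) (lam mu : ℝ)
    (hlam : 0 < lam) (hmu : 0 < mu) (hne : lam ≠ mu) :
    (lam ^ p - mu ^ p) / ((lam - mu) * (lam ^ (p - 1) + mu ^ (p - 1))) =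
      1 + Real.sinh ((p / 2 - 1) * (Real.log lam - Real.log mu)) /
        (2 * Real.cosh ((p - 1) * (Real.log lam - Real.log mu) / 2) *
          Real.sinh ((Real.log lam - Real.log mu) / 2)) := by
  have hL : Real.log lam - Real.log mu ≠ 0 := by
    intro h
    exact hne (Real.log_injOn_pos hlam hmu (sub_eq_zero.mp h))
  set L := Real.log lam - Real.log mu with hLdef
  set m := (Real.log lam + Real.log mu) / 2 with hm
  have h1 : ∀ q : ℝ, lam ^ q = Real.exp (q * m) * Real.exp (q * L / 2) := by
    intro q
    rw [Real.rpow_def_of_pos hlam, ← Real.exp_add]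
    congr 1
    rw [hm, hLdef]; ring
  have h2 : ∀ q : ℝ, mu ^ q = Real.exp (q * m) * Real.exp (-(q * L / 2)) := by
    intro q
    rw [Real.rpow_def_of_pos hmu, ← Real.exp_add]
    congr 1
    rw [hm, hLdef]; ring
  have hd : ∀ q : ℝ, lam ^ q - mu ^ q = 2 * Real.exp (q * m) * Real.sinh (q * L / 2) := by
    intro q
    rw [h1, h2, Real.sinh_eq]; ring
  have hs : ∀ q : ℝ, lam ^ q + mu ^ q = 2 * Real.exp (q * m) * Real.cosh (q * L / 2) := by
    intro q
    rw [h1, h2, Real.cosh_eq]; ring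
  have hd1 : lam - mu = 2 * Real.exp m * Real.sinh (L / 2) := by
    have := hd 1
    simpa using this
  have hsn : Real.sinh (L / 2) ≠ 0 := by
    rw [Ne, Real.sinh_eq_zero]
    exact div_ne_zero hL two_ne_zero
  have hc : Real.cosh ((p - 1) * L / 2) ≠ 0 := (Real.cosh_pos _).ne'
  have he : Real.exp (p * m) = Real.exp m * Real.exp ((p - 1) * m) := by
    rw [← Real.exp_add]; congr 1; ring
  have e1 := Real.exp_ne_zero m
  have e2 := Real.exp_ne_zero ((p - 1) * m)
  have a1 : p * L / 2 = (p - 1) * L / 2 + L / 2 := by ring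
  have a2 : (p / 2 - 1) * L = (p - 1) * L / 2 - L / 2 := by ring
  rw [hd, hs, hd1, he, a1, a2, Real.sinh_add, Real.sinh_sub]
  generalize Real.cosh ((p - 1) * L / 2) = C at *
  generalize Real.sinh ((p - 1) * L / 2) = S at *
  generalize Real.sinh (L / 2) = s at *
  generalize Real.cosh (L / 2) = c at *
  generalize Real.exp m = E at *
  generalize Real.exp ((p - 1) * m) = F at *
  field_simp
  ring
end

section
/- Let H be a complex Hilbert space and let Φ : B(H) → B(H) be a continuous linear map satisfying Φ(1) = 1 and Φ(T*) = Φ(T)* for all T ∈ B(H). Assume Φ is 2-positive in the following sense: for all A, B, C ∈ B(H), if for all x, y ∈ H one has Re⟨x, A x⟩ + 2·Re⟨x, B y⟩ + Re⟨y, C y⟩ ≥ 0, then for all x, y ∈ H one has Re⟨x, Φ(A) x⟩ + 2·Re⟨x, Φ(B) y⟩ + Re⟨y, Φ(C) y⟩ ≥ 0. Then for every real p with 1 ≤ p ≤ 2 and every positive operator u ∈ B(H), one has Φ(u)^p ≤ Φ(u^p), i.e. Φ(u^p) − Φ(u)^p is a positive operator, where the real powers of positive operators are defined via the continuous functional calculus.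 -/
open ContinuousLinearMap
open scoped InnerProductSpace

namespace OpJensen

open Set MeasureTheory Real

/-- Positivity from self-adjointness and the quadratic form. -/
lemma isPositive_of {H : Type*} [NormedAddCommGroup H]
    [InnerProductSpace ℂ H] [CompleteSpace H] (T : H →L[ℂ] H) (hT : IsSelfAdjoint T)
    (h : ∀ x, 0 ≤ (⟪x, T x⟫_ℂ).re) : T.IsPositive := by
  rw [isPositive_def']
  refine ⟨hT, fun x => ?_⟩
  rw [reApplyInnerSelf_apply, inner_re_symm]
  exact h x

lemma inner_sa {H : Type*} [NormedAddCommGroup H]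
    [InnerProductSpace ℂ H] [CompleteSpace H] {T : H →L[ℂ] H} (hT : IsSelfAdjoint T)
    (x y : H) : ⟪T x, y⟫_ℂ = ⟪x, T y⟫_ℂ :=
  (isSelfAdjoint_iff_isSymmetric.mp hT) x y

lemma mul_app {H : Type*} [NormedAddCommGroup H]
    [InnerProductSpace ℂ H] (S T : H →L[ℂ] H) (x : H) : (S * T) x = S (T x) := rfl

lemma map_sa {H : Type*} [NormedAddCommGroup H]
    [InnerProductSpace ℂ H] [CompleteSpace H]
    (Φ : (H →L[ℂ] H) →L[ℂ] (H →L[ℂ] H))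
    (hstar : ∀ T : H →L[ℂ] H, Φ (adjoint T) = adjoint (Φ T)) {T : H →L[ℂ] H}
    (hT : IsSelfAdjoint T) : IsSelfAdjoint (Φ T) := by
  rw [isSelfAdjoint_iff'] at hT ⊢
  rw [← hstar, hT]

/-- `Φ` is positive. -/
lemma map_pos {H : Type*} [NormedAddCommGroup H]
    [InnerProductSpace ℂ H] [CompleteSpace H]
    (Φ : (H →L[ℂ] H) →L[ℂ] (H →L[ℂ] H))
    (hstar : ∀ T : H →L[ℂ] H, Φ (adjoint T) = adjoint (Φ T))
    (h2pos : ∀ A B C : H →L[ℂ] H,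
      (∀ x y : H,
        0 ≤ (⟪x, A x⟫_ℂ).re + 2 * (⟪x, B y⟫_ℂ).re + (⟪y, C y⟫_ℂ).re) →
      ∀ x y : H,
        0 ≤ (⟪x, Φ A x⟫_ℂ).re + 2 * (⟪x, Φ B y⟫_ℂ).re + (⟪y, Φ C y⟫_ℂ).re)
    (u : H →L[ℂ] H) (hu : u.IsPositive) : (Φ u).IsPositive := by
  refine isPositive_of _ (map_sa Φ hstar hu.isSelfAdjoint) fun x => ?_
  have := h2pos u 0 0 (fun x y => by
    simpa using hu.re_inner_nonneg_right x) x 0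
  simpa using this

/-- Kadison's inequality for squares. -/
lemma map_sq {H : Type*} [NormedAddCommGroup H]
    [InnerProductSpace ℂ H] [CompleteSpace H]
    (Φ : (H →L[ℂ] H) →L[ℂ] (H →L[ℂ] H))
    (hunital : Φ 1 = 1)
    (hstar : ∀ T : H →L[ℂ] H, Φ (adjoint T) = adjoint (Φ T))
    (h2pos : ∀ A B C : H →L[ℂ] H,
      (∀ x y : H,
        0 ≤ (⟪x, A x⟫_ℂ).re + 2 * (⟪x, B y⟫_ℂ).re + (⟪y, C y⟫_ℂ).re) →
      ∀ x y : H,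
        0 ≤ (⟪x, Φ A x⟫_ℂ).re + 2 * (⟪x, Φ B y⟫_ℂ).re + (⟪y, Φ C y⟫_ℂ).re)
    (u : H →L[ℂ] H) (hu : IsSelfAdjoint u) : (Φ (u ^ 2) - Φ u ^ 2).IsPositive := by
  have hs := map_sa Φ hstar hu
  refine isPositive_of _ ((map_sa Φ hstar (hu.pow 2)).sub (hs.pow 2)) fun x => ?_
  have := h2pos (u ^ 2) u 1 (fun x y => by
    have h : 0 ≤ (⟪u x + y, u x + y⟫_ℂ).re := inner_self_nonneg (𝕜 := ℂ)
    have h2 : (⟪y, u x⟫_ℂ).re = (⟪u x, y⟫_ℂ).re := inner_re_symm (𝕜 := ℂ) _ _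
    simp only [inner_add_left, inner_add_right, Complex.add_re, h2] at h
    simp only [inner_sa hu] at h
    simp only [pow_two, mul_app, one_apply_eq_self]
    linarith) x (-(Φ u x))
  simp only [hunital, one_apply_eq_self, map_neg, inner_neg_left, inner_neg_right, neg_neg,
    Complex.neg_re, inner_sa hs] at this
  simp only [pow_two, sub_apply, mul_app, inner_sub_right, Complex.sub_re]
  simp only [pow_two] at this
  linarith

/-- The inverse inequality `Φ(a)⁻¹ ≤ Φ(a⁻¹)`. -/
lemma map_inv_le {H : Type*} [NormedAddCommGroup H]
    [InnerProductSpace ℂ H] [CompleteSpace H]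
    (Φ : (H →L[ℂ] H) →L[ℂ] (H →L[ℂ] H))
    (hunital : Φ 1 = 1)
    (hstar : ∀ T : H →L[ℂ] H, Φ (adjoint T) = adjoint (Φ T))
    (h2pos : ∀ A B C : H →L[ℂ] H,
      (∀ x y : H,
        0 ≤ (⟪x, A x⟫_ℂ).re + 2 * (⟪x, B y⟫_ℂ).re + (⟪y, C y⟫_ℂ).re) →
      ∀ x y : H,
        0 ≤ (⟪x, Φ A x⟫_ℂ).re + 2 * (⟪x, Φ B y⟫_ℂ).re + (⟪y, Φ C y⟫_ℂ).re)
    (a b b' : H →L[ℂ] H) (ha : a.IsPositive) (hb : IsSelfAdjoint b) (hb' : IsSelfAdjoint b')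
    (hab : a * b = 1) (hba : b * a = 1) (hab' : Φ a * b' = 1) :
    b' ≤ Φ b := by
  rw [le_def]
  refine isPositive_of _ ((map_sa Φ hstar hb).sub hb') fun x => ?_
  have e1 : ∀ z, a (b z) = z := fun z => by rw [← mul_app, hab, one_apply_eq_self]
  have e2 : ∀ z, b (a z) = z := fun z => by rw [← mul_app, hba, one_apply_eq_self]
  have e3 : ∀ z, Φ a (b' z) = z := fun z => by rw [← mul_app, hab', one_apply_eq_self]
  have := h2pos b 1 a (fun x y => by
    have h : 0 ≤ (⟪b x + y, a (b x + y)⟫_ℂ).re := ha.re_inner_nonneg_right _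
    have h2 : (⟪y, x⟫_ℂ).re = (⟪x, y⟫_ℂ).re := inner_re_symm (𝕜 := ℂ) _ _
    simp only [map_add, e1, inner_add_left, inner_add_right, Complex.add_re, h2,
      inner_sa hb, e2] at h
    simp only [one_apply_eq_self]
    linarith) x (-(b' x))
  simp only [hunital, one_apply_eq_self, map_neg, inner_neg_left, inner_neg_right, neg_neg,
    Complex.neg_re, e3, inner_sa hb'] at this
  simp only [sub_apply, inner_sub_right, Complex.sub_re]
  linarith

/-- Explicit form of the integrand under the functional calculus. -/
lemma cfc_integrand {H : Type*} [NormedAddCommGroup H]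
    [InnerProductSpace ℂ H] [CompleteSpace H] (p t : ℝ) (hp : p ∈ Ioo 1 2) (ht : 0 < t)
    (u : H →L[ℂ] H) (hu : 0 ≤ u) :
    ∃ b : H →L[ℂ] H, IsSelfAdjoint b ∧ (t • 1 + u) * b = 1 ∧ b * (t • 1 + u) = 1 ∧
      cfcₙ (rpowIntegrand₁₂ p t) u = t ^ (p - 1) • (t⁻¹ • u + t • b - 1) := by
  have hsp : ∀ r ∈ spectrum ℝ u, 0 ≤ r := fun r hr => spectrum_nonneg_of_nonneg hu hr
  have hne : ∀ r ∈ spectrum ℝ u, t + r ≠ 0 := fun r hr => by have := hsp r hr; positivity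
  have hsa : IsSelfAdjoint u := .of_nonneg hu
  have hg : ContinuousOn (fun z : ℝ => (t + z)⁻¹) (spectrum ℝ u) :=
    ContinuousOn.inv₀ (by fun_prop) hne
  have ha : cfc (fun z : ℝ => t + z) u = t • 1 + u := by
    rw [cfc_const_add .., cfc_id' .., Algebra.algebraMap_eq_smul_one]
  have hab : (cfc (fun z : ℝ => t + z) u) * (cfc (fun z : ℝ => (t + z)⁻¹) u) = 1 := by
    rw [← cfc_mul (fun z : ℝ => t + z) (fun z : ℝ => (t + z)⁻¹) u (by fun_prop) hg, ← cfc_one ℝ u]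
    exact cfc_congr fun r hr => mul_inv_cancel₀ (hne r hr)
  have hba : (cfc (fun z : ℝ => (t + z)⁻¹) u) * (cfc (fun z : ℝ => t + z) u) = 1 := by
    rw [← cfc_mul (fun z : ℝ => (t + z)⁻¹) (fun z : ℝ => t + z) u hg (by fun_prop), ← cfc_one ℝ u]
    exact cfc_congr fun r hr => inv_mul_cancel₀ (hne r hr)
  refine ⟨cfc (fun z : ℝ => (t + z)⁻¹) u, cfc_predicate _ _, ha ▸ hab, ha ▸ hba, ?_⟩
  have hform : rpowIntegrand₁₂ p t =
      fun x => t ^ (p - 1) * (t⁻¹ * x + t * (t + x)⁻¹ - 1) := by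
    ext x
    simp only [rpowIntegrand₁₂]
    try ring
  have hc : ContinuousOn (rpowIntegrand₁₂ p t) (quasispectrum ℝ u) := by
    rw [hform]
    have : ContinuousOn (fun z : ℝ => (t + z)⁻¹) (quasispectrum ℝ u) :=
      ContinuousOn.inv₀ (by fun_prop) fun r hr => by
        have := quasispectrum_nonneg_of_nonneg u hu r hr
        positivity
    fun_prop
  have h1 : ContinuousOn (fun z : ℝ => t⁻¹ * z) (spectrum ℝ u) := by fun_prop
  have h2 : ContinuousOn (fun z : ℝ => t * (t + z)⁻¹) (spectrum ℝ u) := hg.const_mul t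
  have h3 : ContinuousOn (fun z : ℝ => t⁻¹ * z + t * (t + z)⁻¹) (spectrum ℝ u) := h1.add h2
  have h4 : ContinuousOn (fun z : ℝ => t⁻¹ * z + t * (t + z)⁻¹ - 1) (spectrum ℝ u) :=
    h3.sub continuousOn_const
  rw [cfcₙ_eq_cfc hc (rpowIntegrand₁₂_zero ht), hform,
    cfc_const_mul (t ^ (p - 1)) (fun z : ℝ => t⁻¹ * z + t * (t + z)⁻¹ - 1) u h4,
    cfc_sub (fun z : ℝ => t⁻¹ * z + t * (t + z)⁻¹) (fun _ => 1) u h3 continuousOn_const,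
    cfc_add (a := u) (fun z : ℝ => t⁻¹ * z) (fun z : ℝ => t * (t + z)⁻¹) h1 h2,
    cfc_const_mul t⁻¹ (fun z : ℝ => z) u continuousOn_id,
    cfc_const_mul t (fun z : ℝ => (t + z)⁻¹) u hg,
    cfc_id' ℝ u, cfc_const_one ℝ u]

end OpJensen

/-- **Operator Jensen inequality** (the paper's Proposition A.2): if `Φ : B(H) → B(H)` is a
continuous linear, unital, star-preserving and 2-positive map, then for every `1 ≤ p ≤ 2`
and every positive `u ∈ B(H)` one has `Φ(u)^p ≤ Φ(u^p)`, the real powers being taken via the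
continuous functional calculus. -/
theorem operator_jensen_ucp {H : Type*} [NormedAddCommGroup H]
    [InnerProductSpace ℂ H] [CompleteSpace H]
    (Φ : (H →L[ℂ] H) →L[ℂ] (H →L[ℂ] H))
    (hunital : Φ 1 = 1)
    (hstar : ∀ T : H →L[ℂ] H, Φ (adjoint T) = adjoint (Φ T))
    (h2pos : ∀ A B C : H →L[ℂ] H,
      (∀ x y : H,
        0 ≤ (⟪x, A x⟫_ℂ).re + 2 * (⟪x, B y⟫_ℂ).re + (⟪y, C y⟫_ℂ).re) →
      ∀ x y : H,
        0 ≤ (⟪x, Φ A x⟫_ℂ).re + 2 * (⟪x, Φ B y⟫_ℂ).re + (⟪y, Φ C y⟫_ℂ).re)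
    (p : ℝ) (hp1 : 1 ≤ p) (hp2 : p ≤ 2)
    (u : H →L[ℂ] H) (hu : u.IsPositive) :
    (Φ (cfc (fun x : ℝ => x ^ p) u) - cfc (fun x : ℝ => x ^ p) (Φ u)).IsPositive := by
  have hu0 : 0 ≤ u := (nonneg_iff_isPositive u).2 hu
  have hv : (Φ u).IsPositive := OpJensen.map_pos Φ hstar h2pos u hu
  have hv0 : 0 ≤ Φ u := (nonneg_iff_isPositive _).2 hv
  rw [← le_def]
  rcases hp1.eq_or_lt with rfl | hp1
  · simp only [Real.rpow_one]
    rw [cfc_id' ℝ u, cfc_id' ℝ (Φ u)]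
  rcases hp2.eq_or_lt with rfl | hp2
  · simp only [Real.rpow_two]
    rw [cfc_pow_id u 2, cfc_pow_id (Φ u) 2]
    exact OpJensen.map_sq Φ hunital hstar h2pos u hu.isSelfAdjoint
  have hq : (⟨p, by linarith⟩ : NNReal) ∈ Set.Ioo (1 : NNReal) 2 :=
    ⟨by exact_mod_cast hp1, by exact_mod_cast hp2⟩
  obtain ⟨μ, hμ⟩ :=
    CFC.exists_measure_nnrpow_eq_integral_cfcₙ_rpowIntegrand₁₂ (H →L[ℂ] H) hq
  have key : ∀ w : H →L[ℂ] H, 0 ≤ w → cfc (fun x : ℝ => x ^ p) w =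
      ∫ t in Set.Ioi 0, cfcₙ (Real.rpowIntegrand₁₂ p t) w ∂μ := by
    intro w hw
    rw [← CFC.rpow_eq_cfc_real hw]
    have := (hμ w hw).2
    rw [CFC.nnrpow_eq_rpow (lt_trans zero_lt_one hq.1)] at this
    exact this
  have hint : ∀ w : H →L[ℂ] H, 0 ≤ w → MeasureTheory.IntegrableOn
      (fun t => cfcₙ (Real.rpowIntegrand₁₂ p t) w) (Set.Ioi 0) μ := fun w hw => (hμ w hw).1
  rw [key u hu0, key (Φ u) hv0, ← Φ.integral_comp_comm (hint u hu0)]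
  refine MeasureTheory.setIntegral_mono_on (hint (Φ u) hv0)
    (Φ.integrable_comp (hint u hu0)) measurableSet_Ioi fun t ht => ?_
  have ht : 0 < t := ht
  obtain ⟨b, hb, hab, hba, e⟩ := OpJensen.cfc_integrand p t ⟨hp1, hp2⟩ ht u hu0
  obtain ⟨b', hb', hab', hba', e'⟩ := OpJensen.cfc_integrand p t ⟨hp1, hp2⟩ ht (Φ u) hv0
  have hsm : ∀ (r : ℝ) (T : H →L[ℂ] H), Φ (r • T) = r • Φ T := fun r T =>
    map_real_smul Φ Φ.continuous r T
  have hle : b' ≤ Φ b := by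
    refine OpJensen.map_inv_le Φ hunital hstar h2pos (t • 1 + u) b b' ?_ hb hb' hab hba ?_
    · rw [← nonneg_iff_isPositive]
      exact add_nonneg (smul_nonneg ht.le zero_le_one) hu0
    · rw [map_add, hsm, hunital, hab']
  rw [e, e']
  simp only [hsm, map_sub, map_add, hunital]
  gcongr
end

section
/- Let p > 1 and s₁ > 0 be real numbers, and let ρ : ℝ → ℝ be differentiable on [0, s₁] with ρ(t) > 0 for all t ∈ [0, s₁] and ρ'(t) ≥ ρ(t)^p for all t ∈ [0, s₁]. Then ρ(0)^{1−p} ≥ (p − 1)·s₁; equivalently, ρ(0) ≤ ((p − 1)·s₁)^{−1/(p−1)}. -/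
/-- **Scalar differential inequality** (core of the proof of the paper's Lemma 6.1): if
`ρ > 0` is differentiable on `[0, s₁]` with `ρ' ≥ ρ^p` there, then
`ρ(0)^{1−p} ≥ (p−1) s₁`, equivalently `ρ(0) ≤ ((p−1) s₁)^{−1/(p−1)}`. -/
theorem scalar_blowup_bound (p s₁ : ℝ) (hp : 1 < p) (hs₁ : 0 < s₁)
    (ρ ρ' : ℝ → ℝ)
    (hderiv : ∀ t ∈ Set.Icc (0 : ℝ) s₁, HasDerivAt ρ (ρ' t) t)
    (hpos : ∀ t ∈ Set.Icc (0 : ℝ) s₁, 0 < ρ t)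
    (hineq : ∀ t ∈ Set.Icc (0 : ℝ) s₁, ρ t ^ p ≤ ρ' t) :
    (p - 1) * s₁ ≤ ρ 0 ^ (1 - p) ∧ ρ 0 ≤ ((p - 1) * s₁) ^ (-(1 / (p - 1))) := by
  have hd : ∀ t ∈ Set.Icc (0 : ℝ) s₁, HasDerivAt (fun y => ρ y ^ (1 - p))
      (ρ' t * (1 - p) * ρ t ^ (1 - p - 1)) t := fun t ht =>
    (hderiv t ht).rpow_const (Or.inl (hpos t ht).ne')
  obtain ⟨c, hc, hcs⟩ := exists_hasDerivAt_eq_slope (fun y => ρ y ^ (1 - p))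
    (fun t => ρ' t * (1 - p) * ρ t ^ (1 - p - 1)) hs₁
    (fun t ht => (hd t ht).continuousAt.continuousWithinAt)
    (fun t ht => hd t (Set.Ioo_subset_Icc_self ht))
  have hcI := Set.Ioo_subset_Icc_self hc
  have h1 : 1 ≤ ρ' c * ρ c ^ (1 - p - 1) := by
    have h2 : ρ c ^ p * ρ c ^ (1 - p - 1) = 1 := by
      rw [← Real.rpow_add (hpos c hcI)]
      ring_nf
      exact Real.rpow_zero _
    refine h2.symm.le.trans ?_
    exact mul_le_mul_of_nonneg_right (hineq c hcI) (Real.rpow_nonneg (hpos c hcI).le _)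
  have hs : 0 < ρ s₁ ^ (1 - p) := Real.rpow_pos_of_pos (hpos s₁ ⟨hs₁.le, le_rfl⟩) _
  have h0 : 0 < ρ 0 := hpos 0 ⟨le_rfl, hs₁.le⟩
  have hp1 : 0 < p - 1 := by linarith
  have key : (p - 1) * s₁ ≤ ρ 0 ^ (1 - p) := by
    rw [eq_div_iff (by linarith)] at hcs
    have h3 : (p - 1) * s₁ * 1 ≤ (p - 1) * s₁ * (ρ' c * ρ c ^ (1 - p - 1)) :=
      mul_le_mul_of_nonneg_left h1 (by positivity)
    linarith
  refine ⟨key, ?_⟩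
  have h4 := Real.rpow_le_rpow_of_nonpos (mul_pos hp1 hs₁) key
    (show -(1 / (p - 1)) ≤ 0 by
      have : 0 < 1 / (p - 1) := by positivity
      linarith)
  rw [← Real.rpow_mul h0.le] at h4
  have h5 : (1 - p) * -(1 / (p - 1)) = 1 := by
    field_simp
    ring
  rwa [h5, Real.rpow_one] at h4
end

section
/- Let d ≥ 1 be a natural number and let u : ℝ^d → ℝ be a measurable, essentially bounded function with u ≥ 0 almost everywhere. Then u is integrable if and only if sup_{t>0} (4πt)^{d/2} · ‖G_t * u‖_{L^∞(ℝ^d)} < ∞; moreover, if this supremum is finite then ∫_{ℝ^d} u ≤ sup_{t>0} (4πt)^{d/2} · ‖G_t * u‖_{L^∞(ℝ^d)}. -/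
open MeasureTheory ENNReal

/-- The Gaussian heat kernel `G_t(η) = (4πt)^{−d/2} exp(−|η|²/(4t))` on `ℝ^d`. -/
noncomputable def heatKernel (d : ℕ) (t : ℝ) (η : EuclideanSpace ℝ (Fin d)) : ℝ :=
  (4 * Real.pi * t) ^ (-(d : ℝ) / 2) * Real.exp (-‖η‖ ^ 2 / (4 * t))

lemma gauss_integrable (d : ℕ) {t : ℝ} (ht : 0 < t) (x : EuclideanSpace ℝ (Fin d)) :
    Integrable (fun y => Real.exp (-‖x - y‖ ^ 2 / (4 * t))) := by
  have hb : 0 < 1 / (4 * t) := by positivity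
  have h : Integrable (fun v : EuclideanSpace ℝ (Fin d) =>
      Real.exp (-(1 / (4 * t)) * ‖v‖ ^ 2)) := by
    by_contra hc
    have h1 := GaussianFourier.integral_rexp_neg_mul_sq_norm
      (V := EuclideanSpace ℝ (Fin d)) hb
    rw [integral_undef hc] at h1
    have : 0 < (Real.pi / (1 / (4 * t))) ^
        (Module.finrank ℝ (EuclideanSpace ℝ (Fin d)) / 2 : ℝ) := by positivity
    linarith
  refine (h.comp_sub_left x).congr (Filter.Eventually.of_forall fun y => ?_)
  simp only
  congr 1
  ring

/-- The normalised heat flow is the integral against the unnormalised Gaussian. -/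
lemma heat_normalise (d : ℕ) {t : ℝ} (ht : 0 < t) (u : EuclideanSpace ℝ (Fin d) → ℝ)
    (x : EuclideanSpace ℝ (Fin d)) :
    ENNReal.ofReal ((4 * Real.pi * t) ^ ((d : ℝ) / 2)) *
      ‖∫ y, heatKernel d t (x - y) * u y‖ₑ =
    ‖∫ y, Real.exp (-‖x - y‖ ^ 2 / (4 * t)) * u y‖ₑ := by
  have hp : 0 < 4 * Real.pi * t := by positivity
  have h1 : 0 ≤ (4 * Real.pi * t) ^ ((d : ℝ) / 2) := by positivity
  rw [← Real.enorm_of_nonneg h1, ← enorm_mul, ← integral_const_mul]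
  congr 2
  funext y
  rw [heatKernel, ← mul_assoc, ← mul_assoc, ← Real.rpow_add hp]
  have : (d : ℝ) / 2 + -(d : ℝ) / 2 = 0 := by ring
  rw [this, Real.rpow_zero, one_mul]

lemma heat_sup_le (d : ℕ) (u : EuclideanSpace ℝ (Fin d) → ℝ) :
    (⨆ t ∈ Set.Ioi (0 : ℝ), ENNReal.ofReal ((4 * Real.pi * t) ^ ((d : ℝ) / 2)) *
      eLpNorm (fun x => ∫ y, heatKernel d t (x - y) * u y) ⊤ volume) ≤ ∫⁻ y, ‖u y‖ₑ := by
  refine iSup₂_le fun t ht => ?_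
  have ht : 0 < t := ht
  rw [eLpNorm_exponent_top, eLpNormEssSup,
    ← ENNReal.essSup_const_mul]
  refine essSup_le_of_ae_le _ (Filter.Eventually.of_forall fun x => ?_)
  simp only
  rw [heat_normalise d ht]
  refine (enorm_integral_le_lintegral_enorm _).trans (lintegral_mono fun y => ?_)
  rw [enorm_mul]
  refine mul_le_of_le_one_left zero_le ?_
  rw [Real.enorm_of_nonneg (Real.exp_nonneg _)]
  refine ENNReal.ofReal_le_one.2 (Real.exp_le_one_iff.2 ?_)
  rw [neg_div]
  exact neg_nonpos.2 (by positivity)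

lemma lintegral_le_heat_sup (d : ℕ)
    (u : EuclideanSpace ℝ (Fin d) → ℝ) (hmeas : Measurable u)
    (hbdd : eLpNorm u ⊤ volume < ⊤) (hpos : 0 ≤ᵐ[volume] u) :
    ∫⁻ y, ENNReal.ofReal (u y) ≤
    ⨆ t ∈ Set.Ioi (0 : ℝ), ENNReal.ofReal ((4 * Real.pi * t) ^ ((d : ℝ) / 2)) *
      eLpNorm (fun x => ∫ y, heatKernel d t (x - y) * u y) ⊤ volume := by
  set S := ⨆ t ∈ Set.Ioi (0 : ℝ), ENNReal.ofReal ((4 * Real.pi * t) ^ ((d : ℝ) / 2)) *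
      eLpNorm (fun x => ∫ y, heatKernel d t (x - y) * u y) ⊤ volume with hS
  have hu : MemLp u ⊤ volume := ⟨hmeas.aestronglyMeasurable, hbdd⟩
  have key : ∀ t : ℝ, 0 < t → ∀ᵐ x : EuclideanSpace ℝ (Fin d),
      ∫⁻ y, ENNReal.ofReal (Real.exp (-‖x - y‖ ^ 2 / (4 * t)) * u y) ≤ S := by
    intro t ht
    filter_upwards [ae_le_eLpNormEssSup
      (f := fun x => ∫ y, heatKernel d t (x - y) * u y) (μ := volume)] with x hx
    have hi : Integrable (fun y => Real.exp (-‖x - y‖ ^ 2 / (4 * t)) * u y) :=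
      (gauss_integrable d ht x).mul_of_top_left hu
    have hn : 0 ≤ᵐ[volume] (fun y => Real.exp (-‖x - y‖ ^ 2 / (4 * t)) * u y) := by
      filter_upwards [hpos] with y hy
      exact mul_nonneg (Real.exp_nonneg _) hy
    rw [← ofReal_integral_eq_lintegral_ofReal hi hn,
      ← Real.enorm_of_nonneg (integral_nonneg_of_ae hn), ← heat_normalise d ht]
    refine le_trans (mul_le_mul_right hx _) ?_
    rw [← eLpNorm_exponent_top]
    exact le_iSup₂ (f := fun (t : ℝ) (_ : t ∈ Set.Ioi (0 : ℝ)) =>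
      ENNReal.ofReal ((4 * Real.pi * t) ^ ((d : ℝ) / 2)) *
      eLpNorm (fun x => ∫ y, heatKernel d t (x - y) * u y) ⊤ volume) t ht
  have hall : ∀ᵐ x : EuclideanSpace ℝ (Fin d), ∀ n : ℕ,
      ∫⁻ y, ENNReal.ofReal (Real.exp (-‖x - y‖ ^ 2 / (4 * ((n : ℝ) + 1))) * u y) ≤ S :=
    ae_all_iff.2 fun n => key _ (by positivity)
  obtain ⟨x, hx⟩ := hall.exists
  have hlim : ∀ y, Filter.liminf (fun n : ℕ =>
      ENNReal.ofReal (Real.exp (-‖x - y‖ ^ 2 / (4 * ((n : ℝ) + 1))) * u y)) Filter.atTop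
      = ENNReal.ofReal (u y) := by
    intro y
    apply Filter.Tendsto.liminf_eq
    apply ENNReal.tendsto_ofReal
    have h1 : Filter.Tendsto (fun n : ℕ => 4 * ((n : ℝ) + 1)) Filter.atTop Filter.atTop :=
      (Filter.tendsto_atTop_add_const_right _ _ tendsto_natCast_atTop_atTop).const_mul_atTop
        (by norm_num)
    have h2 := (((Filter.Tendsto.const_div_atTop h1 (-‖x - y‖ ^ 2)).rexp).mul_const (u y))
    simpa using h2
  calc ∫⁻ y, ENNReal.ofReal (u y)
      = ∫⁻ y, Filter.liminf (fun n : ℕ =>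
          ENNReal.ofReal (Real.exp (-‖x - y‖ ^ 2 / (4 * ((n : ℝ) + 1))) * u y))
          Filter.atTop := by simp_rw [hlim]
    _ ≤ Filter.liminf (fun n : ℕ => ∫⁻ y,
          ENNReal.ofReal (Real.exp (-‖x - y‖ ^ 2 / (4 * ((n : ℝ) + 1))) * u y))
          Filter.atTop := lintegral_liminf_le fun n => by fun_prop
    _ ≤ S := by
      refine (Filter.liminf_le_liminf (Filter.Eventually.of_forall hx)).trans ?_
      simp

/-- **Tauberian characterization of `L¹` via the heat flow** (commutative case of the paper's
Theorem 3.7): a nonnegative essentially bounded measurable `u` is integrable iff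
`sup_{t>0} (4πt)^{d/2} ‖G_t * u‖_∞ < ∞`, in which case `∫ u` is bounded by this supremum. -/
theorem tauberian_L1_heat_flow (d : ℕ) (hd : 1 ≤ d)
    (u : EuclideanSpace ℝ (Fin d) → ℝ) (hmeas : Measurable u)
    (hbdd : eLpNorm u ⊤ volume < ⊤) (hpos : 0 ≤ᵐ[volume] u) :
    (Integrable u ↔
      (⨆ t ∈ Set.Ioi (0 : ℝ), ENNReal.ofReal ((4 * Real.pi * t) ^ ((d : ℝ) / 2)) *
        eLpNorm (fun x => ∫ y, heatKernel d t (x - y) * u y) ⊤ volume) < ⊤) ∧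
    ((⨆ t ∈ Set.Ioi (0 : ℝ), ENNReal.ofReal ((4 * Real.pi * t) ^ ((d : ℝ) / 2)) *
        eLpNorm (fun x => ∫ y, heatKernel d t (x - y) * u y) ⊤ volume) < ⊤ →
      ENNReal.ofReal (∫ x, u x) ≤
        ⨆ t ∈ Set.Ioi (0 : ℝ), ENNReal.ofReal ((4 * Real.pi * t) ^ ((d : ℝ) / 2)) *
          eLpNorm (fun x => ∫ y, heatKernel d t (x - y) * u y) ⊤ volume) := by
  have hle := lintegral_le_heat_sup d u hmeas hbdd hpos
  have hint : (⨆ t ∈ Set.Ioi (0 : ℝ), ENNReal.ofReal ((4 * Real.pi * t) ^ ((d : ℝ) / 2)) *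
        eLpNorm (fun x => ∫ y, heatKernel d t (x - y) * u y) ⊤ volume) < ⊤ → Integrable u := by
    intro h
    refine ⟨hmeas.aestronglyMeasurable, ?_⟩
    rw [hasFiniteIntegral_iff_ofReal hpos]
    exact hle.trans_lt h
  refine ⟨⟨fun h => (heat_sup_le d u).trans_lt h.2, hint⟩, fun h => ?_⟩
  rw [ofReal_integral_eq_lintegral_ofReal (hint h) hpos]
  exact hle
end

section
/- Let d ≥ 1 be a natural number, p > 1 and s > 0 real numbers. Then for every ζ ∈ ℝ^d, ∫_{ℝ^d} G_s(ξ) · G_2(ζ − ξ) dξ ≥ (s + 1)^{−(d/2)(1 − 1/p)} · G_{(s+1)^{1/p} + 1}(ζ); equivalently, G_{s+2}(ζ) ≥ (s + 1)^{−(d/2)(1 − 1/p)} · G_{(s+1)^{1/p} + 1}(ζ). -/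
open MeasureTheory

/-- Semigroup identity `G_s * G_2 = G_{s+2}`. -/
lemma heatKernel_conv_two (d : ℕ) (s : ℝ) (hs : 0 < s) (ζ : EuclideanSpace ℝ (Fin d)) :
    ∫ ξ, heatKernel d s ξ * heatKernel d 2 (ζ - ξ) = heatKernel d (s + 2) ζ := by
  have hpi := Real.pi_pos
  have hb : 0 < (s + 2) / (8 * s) := by positivity
  have key : ∀ ξ : EuclideanSpace ℝ (Fin d), heatKernel d s ξ * heatKernel d 2 (ζ - ξ) =
      ((4 * Real.pi * s) ^ (-(d : ℝ) / 2) * (4 * Real.pi * 2) ^ (-(d : ℝ) / 2) *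
        Real.exp (-‖ζ‖ ^ 2 / (4 * (s + 2)))) *
      Real.exp (-((s + 2) / (8 * s)) * ‖ξ - (s / (s + 2)) • ζ‖ ^ 2) := by
    intro ξ
    have hexp : Real.exp (-‖ξ‖ ^ 2 / (4 * s)) * Real.exp (-‖ζ - ξ‖ ^ 2 / (4 * 2)) =
        Real.exp (-‖ζ‖ ^ 2 / (4 * (s + 2))) *
        Real.exp (-((s + 2) / (8 * s)) * ‖ξ - (s / (s + 2)) • ζ‖ ^ 2) := by
      rw [← Real.exp_add, ← Real.exp_add]
      congr 1
      rw [norm_sub_sq_real, norm_sub_sq_real, inner_smul_right, norm_smul, mul_pow,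
        Real.norm_eq_abs, sq_abs, real_inner_comm ζ ξ]
      field_simp
      ring
    unfold heatKernel
    rw [mul_mul_mul_comm, hexp]
    ring
  simp_rw [key]
  rw [integral_const_mul,
    integral_sub_right_eq_self
      (fun ξ : EuclideanSpace ℝ (Fin d) => Real.exp (-((s + 2) / (8 * s)) * ‖ξ‖ ^ 2)),
    GaussianFourier.integral_rexp_neg_mul_sq_norm hb]
  unfold heatKernel
  have hfr : (Real.pi / ((s + 2) / (8 * s))) ^
      ((Module.finrank ℝ (EuclideanSpace ℝ (Fin d)) : ℝ) / 2) =
      (((s + 2) / (8 * s)) / Real.pi) ^ (-(d : ℝ) / 2) := by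
    rw [finrank_euclideanSpace_fin, neg_div, Real.rpow_neg (by positivity),
      ← Real.inv_rpow (by positivity), inv_div]
  have hc : (4 * Real.pi * s) ^ (-(d : ℝ) / 2) * (4 * Real.pi * 2) ^ (-(d : ℝ) / 2) *
      (((s + 2) / (8 * s)) / Real.pi) ^ (-(d : ℝ) / 2) =
      (4 * Real.pi * (s + 2)) ^ (-(d : ℝ) / 2) := by
    rw [← Real.mul_rpow (by positivity) (by positivity),
      ← Real.mul_rpow (by positivity) (by positivity)]
    congr 1
    field_simp
    ring
  rw [hfr, ← hc]
  ring

/-- **Gaussian comparison inequality** (formula (7.9) in the proof of the paper's Theorem 7.4):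
for `p > 1` and `s > 0`,
`(G_s * G_2)(ζ) ≥ (s+1)^{−(d/2)(1−1/p)} G_{(s+1)^{1/p}+1}(ζ)` for every `ζ ∈ ℝ^d`. -/
theorem gaussian_comparison (d : ℕ) (hd : 1 ≤ d) (p s : ℝ) (hp : 1 < p) (hs : 0 < s)
    (ζ : EuclideanSpace ℝ (Fin d)) :
    ((s + 1) ^ (-(d : ℝ) / 2 * (1 - 1 / p)) * heatKernel d ((s + 1) ^ (1 / p) + 1) ζ ≤
        ∫ ξ, heatKernel d s ξ * heatKernel d 2 (ζ - ξ)) ∧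
      (s + 1) ^ (-(d : ℝ) / 2 * (1 - 1 / p)) * heatKernel d ((s + 1) ^ (1 / p) + 1) ζ ≤
        heatKernel d (s + 2) ζ := by
  rw [heatKernel_conv_two d s hs ζ, and_self]
  have hpi := Real.pi_pos
  have hp0 : 0 < p := by linarith
  have hq1 : 1 / p ≤ 1 := by
    rw [div_le_one hp0]
    exact hp.le
  have ha : 1 ≤ s + 1 := by linarith
  have ha0 : 0 < s + 1 := by linarith
  have hA : (s + 1) ^ (1 / p) ≤ s + 1 := by
    simpa using Real.rpow_le_rpow_of_exponent_le ha hq1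
  have hA0 : 0 < (s + 1) ^ (1 / p) := Real.rpow_pos_of_pos ha0 _
  have hB : 1 ≤ (s + 1) ^ (1 - 1 / p) := Real.one_le_rpow ha (by linarith)
  have hAB : (s + 1) ^ (1 - 1 / p) * (s + 1) ^ (1 / p) = s + 1 := by
    rw [← Real.rpow_add ha0]
    simp
  have hpow : (s + 1) ^ (-(d : ℝ) / 2 * (1 - 1 / p)) =
      ((s + 1) ^ (1 - 1 / p)) ^ (-(d : ℝ) / 2) := by
    rw [← Real.rpow_mul ha0.le, mul_comm]
  unfold heatKernel
  rw [hpow, ← mul_assoc, ← Real.mul_rpow (by positivity) (by positivity)]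
  apply mul_le_mul _ _ (by positivity) (by positivity)
  · apply Real.rpow_le_rpow_of_nonpos (by positivity)
    · have h : (s + 1) ^ (1 - 1 / p) * (4 * Real.pi * ((s + 1) ^ (1 / p) + 1)) =
          4 * Real.pi * ((s + 1) + (s + 1) ^ (1 - 1 / p)) := by
        linear_combination (4 * Real.pi) * hAB
      rw [h]
      apply mul_le_mul_of_nonneg_left _ (by positivity)
      linarith
    · have : (0 : ℝ) ≤ d := Nat.cast_nonneg d
      linarith
  · apply Real.exp_le_exp.mpr
    rw [neg_div, neg_div, neg_le_neg_iff]
    apply div_le_div_of_nonneg_left (by positivity) (by positivity)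
    linarith
end

section
/- Let a, c be real numbers with a > c ≥ 0 and let f : ℝ → ℂ be integrable. Then the double integral ∫_ℝ ∫_ℝ exp(−a(x² + y²) + 2c·x·y) · conj(f(y)) · f(x) dx dy is real and nonnegative; in particular its real part is ≥ 0. -/
open MeasureTheory Complex

/-- **Positive definiteness of the Mehler-type Gaussian kernel** (key step in the proof of
the paper's Lemma 3.3): for `a > c ≥ 0` and integrable `f : ℝ → ℂ`, the double integral
`∫∫ exp(−a(x²+y²)+2cxy) conj(f(y)) f(x) dx dy` is real and nonnegative. -/
theorem gaussian_kernel_positive_definite (a c : ℝ) (hc : 0 ≤ c) (hac : c < a)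
    (f : ℝ → ℂ) (hf : Integrable f) :
    (∫ x : ℝ, ∫ y : ℝ,
        Complex.exp (-(a : ℂ) * (x ^ 2 + y ^ 2) + 2 * c * x * y) *
          (starRingEnd ℂ) (f y) * f x).im = 0 ∧
      0 ≤ (∫ x : ℝ, ∫ y : ℝ,
        Complex.exp (-(a : ℂ) * (x ^ 2 + y ^ 2) + 2 * c * x * y) *
          (starRingEnd ℂ) (f y) * f x).re := by
  have hmf : AEStronglyMeasurable (fun p : ℝ × ℝ => f p.1) (volume.prod volume) :=
    hf.aestronglyMeasurable.comp_fst
  have hmf2 : AEStronglyMeasurable (fun p : ℝ × ℝ => f p.2) (volume.prod volume) :=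
    hf.aestronglyMeasurable.comp_snd
  have hmc : AEStronglyMeasurable (fun p : ℝ × ℝ => (starRingEnd ℂ) (f p.2))
      (volume.prod volume) := Complex.continuous_conj.comp_aestronglyMeasurable hmf2
  have hfn : Integrable (fun p : ℝ × ℝ => ‖f p.1‖ * ‖f p.2‖) (volume.prod volume) :=
    hf.norm.mul_prod hf.norm
  -- the Gaussian kernel with absolute values is bounded by one
  have hexpo : ∀ x y : ℝ, -a * (x ^ 2 + y ^ 2) + 2 * c * |x| * |y| ≤ 0 := by
    intro x y
    have h1 := sq_abs x
    have h2 := sq_abs y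
    have h3 := mul_nonneg hc (sq_nonneg (|x| - |y|))
    have h4 : 0 ≤ (a - c) * (x ^ 2 + y ^ 2) :=
      mul_nonneg (by linarith) (by positivity)
    nlinarith
  let G : ℝ × ℝ → ℂ := fun p =>
    Complex.exp (-(a : ℂ) * (p.1 ^ 2 + p.2 ^ 2) + 2 * c * p.1 * p.2) *
          (starRingEnd ℂ) (f p.2) * f p.1
  let h : ℕ → ℝ → ℂ := fun n x => (x : ℂ) ^ n * Complex.exp (-(a : ℂ) * x ^ 2) * f x
  let F : ℕ → ℝ × ℝ → ℂ := fun n p =>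
    (((2 * c) ^ n / n.factorial : ℝ) : ℂ) * (h n p.1 * (starRingEnd ℂ) (h n p.2))
  let B : ℕ → ℝ × ℝ → ℝ := fun n p =>
    (2 * c * |p.1| * |p.2|) ^ n / n.factorial *
      (Real.exp (-a * (p.1 ^ 2 + p.2 ^ 2)) * (‖f p.1‖ * ‖f p.2‖))
  have hconj : ∀ n y, (starRingEnd ℂ) (h n y) =
      (y : ℂ) ^ n * Complex.exp (-(a : ℂ) * y ^ 2) * (starRingEnd ℂ) (f y) := by
    intro n y
    simp only [h, map_mul, map_pow, Complex.conj_ofReal, ← Complex.exp_conj, map_neg]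
  have hFeq : ∀ n p, F n p = (2 * c * p.1 * p.2 : ℂ) ^ n / n.factorial *
      (Complex.exp (-(a : ℂ) * (p.1 ^ 2 + p.2 ^ 2)) * ((starRingEnd ℂ) (f p.2) * f p.1)) := by
    intro n p
    simp only [F, hconj]
    simp only [h]
    rw [mul_add (-(a : ℂ)), Complex.exp_add]
    push_cast
    simp only [mul_pow]
    ring
  have hBsum : ∀ p, HasSum (fun n => B n p) (Real.exp (2 * c * |p.1| * |p.2|) *
      (Real.exp (-a * (p.1 ^ 2 + p.2 ^ 2)) * (‖f p.1‖ * ‖f p.2‖))) := by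
    intro p
    refine HasSum.mul_right _ ?_
    rw [Real.exp_eq_exp_ℝ]
    exact NormedSpace.expSeries_div_hasSum_exp _
  have hFsum : ∀ p, HasSum (fun n => F n p) (G p) := by
    intro p
    have e : G p = Complex.exp (2 * c * p.1 * p.2 : ℂ) *
      (Complex.exp (-(a : ℂ) * (p.1 ^ 2 + p.2 ^ 2)) * ((starRingEnd ℂ) (f p.2) * f p.1)) := by
      simp only [G]
      rw [Complex.exp_add]
      ring
    rw [e]
    simp only [hFeq]
    refine HasSum.mul_right _ ?_
    rw [Complex.exp_eq_exp_ℂ]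
    exact NormedSpace.expSeries_div_hasSum_exp _
  have hGm : AEStronglyMeasurable G (volume.prod volume) := by
    refine (AEStronglyMeasurable.mul ?_ hmc).mul hmf
    exact (by fun_prop : Continuous fun p : ℝ × ℝ =>
      Complex.exp (-(a : ℂ) * (p.1 ^ 2 + p.2 ^ 2) + 2 * c * p.1 * p.2)).aestronglyMeasurable
  have hFm : ∀ n, AEStronglyMeasurable (F n) (volume.prod volume) := by
    intro n
    rw [funext (hFeq n)]
    refine AEStronglyMeasurable.mul ?_ (AEStronglyMeasurable.mul ?_ (hmc.mul hmf))
    · exact (by fun_prop : Continuous fun p : ℝ × ℝ =>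
        (2 * c * p.1 * p.2 : ℂ) ^ n / n.factorial).aestronglyMeasurable
    · exact (by fun_prop : Continuous fun p : ℝ × ℝ =>
        Complex.exp (-(a : ℂ) * (p.1 ^ 2 + p.2 ^ 2))).aestronglyMeasurable
  have hFB : ∀ n p, ‖F n p‖ = B n p := by
    intro n p
    rw [hFeq]
    have e : (-(a : ℂ) * (p.1 ^ 2 + p.2 ^ 2)) = ((-a * (p.1 ^ 2 + p.2 ^ 2) : ℝ) : ℂ) := by
      push_cast; ring
    rw [e]
    simp only [B, norm_mul, norm_div, norm_pow, Complex.norm_exp_ofReal, RCLike.norm_conj,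
      Complex.norm_real, Complex.norm_natCast, Complex.norm_ofNat, Real.norm_eq_abs,
      abs_of_nonneg hc]
    ring
  have hBint : Integrable (fun p => ∑' n, B n p) (volume.prod volume) := by
    rw [funext fun p => (hBsum p).tsum_eq]
    refine hfn.mono' ?_ (Filter.Eventually.of_forall fun p => ?_)
    · refine AEStronglyMeasurable.mul ?_ (AEStronglyMeasurable.mul ?_ hfn.aestronglyMeasurable)
      · exact (by fun_prop : Continuous fun p : ℝ × ℝ =>
          Real.exp (2 * c * |p.1| * |p.2|)).aestronglyMeasurable
      · exact (by fun_prop : Continuous fun p : ℝ × ℝ =>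
          Real.exp (-a * (p.1 ^ 2 + p.2 ^ 2))).aestronglyMeasurable
    · rw [Real.norm_of_nonneg (by positivity), ← mul_assoc, ← Real.exp_add, add_comm]
      exact mul_le_of_le_one_left (by positivity) (Real.exp_le_one_iff.2 (hexpo _ _))
  have hGint : Integrable G (volume.prod volume) := by
    refine hBint.mono' hGm (Filter.Eventually.of_forall fun p => ?_)
    rw [← (hFsum p).tsum_eq]
    refine (norm_tsum_le_tsum_norm ?_).trans (le_of_eq ?_)
    · simp only [hFB]; exact (hBsum p).summable
    · simp only [hFB]
  have key := hasSum_integral_of_dominated_convergence (μ := volume.prod volume) B hFm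
    (fun n => Filter.Eventually.of_forall fun p => (hFB n p).le)
    (Filter.Eventually.of_forall fun p => (hBsum p).summable) hBint
    (Filter.Eventually.of_forall hFsum)
  have hterm : ∀ n, ∫ p, F n p ∂(volume.prod volume) =
      (((2 * c) ^ n / n.factorial * Complex.normSq (∫ x, h n x) : ℝ) : ℂ) := by
    intro n
    simp only [F]
    rw [integral_const_mul, integral_prod_mul (h n) (fun y => (starRingEnd ℂ) (h n y)),
      integral_conj, Complex.mul_conj, ← Complex.ofReal_mul]
  simp only [hterm] at key
  have hI : ∫ p, G p ∂(volume.prod volume) = ∫ x : ℝ, ∫ y : ℝ,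
        Complex.exp (-(a : ℂ) * (x ^ 2 + y ^ 2) + 2 * c * x * y) *
          (starRingEnd ℂ) (f y) * f x := integral_prod G hGint
  rw [hI] at key
  have hre := Complex.hasSum_re key
  have him := Complex.hasSum_im key
  simp only [Complex.ofReal_re] at hre
  simp only [Complex.ofReal_im] at him
  exact ⟨him.unique hasSum_zero, hre.nonneg fun n =>
    mul_nonneg (by positivity) (Complex.normSq_nonneg _)⟩
end

section
/- Let d ≥ 1 be a natural number and let p be a real number with 1 < p ≤ 1 + 2/d. Let u₀ : ℝ^d → ℝ be a bounded measurable function with u₀ ≥ 0 almost everywhere. Suppose u : [0,∞) × ℝ^d → ℝ is jointly measurable, that u(t, ·) ≥ 0 almost everywhere for each t ≥ 0, that for every T > 0 one has sup_{0 ≤ t ≤ T} ‖u(t, ·)‖_{L^∞(ℝ^d)} < ∞, and that for every t ≥ 0 and almost every x ∈ ℝ^d the mild-solution identity holds: u(t, x) = ∫_{ℝ^d} G_t(x − y)·u₀(y) dy + ∫₀^t ∫_{ℝ^d} G_{t−s}(x − y)·u(s, y)^p dy ds (with the first term interpreted as u₀(x) when t = 0). Then u₀ = 0 almost everywhere. 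-/
open MeasureTheory

namespace Fujita

lemma hk_nonneg (d : ℕ) {t : ℝ} (ht : 0 ≤ t) (x : EuclideanSpace ℝ (Fin d)) :
    0 ≤ heatKernel d t x := by
  unfold heatKernel
  have := Real.pi_pos
  positivity

lemma hk_meas (d : ℕ) :
    Measurable (fun q : ℝ × EuclideanSpace ℝ (Fin d) => heatKernel d q.1 q.2) := by
  unfold heatKernel
  fun_prop

lemma hk_integral (d : ℕ) {t : ℝ} (ht : 0 < t) : ∫ x, heatKernel d t x = 1 := by
  unfold heatKernel
  rw [integral_const_mul]
  have h := GaussianFourier.integral_rexp_neg_mul_sq_norm (V := EuclideanSpace ℝ (Fin d))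
    (b := 1 / (4 * t)) (by positivity)
  have e : (fun x : EuclideanSpace ℝ (Fin d) => Real.exp (-‖x‖ ^ 2 / (4 * t)))
      = fun x => Real.exp (-(1 / (4 * t)) * ‖x‖ ^ 2) := by
    funext x; congr 1; ring
  rw [e, h]
  have e2 : Real.pi / (1 / (4 * t)) = 4 * Real.pi * t := by field_simp
  have := Real.pi_pos
  rw [e2, finrank_euclideanSpace_fin, ← Real.rpow_add (by positivity)]
  rw [show -(d : ℝ) / 2 + d / 2 = 0 by ring, Real.rpow_zero]

lemma hk_integrable (d : ℕ) {t : ℝ} (ht : 0 < t) : Integrable (heatKernel d t) := by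
  by_contra h
  have := hk_integral d ht
  rw [integral_undef h] at this
  norm_num at this

lemma hk_lintegral (d : ℕ) {t : ℝ} (ht : 0 < t) :
    ∫⁻ x, ENNReal.ofReal (heatKernel d t x) = 1 := by
  rw [← ofReal_integral_eq_lintegral_ofReal (hk_integrable d ht)
    (Filter.Eventually.of_forall fun x => hk_nonneg d ht.le x), hk_integral d ht, ENNReal.ofReal_one]

lemma hk_mul (d : ℕ) {a b : ℝ} (ha : 0 < a) (hb : 0 < b) (x y : EuclideanSpace ℝ (Fin d)) :
    heatKernel d a x * heatKernel d b (x - y) =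
      heatKernel d (a + b) y * heatKernel d (a * b / (a + b)) (x - (a / (a + b)) • y) := by
  unfold heatKernel
  have hpi := Real.pi_pos
  have e1 : (4 * Real.pi * a) ^ (-(d : ℝ) / 2) * (4 * Real.pi * b) ^ (-(d : ℝ) / 2) =
      (4 * Real.pi * (a + b)) ^ (-(d : ℝ) / 2) *
        (4 * Real.pi * (a * b / (a + b))) ^ (-(d : ℝ) / 2) := by
    rw [← Real.mul_rpow (by positivity) (by positivity),
      ← Real.mul_rpow (by positivity) (by positivity)]
    congr 1
    field_simp
  have e2 : Real.exp (-‖x‖ ^ 2 / (4 * a)) * Real.exp (-‖x - y‖ ^ 2 / (4 * b)) =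
      Real.exp (-‖y‖ ^ 2 / (4 * (a + b))) *
        Real.exp (-‖x - (a / (a + b)) • y‖ ^ 2 / (4 * (a * b / (a + b)))) := by
    rw [← Real.exp_add, ← Real.exp_add]
    congr 1
    rw [norm_sub_sq_real, norm_sub_sq_real, inner_smul_right, norm_smul, mul_pow,
      Real.norm_eq_abs, sq_abs]
    field_simp
    ring
  calc _ = ((4 * Real.pi * a) ^ (-(d : ℝ) / 2) * (4 * Real.pi * b) ^ (-(d : ℝ) / 2)) *
      (Real.exp (-‖x‖ ^ 2 / (4 * a)) * Real.exp (-‖x - y‖ ^ 2 / (4 * b))) := by ring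
    _ = _ := by rw [e1, e2]; ring

lemma hk_semigroup (d : ℕ) {a b : ℝ} (ha : 0 < a) (hb : 0 < b) (y : EuclideanSpace ℝ (Fin d)) :
    ∫⁻ x, ENNReal.ofReal (heatKernel d a x) * ENNReal.ofReal (heatKernel d b (x - y)) =
      ENNReal.ofReal (heatKernel d (a + b) y) := by
  have hab : 0 < a * b / (a + b) := by positivity
  simp_rw [← ENNReal.ofReal_mul (hk_nonneg d ha.le _), hk_mul d ha hb,
    ENNReal.ofReal_mul (hk_nonneg d (add_pos ha hb).le _)]
  rw [lintegral_const_mul' _ _ ENNReal.ofReal_ne_top,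
    lintegral_sub_right_eq_self (fun x => ENNReal.ofReal (heatKernel d (a * b / (a + b)) x)),
    hk_lintegral d hab, mul_one]

/-- Jensen with the heat kernel. -/
lemma jensen (d : ℕ) {t : ℝ} (ht : 0 < t) {p : ℝ} (hp : 1 < p)
    (f : EuclideanSpace ℝ (Fin d) → ENNReal) (hf : Measurable f) :
    (∫⁻ x, ENNReal.ofReal (heatKernel d t x) * f x) ^ p ≤
      ∫⁻ x, ENNReal.ofReal (heatKernel d t x) * f x ^ p := by
  have hK : Measurable fun x => ENNReal.ofReal (heatKernel d t x) :=
    ((hk_meas d).comp (measurable_const.prodMk measurable_id)).ennreal_ofReal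
  set μ : Measure (EuclideanSpace ℝ (Fin d)) :=
    volume.withDensity fun x => ENNReal.ofReal (heatKernel d t x) with hμ
  have hprob : IsProbabilityMeasure μ := by
    constructor
    rw [hμ, withDensity_apply _ MeasurableSet.univ, setLIntegral_univ, hk_lintegral d ht]
  have h1 : ∫⁻ x, f x ∂μ = ∫⁻ x, ENNReal.ofReal (heatKernel d t x) * f x := by
    rw [hμ, lintegral_withDensity_eq_lintegral_mul _ hK hf]; rfl
  have h2 : ∫⁻ x, f x ^ p ∂μ = ∫⁻ x, ENNReal.ofReal (heatKernel d t x) * f x ^ p := by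
    rw [hμ, lintegral_withDensity_eq_lintegral_mul _ hK (hf.pow_const p)]; rfl
  rw [← h1, ← h2]
  have hpq := Real.HolderConjugate.conjExponent hp
  have := ENNReal.lintegral_mul_le_Lp_mul_Lq μ hpq hf.aemeasurable
    (aemeasurable_const (b := (1 : ENNReal)))
  simp only [Pi.mul_apply, mul_one, ENNReal.one_rpow, lintegral_const, measure_univ] at this
  calc _ ≤ ((∫⁻ x, f x ^ p ∂μ) ^ (1 / p)) ^ p := ENNReal.rpow_le_rpow this (by linarith)
    _ = _ := by rw [← ENNReal.rpow_mul, one_div_mul_cancel (by linarith), ENNReal.rpow_one]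

/-- Discrete blow-up. -/
lemma blowup (p : ℝ) (hp : 1 < p) (H : ℝ → ENNReal) (s₀ T A : ℝ) (hA : 0 < A)
    (hH : ∀ s t, s₀ ≤ s → s ≤ t → t < T → H s + ENNReal.ofReal (t - s) * H s ^ p ≤ H t)
    (hfin : ∀ t, s₀ ≤ t → t < T → H t < ⊤) (hHA : ENNReal.ofReal A ≤ H s₀) :
    (T - s₀) * A ^ (p - 1) ≤ 1 / (1 - 2 ^ (1 - p)) := by
  by_contra hcon
  push Not at hcon
  set q : ℝ := 2 ^ (1 - p) with hq
  have hq0 : 0 < q := by positivity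
  have hq1 : q < 1 := Real.rpow_lt_one_of_one_lt_of_neg (by norm_num) (by linarith)
  set D : ℝ := A ^ (1 - p) / (1 - q) with hD
  have hD1 : D < T - s₀ := by
    have hAp : A ^ (1 - p) * A ^ (p - 1) = 1 := by
      rw [← Real.rpow_add hA]; simp
    have hpos : 0 < A ^ (1 - p) := by positivity
    have := mul_lt_mul_of_pos_left hcon hpos
    rw [hD]
    calc _ = A ^ (1 - p) * (1 / (1 - q)) := by ring
      _ < _ := this
      _ = (T - s₀) * (A ^ (1 - p) * A ^ (p - 1)) := by ring
      _ = _ := by rw [hAp, mul_one]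
  let τ : ℕ → ℝ := fun k => s₀ + D * (1 - q ^ k)
  have hDpos : 0 < D := by
    have : 0 < 1 - q := by linarith
    positivity
  have hτ0 : ∀ k, s₀ ≤ τ k := fun k => by
    have : q ^ k ≤ 1 := pow_le_one₀ hq0.le hq1.le
    have := mul_nonneg hDpos.le (sub_nonneg.2 this)
    simp only [τ]; linarith
  have hτ1 : ∀ k, τ k ≤ s₀ + D := fun k => by
    have : 0 ≤ D * q ^ k := by positivity
    simp only [τ]; linarith
  have hτs : ∀ k, τ (k + 1) - τ k = (2 ^ k * A) ^ (1 - p) := fun k => by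
    have h1q : 1 - q ≠ 0 := by linarith
    rw [Real.mul_rpow (by positivity) hA.le, ← Real.rpow_natCast, ← Real.rpow_mul (by norm_num),
      mul_comm (k : ℝ), Real.rpow_mul (by norm_num), Real.rpow_natCast, ← hq]
    simp only [τ, hD]
    field_simp
    ring
  have key : ∀ k, ENNReal.ofReal (2 ^ k * A) ≤ H (τ k) := by
    intro k
    induction k with
    | zero => simpa [τ] using hHA
    | succ k ih =>
      have hB : 0 < 2 ^ k * A := by positivity
      have hd : 0 < (2 ^ k * A) ^ (1 - p) := by positivity
      refine le_trans ?_ (hH (τ k) (τ (k + 1)) (hτ0 k) (by linarith [hτs k])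
        (by linarith [hτ1 (k + 1)]))
      calc ENNReal.ofReal (2 ^ (k + 1) * A)
          = ENNReal.ofReal (2 ^ k * A) + ENNReal.ofReal (τ (k + 1) - τ k) *
              ENNReal.ofReal (2 ^ k * A) ^ p := by
            rw [ENNReal.ofReal_rpow_of_pos hB, hτs, ← ENNReal.ofReal_mul hd.le,
              ← Real.rpow_add hB, ← ENNReal.ofReal_add hB.le (by positivity)]
            rw [show 1 - p + p = 1 by ring, Real.rpow_one]
            congr 1
            ring
        _ ≤ _ := by gcongr
  have hmono : ∀ k, ENNReal.ofReal (2 ^ k * A) ≤ H (s₀ + D) := fun k =>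
    (key k).trans (le_trans (le_add_right le_rfl)
      (hH (τ k) (s₀ + D) (hτ0 k) (hτ1 k) (by linarith)))
  have hlt := hfin (s₀ + D) (by linarith) (by linarith)
  have ht : Filter.Tendsto (fun k : ℕ => (2 : ℝ) ^ k * A) Filter.atTop Filter.atTop :=
    (tendsto_pow_atTop_atTop_of_one_lt (by norm_num)).atTop_mul_const hA
  obtain ⟨k, hk⟩ := (ht.eventually_gt_atTop (H (s₀ + D)).toReal).exists
  have := hmono k
  rw [ENNReal.ofReal_le_iff_le_toReal hlt.ne] at this
  linarith

lemma hk_meas_comp (d : ℕ) {α : Type*} [MeasurableSpace α] {f : α → ℝ}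
    {g : α → EuclideanSpace ℝ (Fin d)} (hf : Measurable f) (hg : Measurable g) :
    Measurable fun a => heatKernel d (f a) (g a) :=
  (hk_meas d).comp (hf.prodMk hg)

/-- Weighted energy is below the weighted mean. -/
lemma energy_le (d : ℕ) {p : ℝ} (U : ℝ → EuclideanSpace ℝ (Fin d) → ENNReal)
    (hU : Measurable (Function.uncurry U)) {s T : ℝ} (hsT : s < T)
    (hb : ∀ᵐ x, (∫⁻ r in Set.Ioo 0 s, ∫⁻ y, ENNReal.ofReal (heatKernel d (s - r) (x - y)) *
      U r y ^ p) ≤ U s x) :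
    ∫⁻ r in Set.Ioo 0 s, ∫⁻ y, ENNReal.ofReal (heatKernel d (T - r) y) * U r y ^ p ≤
      ∫⁻ x, ENNReal.ofReal (heatKernel d (T - s) x) * U s x := by
  set μ : Measure (ℝ × EuclideanSpace ℝ (Fin d)) :=
    (volume.restrict (Set.Ioo 0 s)).prod volume with hμ
  have hUm : Measurable fun z : ℝ × EuclideanSpace ℝ (Fin d) => U z.1 z.2 ^ p := hU.pow_const p
  have hUm' : Measurable fun z : EuclideanSpace ℝ (Fin d) × (ℝ × EuclideanSpace ℝ (Fin d)) =>
    U z.2.1 z.2.2 ^ p := hUm.comp measurable_snd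
  have hm : Measurable fun z : EuclideanSpace ℝ (Fin d) × (ℝ × EuclideanSpace ℝ (Fin d)) =>
      ENNReal.ofReal (heatKernel d (T - s) z.1) *
        (ENNReal.ofReal (heatKernel d (s - z.2.1) (z.1 - z.2.2)) * U z.2.1 z.2.2 ^ p) := by
    refine (hk_meas_comp d ?_ ?_).ennreal_ofReal.mul
      ((hk_meas_comp d ?_ ?_).ennreal_ofReal.mul hUm') <;> fun_prop
  have hm2 : ∀ x, Measurable fun z : ℝ × EuclideanSpace ℝ (Fin d) =>
      ENNReal.ofReal (heatKernel d (s - z.1) (x - z.2)) * U z.1 z.2 ^ p := by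
    intro x
    refine (hk_meas_comp d ?_ ?_).ennreal_ofReal.mul hUm <;> fun_prop
  have hm3 : Measurable fun z : ℝ × EuclideanSpace ℝ (Fin d) =>
      ENNReal.ofReal (heatKernel d (T - z.1) z.2) * U z.1 z.2 ^ p := by
    refine (hk_meas_comp d ?_ ?_).ennreal_ofReal.mul hUm <;> fun_prop
  calc ∫⁻ r in Set.Ioo 0 s, ∫⁻ y, ENNReal.ofReal (heatKernel d (T - r) y) * U r y ^ p
      = ∫⁻ r in Set.Ioo 0 s, ∫⁻ y, ∫⁻ x, ENNReal.ofReal (heatKernel d (T - s) x) *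
          (ENNReal.ofReal (heatKernel d (s - r) (x - y)) * U r y ^ p) := by
        refine setLIntegral_congr_fun measurableSet_Ioo fun r hr => ?_
        refine lintegral_congr fun y => ?_
        simp_rw [← mul_assoc]
        rw [lintegral_mul_const, hk_semigroup d (by linarith) (by linarith [hr.2]),
          show T - s + (s - r) = T - r by ring]
        refine (hk_meas_comp d ?_ ?_).ennreal_ofReal.mul
          (hk_meas_comp d ?_ ?_).ennreal_ofReal <;> fun_prop
    _ = ∫⁻ z, (∫⁻ x, ENNReal.ofReal (heatKernel d (T - s) x) *
          (ENNReal.ofReal (heatKernel d (s - z.1) (x - z.2)) * U z.1 z.2 ^ p)) ∂μ := by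
        rw [hμ, lintegral_prod]
        exact hm.lintegral_prod_left'.aemeasurable
    _ = ∫⁻ x, (∫⁻ z, ENNReal.ofReal (heatKernel d (T - s) x) *
          (ENNReal.ofReal (heatKernel d (s - z.1) (x - z.2)) * U z.1 z.2 ^ p) ∂μ) := by
        rw [lintegral_lintegral_swap]
        exact (hm.comp measurable_swap).aemeasurable
    _ = ∫⁻ x, ENNReal.ofReal (heatKernel d (T - s) x) * ∫⁻ r in Set.Ioo 0 s, ∫⁻ y,
          ENNReal.ofReal (heatKernel d (s - r) (x - y)) * U r y ^ p := by
        refine lintegral_congr fun x => ?_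
        rw [lintegral_const_mul _ (hm2 x), hμ, lintegral_prod _ (hm2 x).aemeasurable]
    _ ≤ _ := by
        refine lintegral_mono_ae ?_
        filter_upwards [hb] with x hx
        gcongr

/-- The main growth property of the weighted energy, giving an upper bound. -/
lemma energy_bound (d : ℕ) {p : ℝ} (hp : 1 < p) (U : ℝ → EuclideanSpace ℝ (Fin d) → ENNReal)
    (hU : Measurable (Function.uncurry U))
    (hfin : ∀ s, 0 < s → ∃ M : ENNReal, M < ⊤ ∧ ∀ᵐ x, U s x ≤ M)
    (hb : ∀ s, 0 < s → ∀ᵐ x, (∫⁻ r in Set.Ioo 0 s, ∫⁻ y,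
      ENNReal.ofReal (heatKernel d (s - r) (x - y)) * U r y ^ p) ≤ U s x)
    {s₀ T A : ℝ} (hs₀ : 0 < s₀) (hA : 0 < A)
    (hlow : ENNReal.ofReal A ≤
      ∫⁻ r in Set.Ioo 0 s₀, ∫⁻ y, ENNReal.ofReal (heatKernel d (T - r) y) * U r y ^ p) :
    (T - s₀) * A ^ (p - 1) ≤ 1 / (1 - 2 ^ (1 - p)) := by
  set H : ℝ → ENNReal := fun s =>
    ∫⁻ r in Set.Ioo 0 s, ∫⁻ y, ENNReal.ofReal (heatKernel d (T - r) y) * U r y ^ p with hH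
  have hle : ∀ s, 0 < s → s < T → H s ≤ ∫⁻ x, ENNReal.ofReal (heatKernel d (T - s) x) * U s x :=
    fun s h0 h1 => energy_le d U hU h1 (hb s h0)
  have hmono : Monotone H := fun a b hab =>
    lintegral_mono_set (Set.Ioo_subset_Ioo_right hab)
  have hUs : ∀ r, Measurable (U r) := fun r => hU.comp measurable_prodMk_left
  refine blowup p hp H s₀ T A hA ?_ ?_ hlow
  · intro s t h0 hst htT
    have hdis : Disjoint (Set.Ioo 0 s) (Set.Ico s t) :=
      Set.disjoint_left.2 fun x hx hx' => absurd hx.2 (not_lt.2 hx'.1)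
    have hun : Set.Ioo 0 s ∪ Set.Ico s t = Set.Ioo 0 t :=
      Set.Ioo_union_Ico_eq_Ioo (by linarith) hst
    have : H t = H s + ∫⁻ r in Set.Ico s t,
        ∫⁻ y, ENNReal.ofReal (heatKernel d (T - r) y) * U r y ^ p := by
      simp only [hH]
      rw [← hun, lintegral_union measurableSet_Ico hdis]
    rw [this]
    gcongr
    calc ENNReal.ofReal (t - s) * H s ^ p = ∫⁻ r in Set.Ico s t, H s ^ p := by
          rw [setLIntegral_const, Real.volume_Ico, mul_comm]
      _ ≤ _ := by
          refine setLIntegral_mono' measurableSet_Ico fun r hr => ?_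
          have hrT : r < T := hr.2.trans htT
          have hr0 : 0 < r := by linarith [hr.1]
          calc H s ^ p ≤ (∫⁻ x, ENNReal.ofReal (heatKernel d (T - r) x) * U r x) ^ p :=
                ENNReal.rpow_le_rpow ((hmono hr.1).trans (hle r hr0 hrT)) (by linarith)
            _ ≤ _ := jensen d (by linarith) hp _ (hUs r)
  · intro t h0 htT
    obtain ⟨M, hM, hMx⟩ := hfin t (by linarith)
    refine (hle t (by linarith) htT).trans_lt (lt_of_le_of_lt ?_ hM)
    calc _ ≤ ∫⁻ x, ENNReal.ofReal (heatKernel d (T - t) x) * M := by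
          refine lintegral_mono_ae ?_
          filter_upwards [hMx] with x hx
          gcongr
      _ = M := by
          rw [lintegral_mul_const' _ _ hM.ne, hk_lintegral d (by linarith), one_mul]

/-- Pointwise lower bound for the free evolution. -/
lemma free_lower (d : ℕ) (U₀ : EuclideanSpace ℝ (Fin d) → ENNReal)
    {m : ℝ}
    (hm : ENNReal.ofReal m ≤ ∫⁻ z, ENNReal.ofReal (Real.exp (-‖z‖ ^ 2 / 2)) * U₀ z)
    {r : ℝ} (hr : 1 ≤ r) (y : EuclideanSpace ℝ (Fin d)) (hy : ‖y‖ ^ 2 ≤ r) :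
    ENNReal.ofReal ((4 * Real.pi * r) ^ (-(d : ℝ) / 2) * Real.exp (-1 / 2) * m) ≤
      ∫⁻ z, ENNReal.ofReal (heatKernel d r (y - z)) * U₀ z := by
  have hpi := Real.pi_pos
  have hr0 : 0 < r := by linarith
  rw [ENNReal.ofReal_mul (by positivity)]
  calc _ ≤ ENNReal.ofReal ((4 * Real.pi * r) ^ (-(d : ℝ) / 2) * Real.exp (-1 / 2)) *
        ∫⁻ z, ENNReal.ofReal (Real.exp (-‖z‖ ^ 2 / 2)) * U₀ z := by gcongr
    _ = ∫⁻ z, ENNReal.ofReal ((4 * Real.pi * r) ^ (-(d : ℝ) / 2) * Real.exp (-1 / 2)) *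
        (ENNReal.ofReal (Real.exp (-‖z‖ ^ 2 / 2)) * U₀ z) := by
        rw [lintegral_const_mul' _ _ ENNReal.ofReal_ne_top]
    _ ≤ _ := by
        refine lintegral_mono fun z => ?_
        rw [← mul_assoc, ← ENNReal.ofReal_mul (by positivity)]
        gcongr
        unfold heatKernel
        rw [mul_assoc, ← Real.exp_add]
        gcongr
        have h1 : ‖y - z‖ ≤ ‖y‖ + ‖z‖ := norm_sub_le y z
        have h2 : ‖y - z‖ ^ 2 ≤ 2 * ‖y‖ ^ 2 + 2 * ‖z‖ ^ 2 := by
          nlinarith [norm_nonneg (y - z), norm_nonneg y, norm_nonneg z, sq_nonneg (‖y‖ - ‖z‖)]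
        rw [le_div_iff₀ (by positivity)]
        nlinarith [mul_nonneg (sub_nonneg.2 hr) (sq_nonneg ‖z‖)]

/-- Lower bound for the spatial integral. -/
lemma slice_lower (d : ℕ) {p : ℝ} (hp : 1 < p) (hpF : (d : ℝ) * (p - 1) ≤ 2) {m : ℝ} (hm0 : 0 < m)
    {v : ℝ} (hv0 : 0 < v)
    (hv : ENNReal.ofReal v ≤ volume (Metric.ball (0 : EuclideanSpace ℝ (Fin d)) 1))
    {r T : ℝ} (hr : 1 ≤ r) (hrT : r ≤ T / 2) (W : EuclideanSpace ℝ (Fin d) → ENNReal)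
    (hW : ∀ᵐ y, ‖y‖ ^ 2 ≤ r →
      ENNReal.ofReal ((4 * Real.pi * r) ^ (-(d : ℝ) / 2) * Real.exp (-1 / 2) * m) ≤ W y) :
    ENNReal.ofReal (T ^ (-(d : ℝ) / 2) * ((4 * Real.pi) ^ (-(d : ℝ) / 2) * Real.exp (-1 / 4) *
      ((4 * Real.pi) ^ (-(d : ℝ) / 2) * Real.exp (-1 / 2) * m) ^ p * v) * r⁻¹) ≤
      ∫⁻ y, ENNReal.ofReal (heatKernel d (T - r) y) * W y ^ p := by
  have hpi := Real.pi_pos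
  have hr0 : 0 < r := by linarith
  have hT : 0 < T := by linarith
  set c : ℝ := (4 * Real.pi) ^ (-(d : ℝ) / 2) with hc
  have hc0 : 0 < c := by positivity
  set κ : ℝ := c * T ^ (-(d : ℝ) / 2) * Real.exp (-1 / 4) *
    (r ^ (-(d : ℝ) / 2) * (c * Real.exp (-1 / 2) * m)) ^ p with hκ
  have hκ0 : 0 ≤ κ := by positivity
  have hball : ENNReal.ofReal (r ^ ((d : ℝ) / 2) * v) ≤
      volume (Metric.ball (0 : EuclideanSpace ℝ (Fin d)) (Real.sqrt r)) := by
    rw [Measure.addHaar_ball_of_pos _ _ (Real.sqrt_pos.2 hr0), finrank_euclideanSpace_fin,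
      ENNReal.ofReal_mul (by positivity), Real.sqrt_eq_rpow, ← Real.rpow_natCast,
      ← Real.rpow_mul hr0.le, show (1 / 2 : ℝ) * d = d / 2 by ring]
    gcongr
  calc _ ≤ ENNReal.ofReal (κ * (r ^ ((d : ℝ) / 2) * v)) := by
        refine ENNReal.ofReal_le_ofReal ?_
        have h1 : r⁻¹ ≤ (r ^ (-(d : ℝ) / 2)) ^ p * r ^ ((d : ℝ) / 2) := by
          rw [← Real.rpow_neg_one, ← Real.rpow_mul hr0.le, ← Real.rpow_add hr0]
          refine Real.rpow_le_rpow_of_exponent_le hr ?_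
          nlinarith
        have h2 := Real.mul_rpow (x := r ^ (-(d : ℝ) / 2)) (y := c * Real.exp (-1 / 2) * m) (z := p)
          (by positivity) (by positivity)
        rw [hκ, h2]
        calc _ ≤ T ^ (-(d : ℝ) / 2) * (c * Real.exp (-1 / 4) *
              (c * Real.exp (-1 / 2) * m) ^ p * v) *
                ((r ^ (-(d : ℝ) / 2)) ^ p * r ^ ((d : ℝ) / 2)) := by gcongr
          _ = _ := by ring
    _ ≤ ENNReal.ofReal κ * volume (Metric.ball (0 : EuclideanSpace ℝ (Fin d)) (Real.sqrt r)) := by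
        rw [ENNReal.ofReal_mul hκ0]; gcongr
    _ = ∫⁻ y in Metric.ball (0 : EuclideanSpace ℝ (Fin d)) (Real.sqrt r), ENNReal.ofReal κ := by
        rw [setLIntegral_const]
    _ ≤ ∫⁻ y in Metric.ball (0 : EuclideanSpace ℝ (Fin d)) (Real.sqrt r),
          ENNReal.ofReal (heatKernel d (T - r) y) * W y ^ p := by
        refine setLIntegral_mono_ae' measurableSet_ball ?_
        filter_upwards [hW] with y hWy hy
        have hy' : ‖y‖ ^ 2 ≤ r := by
          rw [mem_ball_zero_iff] at hy
          calc ‖y‖ ^ 2 ≤ Real.sqrt r ^ 2 := by gcongr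
            _ = r := Real.sq_sqrt hr0.le
        rw [hκ, ENNReal.ofReal_mul (by positivity)]
        refine mul_le_mul' ?_ ?_
        · refine ENNReal.ofReal_le_ofReal ?_
          unfold heatKernel
          rw [hc, ← Real.mul_rpow (by positivity) hT.le]
          have hTr : 0 < T - r := by linarith
          refine mul_le_mul ?_ ?_ (by positivity) (by positivity)
          · refine Real.rpow_le_rpow_of_nonpos (by positivity) ?_ ?_
            · gcongr; linarith
            · have : (0 : ℝ) ≤ d := Nat.cast_nonneg d
              linarith
          · refine Real.exp_le_exp.2 ?_
            rw [le_div_iff₀ (by positivity)]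
            linarith
        · rw [← ENNReal.ofReal_rpow_of_nonneg (by positivity) (by linarith)]
          refine ENNReal.rpow_le_rpow (le_trans (le_of_eq ?_) (hWy hy')) (by linarith)
          rw [Real.mul_rpow (by positivity) hr0.le, ← hc]
          congr 1
          ring
    _ ≤ _ := setLIntegral_le_lintegral _ _

lemma conv (d : ℕ) {t : ℝ} (ht : 0 < t) (w : EuclideanSpace ℝ (Fin d) → ℝ) (hw : Measurable w)
    (hw0 : 0 ≤ᵐ[volume] w) {M : ℝ} (hM : ∀ᵐ y, w y ≤ M) (x : EuclideanSpace ℝ (Fin d)) :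
    (ENNReal.ofReal (∫ y, heatKernel d t (x - y) * w y) =
      ∫⁻ y, ENNReal.ofReal (heatKernel d t (x - y)) * ENNReal.ofReal (w y)) ∧
    0 ≤ ∫ y, heatKernel d t (x - y) * w y ∧ ∫ y, heatKernel d t (x - y) * w y ≤ M := by
  have hi : Integrable fun y => heatKernel d t (x - y) := (hk_integrable d ht).comp_sub_left x
  have hint : Integrable fun y => heatKernel d t (x - y) * w y := by
    refine hi.mul_bdd (c := M) hw.aestronglyMeasurable ?_
    filter_upwards [hw0, hM] with y h0 h1
    rw [Real.norm_eq_abs, abs_of_nonneg h0]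
    exact h1
  have hnn : 0 ≤ᵐ[volume] fun y => heatKernel d t (x - y) * w y := by
    filter_upwards [hw0] with y h0
    exact mul_nonneg (hk_nonneg d ht.le _) h0
  refine ⟨?_, integral_nonneg_of_ae hnn, ?_⟩
  · rw [ofReal_integral_eq_lintegral_ofReal hint hnn]
    refine lintegral_congr fun y => ?_
    rw [ENNReal.ofReal_mul (hk_nonneg d ht.le _)]
  · calc _ ≤ ∫ y, heatKernel d t (x - y) * M := by
          refine integral_mono_ae hint (hi.mul_const M) ?_
          filter_upwards [hM] with y h1
          exact mul_le_mul_of_nonneg_left h1 (hk_nonneg d ht.le _)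
      _ = M := by
          rw [integral_mul_const, integral_sub_left_eq_self (fun y => heatKernel d t y),
            hk_integral d ht, one_mul]

lemma mild_ge (d : ℕ) {p : ℝ} (hp : 1 < p) {t : ℝ} (ht : 0 < t)
    (u₀ : EuclideanSpace ℝ (Fin d) → ℝ) (h₀meas : Measurable u₀) (h₀pos : 0 ≤ᵐ[volume] u₀)
    (u : ℝ → EuclideanSpace ℝ (Fin d) → ℝ) (humeas : Measurable (Function.uncurry u))
    (hupos : ∀ t : ℝ, 0 ≤ t → 0 ≤ᵐ[volume] u t) {M : ℝ}
    (h₀M : ∀ᵐ y, u₀ y ≤ M) (huM : ∀ s ∈ Set.Icc 0 t, ∀ᵐ y, u s y ≤ M)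
    (hmild : ∀ᵐ x ∂volume, u t x =
      (∫ y, heatKernel d t (x - y) * u₀ y) +
        ∫ s in Set.Ioc (0 : ℝ) t, ∫ y, heatKernel d (t - s) (x - y) * u s y ^ p) :
    ∀ᵐ x, (∫⁻ y, ENNReal.ofReal (heatKernel d t (x - y)) * ENNReal.ofReal (u₀ y)) ≤
        ENNReal.ofReal (u t x) ∧
      (∫⁻ r in Set.Ioo 0 t, ∫⁻ y, ENNReal.ofReal (heatKernel d (t - r) (x - y)) *
        ENNReal.ofReal (u r y) ^ p) ≤ ENNReal.ofReal (u t x) := by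
  filter_upwards [hmild] with x hx
  obtain ⟨a1, a2, -⟩ := conv d ht u₀ h₀meas h₀pos h₀M x
  have hus : ∀ s, Measurable (u s) := fun s => humeas.comp measurable_prodMk_left
  have hc : ∀ s ∈ Set.Ioo 0 t, _ := fun s hs => conv d (sub_pos.2 hs.2) (fun y => u s y ^ p)
    ((hus s).pow_const p)
    (by filter_upwards [hupos s hs.1.le] with y hy using Real.rpow_nonneg hy p) (M := M ^ p)
    (by
      filter_upwards [hupos s hs.1.le, huM s ⟨hs.1.le, hs.2.le⟩] with y hy hy'
      exact Real.rpow_le_rpow hy hy' (by linarith)) x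
  set J : ℝ → ℝ := fun s => ∫ y, heatKernel d (t - s) (x - y) * u s y ^ p with hJ
  have hJm : StronglyMeasurable J := by
    refine StronglyMeasurable.integral_prod_right
      (f := fun s y => heatKernel d (t - s) (x - y) * u s y ^ p) ?_
    refine Measurable.stronglyMeasurable ?_
    have : Measurable fun z : ℝ × EuclideanSpace ℝ (Fin d) => u z.1 z.2 ^ p := humeas.pow_const p
    refine Measurable.mul (hk_meas_comp d (f := fun z : ℝ × EuclideanSpace ℝ (Fin d) => t - z.1)
      (g := fun z => x - z.2) ?_ ?_) this <;> fun_prop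
  have hJ0 : 0 ≤ᵐ[volume.restrict (Set.Ioo 0 t)] J :=
    (ae_restrict_iff' measurableSet_Ioo).2 (Filter.Eventually.of_forall fun s hs => (hc s hs).2.1)
  have hJi : Integrable J (volume.restrict (Set.Ioo 0 t)) := by
    refine Integrable.of_bound hJm.aestronglyMeasurable (M ^ p) ?_
    refine (ae_restrict_iff' measurableSet_Ioo).2 (Filter.Eventually.of_forall fun s hs => ?_)
    rw [Real.norm_eq_abs, abs_of_nonneg (hc s hs).2.1]
    exact (hc s hs).2.2
  have b0 : 0 ≤ ∫ s in Set.Ioo 0 t, J s := integral_nonneg_of_ae hJ0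
  rw [integral_Ioc_eq_integral_Ioo] at hx
  constructor
  · rw [← a1]
    exact ENNReal.ofReal_le_ofReal (by rw [hx]; linarith)
  · calc _ = ∫⁻ s in Set.Ioo 0 t, ENNReal.ofReal (J s) := by
          refine setLIntegral_congr_fun_ae measurableSet_Ioo
            (Filter.Eventually.of_forall fun s hs => ?_)
          rw [hJ, (hc s hs).1]
          refine lintegral_congr_ae ?_
          filter_upwards [hupos s hs.1.le] with y hy
          rw [ENNReal.ofReal_rpow_of_nonneg hy (by linarith)]
      _ = ENNReal.ofReal (∫ s in Set.Ioo 0 t, J s) :=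
          (ofReal_integral_eq_lintegral_ofReal hJi hJ0).symm
      _ ≤ _ := ENNReal.ofReal_le_ofReal (by rw [hx]; linarith)

lemma exists_real_le {x : ENNReal} (hx : x ≠ 0) : ∃ m : ℝ, 0 < m ∧ ENNReal.ofReal m ≤ x := by
  refine ⟨(min x 1).toReal, ?_, ?_⟩
  · exact ENNReal.toReal_pos (by simp [hx]) (by simp)
  · rw [ENNReal.ofReal_toReal (by simp)]
    exact min_le_left _ _

lemma log_lintegral {k b : ℝ} (hk : 0 ≤ k) (hb : 1 ≤ b) :
    ∫⁻ r in Set.Ioo 1 b, ENNReal.ofReal (k * r⁻¹) = ENNReal.ofReal (k * Real.log b) := by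
  have h1 : ∫ r in Set.Ioo 1 b, k * r⁻¹ = k * Real.log b := by
    rw [← integral_Ioc_eq_integral_Ioo, integral_const_mul, ← intervalIntegral.integral_of_le hb,
      integral_inv_of_pos one_pos (by linarith), div_one]
  rw [← h1, ofReal_integral_eq_lintegral_ofReal]
  · have : IntegrableOn (fun r : ℝ => k * r⁻¹) (Set.Icc 1 b) := by
      refine ContinuousOn.integrableOn_Icc (continuousOn_const.mul ?_)
      exact continuousOn_inv₀.mono fun r hr => by
        have := hr.1
        simp; linarith
    exact this.mono_set Set.Ioo_subset_Icc_self
  · refine (ae_restrict_iff' measurableSet_Ioo).2 (Filter.Eventually.of_forall fun s hs => ?_)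
    have : 0 < s := by linarith [hs.1]
    simp only [Pi.zero_apply]
    positivity

end Fujita

/-- **Fujita blow-up theorem, including the critical case** (commutative case of the paper's
Theorem 7.4): for `1 < p ≤ 1 + 2/d`, the only nonnegative global mild solution of
`∂ₜu = Δu + u^p`, locally bounded in time in `L^∞`, has vanishing initial data. -/
theorem fujita_blowup (d : ℕ) (hd : 1 ≤ d) (p : ℝ) (hp : 1 < p)
    (hpF : p ≤ 1 + 2 / (d : ℝ))
    (u₀ : EuclideanSpace ℝ (Fin d) → ℝ) (h₀meas : Measurable u₀)
    (h₀bdd : eLpNorm u₀ ⊤ volume < ⊤) (h₀pos : 0 ≤ᵐ[volume] u₀)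
    (u : ℝ → EuclideanSpace ℝ (Fin d) → ℝ)
    (humeas : Measurable (Function.uncurry u))
    (hupos : ∀ t : ℝ, 0 ≤ t → 0 ≤ᵐ[volume] u t)
    (hubdd : ∀ T : ℝ, 0 < T →
      (⨆ t ∈ Set.Icc (0 : ℝ) T, eLpNorm (u t) ⊤ volume) < ⊤)
    (hmild₀ : u 0 =ᵐ[volume] u₀)
    (hmild : ∀ t : ℝ, 0 < t → ∀ᵐ x ∂volume, u t x =
      (∫ y, heatKernel d t (x - y) * u₀ y) +
        ∫ s in Set.Ioc (0 : ℝ) t, ∫ y, heatKernel d (t - s) (x - y) * u s y ^ p) :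
    u₀ =ᵐ[volume] 0 := by
  by_contra hne
  have hpi := Real.pi_pos
  have hd0 : (0 : ℝ) < d := by exact_mod_cast hd
  have hdp : (d : ℝ) * (p - 1) ≤ 2 := by
    have h : p - 1 ≤ 2 / (d : ℝ) := by linarith
    rw [le_div_iff₀ hd0] at h
    linarith
  have aux : ∀ (f : EuclideanSpace ℝ (Fin d) → ℝ) (N : ENNReal), N < ⊤ →
      eLpNorm f ⊤ volume ≤ N → ∀ᵐ y, f y ≤ N.toReal := by
    intro f N hN hf
    filter_upwards [ae_le_eLpNormEssSup (f := f) (μ := volume)] with y hy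
    rw [eLpNorm_exponent_top] at hf
    exact (ENNReal.ofReal_le_iff_le_toReal hN.ne).1
      ((Real.ofReal_le_enorm _).trans (hy.trans hf))
  -- uniform bounds on compact time intervals
  have hbd : ∀ t : ℝ, 0 < t → ∃ M : ℝ, (∀ᵐ y, u₀ y ≤ M) ∧
      ∀ s ∈ Set.Icc 0 t, ∀ᵐ y, u s y ≤ M := by
    intro t ht
    have h1 : ∀ s ∈ Set.Icc 0 t, ∀ᵐ y, u s y ≤
        (⨆ τ ∈ Set.Icc (0 : ℝ) t, eLpNorm (u τ) ⊤ volume).toReal := fun s hs =>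
      aux _ _ (hubdd t ht) (le_iSup₂ (f := fun τ (_ : τ ∈ Set.Icc (0 : ℝ) t) =>
        eLpNorm (u τ) ⊤ volume) s hs)
    refine ⟨_, ?_, h1⟩
    filter_upwards [hmild₀, h1 0 ⟨le_rfl, ht.le⟩] with y hy hy'
    rwa [← hy]
  have hge : ∀ t : ℝ, 0 < t → ∀ᵐ x,
      (∫⁻ y, ENNReal.ofReal (heatKernel d t (x - y)) * ENNReal.ofReal (u₀ y)) ≤
        ENNReal.ofReal (u t x) ∧
      (∫⁻ r in Set.Ioo 0 t, ∫⁻ y, ENNReal.ofReal (heatKernel d (t - r) (x - y)) *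
        ENNReal.ofReal (u r y) ^ p) ≤ ENNReal.ofReal (u t x) := fun t ht => by
    obtain ⟨M, hM1, hM2⟩ := hbd t ht
    exact Fujita.mild_ge d hp ht u₀ h₀meas h₀pos u humeas hupos hM1 hM2 (hmild t ht)
  -- positivity of the Gaussian mass of the data
  have hmass : ∫⁻ z, ENNReal.ofReal (Real.exp (-‖z‖ ^ 2 / 2)) * ENNReal.ofReal (u₀ z) ≠ 0 := by
    intro h0
    rw [lintegral_eq_zero_iff (by fun_prop)] at h0
    apply hne
    filter_upwards [h0, h₀pos] with z hz hz'
    have hz2 : u₀ z ≤ 0 := by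
      simpa [Real.exp_pos, not_le.2 (Real.exp_pos _)] using hz
    exact le_antisymm hz2 hz'
  obtain ⟨m, hm0, hm⟩ := Fujita.exists_real_le hmass
  obtain ⟨v, hv0, hv⟩ := Fujita.exists_real_le
    (Metric.measure_ball_pos volume (0 : EuclideanSpace ℝ (Fin d)) one_pos).ne'
  set U : ℝ → EuclideanSpace ℝ (Fin d) → ENNReal := fun t x => ENNReal.ofReal (u t x) with hU
  have hUm : Measurable (Function.uncurry U) := humeas.ennreal_ofReal
  set c₀ : ℝ := (4 * Real.pi) ^ (-(d : ℝ) / 2) * Real.exp (-1 / 4) *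
      ((4 * Real.pi) ^ (-(d : ℝ) / 2) * Real.exp (-1 / 2) * m) ^ p * v with hc₀
  have hc₀p : 0 < c₀ := by positivity
  -- the key bound
  have key : ∀ L : ℝ, 1 ≤ L → (c₀ * L) ^ (p - 1) ≤ 2 * (1 / (1 - 2 ^ (1 - p))) := by
    intro L hL
    set T : ℝ := 2 * Real.exp L with hT
    have hexp : 1 < Real.exp L := Real.one_lt_exp_iff.2 (by linarith)
    have hT1 : 1 ≤ T := by linarith
    have hT0 : 0 < T := by linarith
    have hT2 : T / 2 = Real.exp L := by rw [hT]; ring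
    have hA : 0 < T ^ (-(d : ℝ) / 2) * c₀ * L := by positivity
    have hlow : ENNReal.ofReal (T ^ (-(d : ℝ) / 2) * c₀ * L) ≤ ∫⁻ r in Set.Ioo 0 (T / 2),
        ∫⁻ y, ENNReal.ofReal (heatKernel d (T - r) y) * U r y ^ p := by
      calc ENNReal.ofReal (T ^ (-(d : ℝ) / 2) * c₀ * L)
          = ∫⁻ r in Set.Ioo 1 (T / 2), ENNReal.ofReal (T ^ (-(d : ℝ) / 2) * c₀ * r⁻¹) := by
            rw [Fujita.log_lintegral (by positivity) (by linarith), hT2, Real.log_exp]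
        _ ≤ ∫⁻ r in Set.Ioo 1 (T / 2),
            ∫⁻ y, ENNReal.ofReal (heatKernel d (T - r) y) * U r y ^ p := by
            refine setLIntegral_mono' measurableSet_Ioo fun r hr => ?_
            refine Fujita.slice_lower d hp hdp hm0 hv0 hv hr.1.le hr.2.le (U r) ?_
            filter_upwards [hge r (by linarith [hr.1])] with y hy hyr
            exact (Fujita.free_lower d _ hm hr.1.le y hyr).trans hy.1
        _ ≤ _ := lintegral_mono_set (Set.Ioo_subset_Ioo_left zero_le_one)
    have hb := Fujita.energy_bound d hp U hUm
      (fun s hs => by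
        obtain ⟨M, -, hM⟩ := hbd s hs
        refine ⟨ENNReal.ofReal M, ENNReal.ofReal_lt_top, ?_⟩
        filter_upwards [hM s ⟨hs.le, le_rfl⟩] with y hy
        exact ENNReal.ofReal_le_ofReal hy)
      (fun s hs => by
        filter_upwards [hge s hs] with x hx using hx.2)
      (s₀ := T / 2) (T := T) (by linarith) hA hlow
    have hTp : 1 ≤ T * (T ^ (-(d : ℝ) / 2)) ^ (p - 1) := by
      rw [← Real.rpow_mul hT0.le]
      nth_rewrite 1 [← Real.rpow_one T]
      rw [← Real.rpow_add hT0]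
      refine Real.one_le_rpow hT1 ?_
      nlinarith
    rw [mul_assoc, Real.mul_rpow (by positivity) (by positivity)] at hb
    have hpos : 0 ≤ (c₀ * L) ^ (p - 1) := by positivity
    have := mul_le_mul_of_nonneg_right hTp hpos
    nlinarith
  have htend : Filter.Tendsto (fun L : ℝ => (c₀ * L) ^ (p - 1)) Filter.atTop Filter.atTop :=
    (tendsto_rpow_atTop (by linarith)).comp (Filter.tendsto_id.const_mul_atTop hc₀p)
  obtain ⟨L, hL1, hL2⟩ := ((htend.eventually_gt_atTop (2 * (1 / (1 - 2 ^ (1 - p))))).and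
    (Filter.eventually_ge_atTop 1)).exists
  linarith [key L hL2]
end

section
/- Let d ≥ 1 be a natural number, let p > 1 + 2/d be a real number, and set r = d(p − 1)/2. Then there exists ε > 0 such that for every measurable u₀ : ℝ^d → ℝ with u₀ ≥ 0 almost everywhere and ‖u₀‖_{L^r(ℝ^d)} + ‖u₀‖_{L^∞(ℝ^d)} ≤ ε, there exists a jointly measurable function u : [0,∞) × ℝ^d → ℝ with u(t, ·) ≥ 0 almost everywhere for each t, with sup_{0 ≤ t ≤ T} ‖u(t, ·)‖_{L^∞(ℝ^d)} < ∞ for every T > 0, and such that for every t ≥ 0 and almost every x ∈ ℝ^d: u(t, x) = ∫_{ℝ^d} G_t(x − y)·u₀(y) dy + ∫₀^t ∫_{ℝ^d} G_{t−s}(x − y)·u(s, y)^p dy ds (with the first term interpreted as u₀(x) when t = 0). -/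
open MeasureTheory

open scoped ENNReal

lemma fj_jensen {α : Type*} [MeasurableSpace α] {μ : Measure α} {w f : α → ℝ≥0∞}
    (hw : AEMeasurable w μ) (hf : AEMeasurable f μ) {q : ℝ} (hq : 1 ≤ q) :
    (∫⁻ a, w a * f a ∂μ) ^ q ≤ (∫⁻ a, w a ∂μ) ^ (q - 1) * ∫⁻ a, w a * f a ^ q ∂μ := by
  have hq0 : 0 < q := by linarith
  have h1 : (1 - 1 / q) + 1 / q = 1 := by ring
  have h2 : 0 ≤ 1 - 1 / q := by
    rw [sub_nonneg, div_le_one hq0]; exact hq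
  have h3 : 0 ≤ 1 / q := by positivity
  have h := ENNReal.lintegral_mul_norm_pow_le (μ := μ) hw (hw.mul (hf.pow_const q)) h2 h3 h1
  have e : ∀ a, w a ^ (1 - 1 / q) * (w * fun x => f x ^ q) a ^ (1 / q) = w a * f a := by
    intro a
    simp only [Pi.mul_apply]
    rw [ENNReal.mul_rpow_of_nonneg _ _ h3, ← ENNReal.rpow_mul, ← mul_assoc,
      ← ENNReal.rpow_add_of_nonneg _ _ h2 h3, h1, mul_one_div_cancel hq0.ne']
    simp
  simp only [e] at h
  calc (∫⁻ a, w a * f a ∂μ) ^ q ≤ _ := ENNReal.rpow_le_rpow h hq0.le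
    _ = _ := by
      rw [ENNReal.mul_rpow_of_nonneg _ _ hq0.le, ← ENNReal.rpow_mul, ← ENNReal.rpow_mul]
      have e1 : (1 - 1 / q) * q = q - 1 := by field_simp
      have e2 : 1 / q * q = 1 := by field_simp
      rw [e1, e2, ENNReal.rpow_one]; rfl

lemma fj_minkowski {E : Type*} [MeasurableSpace E] {μ : Measure E} [SFinite μ]
    {F : ℝ → E → ℝ≥0∞} (hF : Measurable (Function.uncurry F)) {q : ℝ} (hq : 1 ≤ q) {S : Set ℝ}
    (hS : MeasurableSet S) {w : ℝ → ℝ} (hwm : Measurable w) (hw : ∀ s ∈ S, 0 < w s)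
    (hb : ∀ s ∈ S, ∫⁻ x, F s x ^ q ∂μ ≤ ENNReal.ofReal (w s) ^ q)
    {W : ℝ≥0∞} (hW : ∫⁻ s in S, ENNReal.ofReal (w s) ≤ W) :
    ∫⁻ x, (∫⁻ s in S, F s x) ^ q ∂μ ≤ W ^ q := by
  have hq0 : 0 < q := by linarith
  have hwm' : Measurable fun s => ENNReal.ofReal (w s) := hwm.ennreal_ofReal
  have hFx : ∀ x, Measurable fun s => F s x := fun x => hF.of_uncurry_right
  have hFs : ∀ s, Measurable fun x => F s x := fun s => hF.of_uncurry_left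
  have hne : ∀ s ∈ S, ENNReal.ofReal (w s) ≠ 0 := fun s hs => by simpa using hw s hs
  have hnt : ∀ s, ENNReal.ofReal (w s) ≠ ⊤ := fun s => ENNReal.ofReal_ne_top
  have step : ∀ x, (∫⁻ s in S, F s x) ^ q ≤ (∫⁻ s in S, ENNReal.ofReal (w s)) ^ (q - 1) *
      ∫⁻ s in S, ENNReal.ofReal (w s) * (F s x / ENNReal.ofReal (w s)) ^ q := by
    intro x
    refine le_trans (le_of_eq ?_) (fj_jensen (μ := volume.restrict S) hwm'.aemeasurable
      ((hFx x).div hwm').aemeasurable hq)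
    congr 1
    refine setLIntegral_congr_fun hS fun s hs => ?_
    simp only [Pi.div_apply]
    rw [ENNReal.mul_div_cancel (hne s hs) (hnt s)]
  have hmeas : Measurable (Function.uncurry fun (x : E) (s : ℝ) =>
      ENNReal.ofReal (w s) * (F s x / ENNReal.ofReal (w s)) ^ q) := by
    have : Measurable fun z : E × ℝ => F z.2 z.1 := hF.comp measurable_swap
    have h2 : Measurable fun z : E × ℝ => ENNReal.ofReal (w z.2) := hwm'.comp measurable_snd
    exact h2.mul ((this.div h2).pow_const q)
  calc ∫⁻ x, (∫⁻ s in S, F s x) ^ q ∂μ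
      ≤ ∫⁻ x, (∫⁻ s in S, ENNReal.ofReal (w s)) ^ (q - 1) *
      ∫⁻ s in S, ENNReal.ofReal (w s) * (F s x / ENNReal.ofReal (w s)) ^ q ∂volume ∂μ := lintegral_mono step
    _ = (∫⁻ s in S, ENNReal.ofReal (w s)) ^ (q - 1) *
      ∫⁻ x, ∫⁻ s in S, ENNReal.ofReal (w s) * (F s x / ENNReal.ofReal (w s)) ^ q ∂volume ∂μ := by
        rw [lintegral_const_mul]
        exact Measurable.lintegral_prod_right' (f := Function.uncurry fun (x : E) (s : ℝ) =>
          ENNReal.ofReal (w s) * (F s x / ENNReal.ofReal (w s)) ^ q) hmeas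
    _ = (∫⁻ s in S, ENNReal.ofReal (w s)) ^ (q - 1) *
      ∫⁻ s in S, ∫⁻ x, ENNReal.ofReal (w s) * (F s x / ENNReal.ofReal (w s)) ^ q ∂μ := by
        rw [lintegral_lintegral_swap hmeas.aemeasurable]
    _ ≤ (∫⁻ s in S, ENNReal.ofReal (w s)) ^ (q - 1) * ∫⁻ s in S, ENNReal.ofReal (w s) := by
        refine mul_le_mul' le_rfl ?_
        refine setLIntegral_mono hwm' fun s hs => ?_
        rw [lintegral_const_mul _ (((hFs s).div_const _).pow_const q)]
        conv_rhs => rw [← mul_one (ENNReal.ofReal (w s))]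
        gcongr
        simp only [div_eq_mul_inv, ENNReal.mul_rpow_of_nonneg _ _ hq0.le]
        rw [lintegral_mul_const _ ((hFs s).pow_const q), ENNReal.inv_rpow, ← div_eq_mul_inv]
        exact ENNReal.div_le_of_le_mul (by rw [one_mul]; exact hb s hs)
    _ = (∫⁻ s in S, ENNReal.ofReal (w s)) ^ q := by
        conv_lhs => rw [← ENNReal.rpow_one (∫⁻ s in S, ENNReal.ofReal (w s)),
          ← ENNReal.rpow_mul, ← ENNReal.rpow_add_of_nonneg _ _ (by linarith) (by linarith)]
        congr 1; ring
    _ ≤ W ^ q := by gcongr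

lemma fj_beta {a b : ℝ} (ha0 : 0 ≤ a) (hb0 : 0 ≤ b) (ha : a < 1) (hb : b < 1) {t : ℝ} (ht : 0 < t) :
    ∫⁻ s in Set.Ioo 0 t, ENNReal.ofReal ((t - s) ^ (-a) * s ^ (-b)) ≤
      ENNReal.ofReal (((1 / 2) ^ (-a) / (1 - b) + (1 / 2) ^ (-b) / (1 - a)) *
        t ^ (1 - a - b)) := by
  have hle : ∀ s ∈ Set.Ioo 0 t, (t - s) ^ (-a) * s ^ (-b) ≤
      (t / 2) ^ (-a) * s ^ (-b) + (t / 2) ^ (-b) * (t - s) ^ (-a) := by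
    intro s hs
    obtain ⟨h1, h2⟩ := hs
    have hts : 0 < t - s := by linarith
    have p1 : 0 ≤ (t - s) ^ (-a) := by positivity
    have p2 : 0 ≤ s ^ (-b) := by positivity
    have p3 : 0 ≤ (t / 2) ^ (-a) := by positivity
    have p4 : 0 ≤ (t / 2) ^ (-b) := by positivity
    rcases le_total s (t / 2) with h | h
    · have : (t - s) ^ (-a) ≤ (t / 2) ^ (-a) :=
        Real.rpow_le_rpow_of_nonpos (by linarith) (by linarith) (by linarith)
      nlinarith [mul_le_mul_of_nonneg_right this p2, mul_nonneg p4 p1]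
    · have : s ^ (-b) ≤ (t / 2) ^ (-b) :=
        Real.rpow_le_rpow_of_nonpos (by linarith) (by linarith) (by linarith)
      nlinarith [mul_le_mul_of_nonneg_right this p1, mul_nonneg p3 p2]
  have i1 : IntervalIntegrable (fun s : ℝ => s ^ (-b)) volume 0 t :=
    intervalIntegral.intervalIntegrable_rpow' (by linarith)
  have i2 : IntervalIntegrable (fun s : ℝ => (t - s) ^ (-a)) volume 0 t := by
    have := (intervalIntegral.intervalIntegrable_rpow' (r := -a) (a := 0) (b := t)
      (by linarith)).comp_sub_left t
    simpa using this.symm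
  have v1 : ∫ s in (0:ℝ)..t, s ^ (-b) = t ^ (1 - b) / (1 - b) := by
    rw [integral_rpow (Or.inl (by linarith)), Real.zero_rpow (by linarith)]
    rw [show -b + 1 = 1 - b by ring, sub_zero]
  have v2 : ∫ s in (0:ℝ)..t, (t - s) ^ (-a) = t ^ (1 - a) / (1 - a) := by
    rw [intervalIntegral.integral_comp_sub_left (fun s : ℝ => s ^ (-a)) t, sub_self, sub_zero,
      integral_rpow (Or.inl (by linarith)), Real.zero_rpow (by linarith)]
    rw [show -a + 1 = 1 - a by ring, sub_zero]
  have i3 : IntervalIntegrable (fun s : ℝ =>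
      (t / 2) ^ (-a) * s ^ (-b) + (t / 2) ^ (-b) * (t - s) ^ (-a)) volume 0 t :=
    (i1.const_mul _).add (i2.const_mul _)
  have hint := i3.1.mono_set (Set.Ioo_subset_Ioc_self)
  calc _ ≤ ∫⁻ s in Set.Ioo 0 t, ENNReal.ofReal
        ((t / 2) ^ (-a) * s ^ (-b) + (t / 2) ^ (-b) * (t - s) ^ (-a)) := by
        refine setLIntegral_mono (by fun_prop) fun s hs => ?_
        exact ENNReal.ofReal_le_ofReal (hle s hs)
    _ = ENNReal.ofReal (∫ s in Set.Ioo 0 t,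
        ((t / 2) ^ (-a) * s ^ (-b) + (t / 2) ^ (-b) * (t - s) ^ (-a))) := by
        rw [ofReal_integral_eq_lintegral_ofReal hint]
        refine (ae_restrict_iff' measurableSet_Ioo).2 (Filter.Eventually.of_forall fun s hs => ?_)
        have := hs.1
        have : 0 < t - s := by linarith [hs.2]
        simp only [Pi.zero_apply]
        positivity
    _ = _ := by
        rw [← integral_Ioc_eq_integral_Ioo, ← intervalIntegral.integral_of_le ht.le,
          intervalIntegral.integral_add (i1.const_mul _) (i2.const_mul _),
          intervalIntegral.integral_const_mul, intervalIntegral.integral_const_mul, v1, v2]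
        congr 1
        rw [div_eq_mul_one_div t 2, Real.mul_rpow ht.le (by norm_num),
          Real.mul_rpow ht.le (by norm_num)]
        have e1 : t ^ (1 - a - b) = t ^ (-a) * t ^ (1 - b) := by
          rw [← Real.rpow_add ht]; ring_nf
        have e2 : t ^ (1 - a - b) = t ^ (-b) * t ^ (1 - a) := by
          rw [← Real.rpow_add ht]; ring_nf
        rw [add_mul]
        nth_rewrite 1 [e1]
        rw [e2]
        ring

lemma fj_hk_meas (d : ℕ) :
    Measurable (Function.uncurry (heatKernel d)) := by
  unfold heatKernel Function.uncurry
  fun_prop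

lemma fj_hk_nonneg (d : ℕ) {t : ℝ} (ht : 0 ≤ t) (x : EuclideanSpace ℝ (Fin d)) :
    0 ≤ heatKernel d t x := by
  unfold heatKernel
  have := Real.pi_pos
  positivity

lemma fj_hk_le (d : ℕ) {t : ℝ} (ht : 0 < t) (x : EuclideanSpace ℝ (Fin d)) :
    heatKernel d t x ≤ t ^ (-(d : ℝ) / 2) := by
  unfold heatKernel
  have h1 : (4 * Real.pi * t) ^ (-(d : ℝ) / 2) ≤ t ^ (-(d : ℝ) / 2) := by
    apply Real.rpow_le_rpow_of_nonpos ht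
    · nlinarith [Real.pi_gt_three]
    · have : (0 : ℝ) ≤ d := Nat.cast_nonneg d
      linarith
  have h2 : Real.exp (-‖x‖ ^ 2 / (4 * t)) ≤ 1 := by
    rw [Real.exp_le_one_iff]
    apply div_nonpos_of_nonpos_of_nonneg
    · nlinarith [sq_nonneg ‖x‖]
    · linarith
  calc _ ≤ t ^ (-(d : ℝ) / 2) * 1 := by
        apply mul_le_mul h1 h2 (Real.exp_nonneg _) (by positivity)
    _ = _ := mul_one _

lemma fj_hk_lint (d : ℕ) {t : ℝ} (ht : 0 < t) :
    ∫⁻ x, ENNReal.ofReal (heatKernel d t x) = 1 := by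
  have hb : 0 < 1 / (4 * t) := by positivity
  have hi := GaussianFourier.integral_rexp_neg_mul_sq_norm (V := EuclideanSpace ℝ (Fin d)) hb
  have hpi := Real.pi_pos
  have hI : ∫ x, heatKernel d t x = 1 := by
    have e : ∀ x, heatKernel d t x =
        (4 * Real.pi * t) ^ (-(d : ℝ) / 2) * Real.exp (-(1 / (4 * t)) * ‖x‖ ^ 2) := by
      intro x; unfold heatKernel; congr 2; ring
    simp only [e]
    rw [integral_const_mul, hi, finrank_euclideanSpace_fin,
      show Real.pi / (1 / (4 * t)) = 4 * Real.pi * t by field_simp,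
      ← Real.rpow_add (by positivity)]
    rw [show -(d : ℝ) / 2 + d / 2 = 0 by ring, Real.rpow_zero]
  have hint : Integrable (heatKernel d t) := by
    by_contra h
    rw [integral_undef h] at hI
    norm_num at hI
  rw [← ofReal_integral_eq_lintegral_ofReal hint
    (Filter.Eventually.of_forall fun x => fj_hk_nonneg d ht.le x), hI, ENNReal.ofReal_one]

/-- Heat semigroup on extended-nonnegative functions. -/
noncomputable def fjH (d : ℕ) (t : ℝ) (f : EuclideanSpace ℝ (Fin d) → ℝ≥0∞)
    (x : EuclideanSpace ℝ (Fin d)) : ℝ≥0∞ :=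
  ∫⁻ y, ENNReal.ofReal (heatKernel d t (x - y)) * f y

lemma fj_k_meas (d : ℕ) (t : ℝ) : Measurable (Function.uncurry
    fun (x y : EuclideanSpace ℝ (Fin d)) => ENNReal.ofReal (heatKernel d t (x - y))) := by
  have : Measurable fun z : EuclideanSpace ℝ (Fin d) × EuclideanSpace ℝ (Fin d) =>
      ((t, z.1 - z.2) : ℝ × EuclideanSpace ℝ (Fin d)) := by fun_prop
  exact ((fj_hk_meas d).comp this).ennreal_ofReal

lemma fj_k_int_right (d : ℕ) {t : ℝ} (ht : 0 < t) (x : EuclideanSpace ℝ (Fin d)) :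
    ∫⁻ y, ENNReal.ofReal (heatKernel d t (x - y)) = 1 := by
  rw [lintegral_sub_left_eq_self (fun y => ENNReal.ofReal (heatKernel d t y)) x, fj_hk_lint d ht]

lemma fj_k_int_left (d : ℕ) {t : ℝ} (ht : 0 < t) (y : EuclideanSpace ℝ (Fin d)) :
    ∫⁻ x, ENNReal.ofReal (heatKernel d t (x - y)) = 1 := by
  rw [lintegral_sub_right_eq_self (fun y => ENNReal.ofReal (heatKernel d t y)) y, fj_hk_lint d ht]

lemma fj_H_const (d : ℕ) {t : ℝ} (ht : 0 < t) {f : EuclideanSpace ℝ (Fin d) → ℝ≥0∞} {c : ℝ≥0∞}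
    (hf : ∀ᵐ y, f y ≤ c) (x : EuclideanSpace ℝ (Fin d)) : fjH d t f x ≤ c := by
  unfold fjH
  calc _ ≤ ∫⁻ y, ENNReal.ofReal (heatKernel d t (x - y)) * c := by
        refine lintegral_mono_ae ?_
        filter_upwards [hf] with y hy
        gcongr
    _ = c := by
        rw [lintegral_mul_const _ (fj_k_meas d t).of_uncurry_left, fj_k_int_right d ht, one_mul]

lemma fj_H_pow (d : ℕ) {t : ℝ} (ht : 0 < t) {f : EuclideanSpace ℝ (Fin d) → ℝ≥0∞}
    (hf : Measurable f) {m : ℝ} (hm : 1 ≤ m) (x : EuclideanSpace ℝ (Fin d)) :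
    fjH d t f x ^ m ≤ fjH d t (fun y => f y ^ m) x := by
  have := fj_jensen (μ := volume) (fj_k_meas d t).of_uncurry_left.aemeasurable
    hf.aemeasurable hm (w := fun y => ENNReal.ofReal (heatKernel d t (x - y)))
  rwa [fj_k_int_right d ht, ENNReal.one_rpow, one_mul] at this

lemma fj_H_sup_pow (d : ℕ) {t : ℝ} (ht : 0 < t) {f : EuclideanSpace ℝ (Fin d) → ℝ≥0∞}
    (hf : Measurable f) {m : ℝ} (hm : 1 ≤ m) (x : EuclideanSpace ℝ (Fin d)) :
    fjH d t f x ^ m ≤ ENNReal.ofReal (t ^ (-(d : ℝ) / 2)) * ∫⁻ y, f y ^ m := by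
  refine (fj_H_pow d ht hf hm x).trans ?_
  unfold fjH
  rw [← lintegral_const_mul _ (hf.pow_const m)]
  refine lintegral_mono fun y => ?_
  dsimp only
  gcongr
  exact fj_hk_le d ht _

lemma fj_H_meas (d : ℕ) (t : ℝ) {f : EuclideanSpace ℝ (Fin d) → ℝ≥0∞}
    (hf : Measurable f) : Measurable (fjH d t f) := by
  unfold fjH
  refine Measurable.lintegral_prod_right' (f := Function.uncurry fun x y =>
    ENNReal.ofReal (heatKernel d t (x - y)) * f y) ?_
  exact (fj_k_meas d t).mul (hf.comp measurable_snd)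

lemma fj_H_Lm (d : ℕ) {t : ℝ} (ht : 0 < t) {f : EuclideanSpace ℝ (Fin d) → ℝ≥0∞}
    (hf : Measurable f) {m : ℝ} (hm : 1 ≤ m) :
    ∫⁻ x, fjH d t f x ^ m ≤ ∫⁻ y, f y ^ m := by
  refine (lintegral_mono fun x => fj_H_pow d ht hf hm x).trans ?_
  unfold fjH
  rw [lintegral_lintegral_swap]
  · refine lintegral_mono fun y => ?_
    rw [lintegral_mul_const _ (fj_k_meas d t).of_uncurry_right, fj_k_int_left d ht, one_mul]
  · exact ((fj_k_meas d t).mul ((hf.pow_const m).comp measurable_snd)).aemeasurable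

/-- `L^m → L^∞` smoothing. -/
lemma fj_H_sup (d : ℕ) {t : ℝ} (ht : 0 < t) {f : EuclideanSpace ℝ (Fin d) → ℝ≥0∞}
    (hf : Measurable f) {m : ℝ} (hm : 1 ≤ m) {a : ℝ}
    (hfa : ∫⁻ y, f y ^ m ≤ ENNReal.ofReal a ^ m) (x : EuclideanSpace ℝ (Fin d)) :
    fjH d t f x ≤ ENNReal.ofReal (t ^ (-(d : ℝ) / (2 * m)) * a) := by
  have hm0 : 0 < m := by linarith
  rw [← ENNReal.rpow_le_rpow_iff hm0]
  refine (fj_H_sup_pow d ht hf hm x).trans ?_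
  rw [ENNReal.ofReal_mul (by positivity), ENNReal.mul_rpow_of_nonneg _ _ hm0.le,
    ENNReal.ofReal_rpow_of_pos (x := t ^ (-(d : ℝ) / (2 * m))) (by positivity),
    ← Real.rpow_mul ht.le]
  rw [show -(d : ℝ) / (2 * m) * m = -(d : ℝ) / 2 by field_simp]
  gcongr

/-- `L^m → L^q` smoothing. -/
lemma fj_H_Lq (d : ℕ) {t : ℝ} (ht : 0 < t) {f : EuclideanSpace ℝ (Fin d) → ℝ≥0∞}
    (hf : Measurable f) {m q : ℝ} (hm : 1 ≤ m) (hmq : m ≤ q) {a : ℝ} (ha : 0 ≤ a)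
    (hfa : ∫⁻ y, f y ^ m ≤ ENNReal.ofReal a ^ m) :
    ∫⁻ x, fjH d t f x ^ q ≤ ENNReal.ofReal (t ^ (-(d : ℝ) / 2 * (1 / m - 1 / q)) * a) ^ q := by
  have hm0 : 0 < m := by linarith
  have hq0 : 0 < q := by linarith
  set B : ℝ := t ^ (-(d : ℝ) / (2 * m)) * a with hB
  have hB0 : 0 ≤ B := by positivity
  calc _ ≤ ∫⁻ x, ENNReal.ofReal B ^ (q - m) * fjH d t f x ^ m := by
        refine lintegral_mono fun x => ?_
        have : fjH d t f x ^ q = fjH d t f x ^ (q - m) * fjH d t f x ^ m := by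
          rw [← ENNReal.rpow_add_of_nonneg _ _ (by linarith) hm0.le]; congr 1; ring
        dsimp only
        rw [this]
        gcongr
        exact fj_H_sup d ht hf hm hfa x
    _ = ENNReal.ofReal B ^ (q - m) * ∫⁻ x, fjH d t f x ^ m := by
        rw [lintegral_const_mul _ ((fj_H_meas d t hf).pow_const m)]
    _ ≤ ENNReal.ofReal B ^ (q - m) * ENNReal.ofReal a ^ m := by
        gcongr
        exact (fj_H_Lm d ht hf hm).trans hfa
    _ = _ := by
        rw [ENNReal.ofReal_rpow_of_nonneg hB0 (by linarith),
          ENNReal.ofReal_rpow_of_nonneg ha hm0.le,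
          ENNReal.ofReal_rpow_of_nonneg (by positivity) hq0.le, ← ENNReal.ofReal_mul (by positivity)]
        congr 1
        rw [hB, Real.mul_rpow (by positivity) ha, Real.mul_rpow (by positivity) ha,
          ← Real.rpow_mul ht.le, ← Real.rpow_mul ht.le, mul_assoc,
          ← Real.rpow_add_of_nonneg ha (by linarith) hm0.le, sub_add_cancel]
        congr 2
        field_simp

/-- Duhamel term. -/
noncomputable def fjD (d : ℕ) (p : ℝ) (V : ℝ → EuclideanSpace ℝ (Fin d) → ℝ≥0∞) (t : ℝ)
    (x : EuclideanSpace ℝ (Fin d)) : ℝ≥0∞ :=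
  ∫⁻ s in Set.Ioo 0 t, fjH d (t - s) (fun y => V s y ^ p) x

lemma fj_F_meas (d : ℕ) (p : ℝ) {V : ℝ → EuclideanSpace ℝ (Fin d) → ℝ≥0∞}
    (hV : Measurable (Function.uncurry V)) :
    Measurable fun z : (ℝ × EuclideanSpace ℝ (Fin d)) × ℝ =>
      fjH d (z.1.1 - z.2) (fun y => V z.2 y ^ p) z.1.2 := by
  unfold fjH
  refine Measurable.lintegral_prod_right'
    (f := fun z : ((ℝ × EuclideanSpace ℝ (Fin d)) × ℝ) × EuclideanSpace ℝ (Fin d) =>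
    ENNReal.ofReal (heatKernel d (z.1.1.1 - z.1.2) (z.1.1.2 - z.2)) * V z.1.2 z.2 ^ p) ?_
  have h1 : Measurable fun z : ((ℝ × EuclideanSpace ℝ (Fin d)) × ℝ) × EuclideanSpace ℝ (Fin d) =>
      ((z.1.1.1 - z.1.2, z.1.1.2 - z.2) : ℝ × EuclideanSpace ℝ (Fin d)) := by fun_prop
  have h2 : Measurable fun z : ((ℝ × EuclideanSpace ℝ (Fin d)) × ℝ) × EuclideanSpace ℝ (Fin d) =>
      ((z.1.2, z.2) : ℝ × EuclideanSpace ℝ (Fin d)) := by fun_prop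
  exact ((fj_hk_meas d).comp h1).ennreal_ofReal.mul ((hV.comp h2).pow_const p)

lemma fj_D_meas (d : ℕ) (p : ℝ) {V : ℝ → EuclideanSpace ℝ (Fin d) → ℝ≥0∞}
    (hV : Measurable (Function.uncurry V)) :
    Measurable (Function.uncurry (fjD d p V)) := by
  have e : Function.uncurry (fjD d p V) = fun z : ℝ × EuclideanSpace ℝ (Fin d) =>
      ∫⁻ s, Set.indicator {w : (ℝ × EuclideanSpace ℝ (Fin d)) × ℝ | 0 < w.2 ∧ w.2 < w.1.1}
        (fun w => fjH d (w.1.1 - w.2) (fun y => V w.2 y ^ p) w.1.2) (z, s) := by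
    funext z
    simp only [Function.uncurry, fjD]
    rw [← lintegral_indicator measurableSet_Ioo]
    refine lintegral_congr fun s => ?_
    simp [Set.indicator, Set.mem_Ioo]
  rw [e]
  refine Measurable.lintegral_prod_right' ((fj_F_meas d p hV).indicator ?_)
  exact (measurableSet_lt measurable_const measurable_snd).inter
    (measurableSet_lt measurable_snd (measurable_fst.comp measurable_fst))

lemma fj_heat_meas (d : ℕ) {v : EuclideanSpace ℝ (Fin d) → ℝ≥0∞} (hv : Measurable v) :
    Measurable (Function.uncurry fun t x => fjH d t v x) := by
  unfold fjH
  refine Measurable.lintegral_prod_right'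
    (f := fun z : (ℝ × EuclideanSpace ℝ (Fin d)) × EuclideanSpace ℝ (Fin d) =>
    ENNReal.ofReal (heatKernel d z.1.1 (z.1.2 - z.2)) * v z.2) ?_
  have h1 : Measurable fun z : (ℝ × EuclideanSpace ℝ (Fin d)) × EuclideanSpace ℝ (Fin d) =>
      ((z.1.1, z.1.2 - z.2) : ℝ × EuclideanSpace ℝ (Fin d)) := by fun_prop
  exact ((fj_hk_meas d).comp h1).ennreal_ofReal.mul (hv.comp measurable_snd)

lemma fj_min_interp {x : ℝ≥0∞} {A B θ : ℝ} (hA : 0 ≤ A) (hB : 0 ≤ B) (h0 : 0 ≤ θ) (h1 : θ ≤ 1)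
    (hxA : x ≤ ENNReal.ofReal A) (hxB : x ≤ ENNReal.ofReal B) :
    x ≤ ENNReal.ofReal (A ^ θ * B ^ (1 - θ)) := by
  rw [ENNReal.ofReal_mul (by positivity), ← ENNReal.ofReal_rpow_of_nonneg hA h0,
    ← ENNReal.ofReal_rpow_of_nonneg hB (by linarith)]
  calc x = x ^ θ * x ^ (1 - θ) := by
        rw [← ENNReal.rpow_add_of_nonneg _ _ h0 (by linarith)]; simp
    _ ≤ _ := by
        have : 0 ≤ 1 - θ := by linarith
        gcongr

lemma fj_step (d : ℕ) {p q κ α : ℝ} (hp : 1 < p) (hpq : p ≤ q) (hκ : κ = d * (p - 1) / (2 * q))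
    (hκ1 : κ < 1) (hκp : 1 / p < κ) (hα : α = (1 - κ) / (p - 1)) :
    ∃ C : ℝ, 0 < C ∧ ∀ (V : ℝ → EuclideanSpace ℝ (Fin d) → ℝ≥0∞) (M : ℝ), 0 < M →
      Measurable (Function.uncurry V) →
      (∀ t, 0 < t → ∀ x, V t x ≤ ENNReal.ofReal M) →
      (∀ t, 0 < t → ∫⁻ x, V t x ^ q ≤ ENNReal.ofReal (M * t ^ (-α)) ^ q) →
      (∀ t, 0 < t → ∀ x, fjD d p V t x ≤ ENNReal.ofReal (C * M ^ p)) ∧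
      (∀ t, 0 < t → ∫⁻ x, fjD d p V t x ^ q ≤ ENNReal.ofReal (C * M ^ p * t ^ (-α)) ^ q) := by
  have hp0 : 0 < p := by linarith
  have hp1 : 0 < p - 1 := by linarith
  have hq0 : 0 < q := by linarith
  have hκ0 : 0 < κ := lt_trans (by positivity) hκp
  have hα0 : 0 < α := by rw [hα]; exact div_pos (by linarith) hp1
  have hαp1 : α * (p - 1) = 1 - κ := by rw [hα]; field_simp
  have hαp : α * p < 1 := by
    have h1 : 1 < κ * p := by rwa [div_lt_iff₀ hp0] at hκp
    rw [hα, div_mul_eq_mul_div, div_lt_one hp1]; linarith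
  have hm : 1 ≤ q / p := by rwa [le_div_iff₀ hp0, one_mul]
  have hmq : q / p ≤ q := div_le_self hq0.le hp.le
  set C1 : ℝ := (1 / 2) ^ (-κ) / (1 - (1 - κ)) + (1 / 2) ^ (-(1 - κ)) / (1 - κ) with hC1
  set C2 : ℝ := (1 / 2) ^ (-κ) / (1 - α * p) + (1 / 2) ^ (-(α * p)) / (1 - κ) with hC2
  have hk' : 0 < 1 - κ := by linarith
  have ha' : 0 < 1 - α * p := by linarith
  have hC1p : 0 < C1 := by
    rw [hC1, sub_sub_cancel]; positivity
  have hC2p : 0 < C2 := by positivity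
  refine ⟨C1 + C2, by positivity, ?_⟩
  intro V M hM hVm hVs hVq
  have hMp : 0 < M ^ p := by positivity
  have hVms : ∀ s, Measurable fun y => V s y ^ p := fun s => hVm.of_uncurry_left.pow_const p
  have hL : ∀ s, 0 < s → ∫⁻ y, (V s y ^ p) ^ (q / p) ≤
      ENNReal.ofReal ((M * s ^ (-α)) ^ p) ^ (q / p) := by
    intro s hs
    rw [← ENNReal.ofReal_rpow_of_nonneg (by positivity) hp0.le, ← ENNReal.rpow_mul,
      mul_div_cancel₀ _ hp0.ne']
    simp only [← ENNReal.rpow_mul, mul_div_cancel₀ _ hp0.ne']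
    exact hVq s hs
  constructor
  · intro t ht x
    have hF : ∀ s ∈ Set.Ioo 0 t, fjH d (t - s) (fun y => V s y ^ p) x ≤
        ENNReal.ofReal (M ^ p * ((t - s) ^ (-κ) * s ^ (-(1 - κ)))) := by
      intro s hs
      have hs0 : 0 < s := hs.1
      have hts : 0 < t - s := by linarith [hs.2]
      have b1 : fjH d (t - s) (fun y => V s y ^ p) x ≤ ENNReal.ofReal (M ^ p) := by
        refine fj_H_const d hts (Filter.Eventually.of_forall fun y => ?_) x
        rw [← ENNReal.ofReal_rpow_of_nonneg hM.le hp0.le]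
        have := hVs s hs0 y
        gcongr
      have b2 := fj_H_sup d hts (hVms s) hm (hL s hs0) x
      have b3 := fj_min_interp (θ := 1 / p) (by positivity) (by positivity) (by positivity)
        (by rw [div_le_one hp0]; exact hp.le) b1 b2
      refine b3.trans (le_of_eq ?_)
      congr 1
      rw [← Real.rpow_mul hM.le, mul_one_div_cancel hp0.ne', Real.rpow_one,
        Real.mul_rpow (by positivity) (by positivity), ← Real.rpow_mul hts.le,
        ← Real.rpow_mul (by positivity), Real.mul_rpow hM.le (by positivity),
        ← Real.rpow_mul hs0.le]
      have e1 : -(d : ℝ) / (2 * (q / p)) * (1 - 1 / p) = -κ := by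
        rw [hκ]; field_simp
      have e2 : p * (1 - 1 / p) = p - 1 := by field_simp
      have e3 : -α * (p - 1) = -(1 - κ) := by rw [← hαp1]; ring
      rw [e1, e2, e3]
      have e4 : M ^ p = M * M ^ (p - 1) := by
        conv_rhs => rw [← Real.rpow_one_add' hM.le (by linarith)]
        congr 1; ring
      rw [e4]; ring
    calc fjD d p V t x ≤ ∫⁻ s in Set.Ioo 0 t,
          ENNReal.ofReal (M ^ p) * ENNReal.ofReal ((t - s) ^ (-κ) * s ^ (-(1 - κ))) := by
          refine setLIntegral_mono (by fun_prop) fun s hs => ?_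
          rw [← ENNReal.ofReal_mul hMp.le]
          exact hF s hs
      _ = ENNReal.ofReal (M ^ p) * ∫⁻ s in Set.Ioo 0 t,
          ENNReal.ofReal ((t - s) ^ (-κ) * s ^ (-(1 - κ))) := by
          rw [lintegral_const_mul _ (by fun_prop)]
      _ ≤ ENNReal.ofReal (M ^ p) * ENNReal.ofReal (C1 * t ^ (1 - κ - (1 - κ))) := by
          gcongr
          exact fj_beta hκ0.le hk'.le hκ1 (by linarith) ht
      _ ≤ _ := by
          rw [← ENNReal.ofReal_mul hMp.le, sub_self, Real.rpow_zero]
          apply ENNReal.ofReal_le_ofReal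
          nlinarith
  · intro t ht
    have hFm : Measurable (Function.uncurry fun (s : ℝ) (x : EuclideanSpace ℝ (Fin d)) =>
        fjH d (t - s) (fun y => V s y ^ p) x) := by
      have h1 : Measurable fun z : ℝ × EuclideanSpace ℝ (Fin d) =>
        (((t, z.2), z.1) : (ℝ × EuclideanSpace ℝ (Fin d)) × ℝ) := by fun_prop
      have h := (fj_F_meas d p hVm).comp h1
      exact h
    have hw1 : Measurable fun s : ℝ => M ^ p * ((t - s) ^ (-κ) * s ^ (-(α * p))) := by fun_prop
    have hq1 : 1 ≤ q := by linarith
    refine fj_minkowski (μ := volume) (S := Set.Ioo 0 t)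
      (F := fun (s : ℝ) (x : EuclideanSpace ℝ (Fin d)) => fjH d (t - s) (fun y => V s y ^ p) x)
      hFm hq1 measurableSet_Ioo hw1 ?_ ?_ ?_
    · intro s hs
      have hs0 : 0 < s := hs.1
      have hts : 0 < t - s := by linarith [hs.2]
      positivity
    · intro s hs
      have hs0 : 0 < s := hs.1
      have hts : 0 < t - s := by linarith [hs.2]
      refine (fj_H_Lq d hts (hVms s) hm hmq (by positivity) (hL s hs0)).trans (le_of_eq ?_)
      congr 2
      have e1 : -(d : ℝ) / 2 * (1 / (q / p) - 1 / q) = -κ := by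
        rw [hκ]; field_simp
      rw [e1, Real.mul_rpow hM.le (by positivity), ← Real.rpow_mul hs0.le, neg_mul]
      ring_nf
    · calc
        ∫⁻ s in Set.Ioo 0 t, ENNReal.ofReal (M ^ p * ((t - s) ^ (-κ) * s ^ (-(α * p)))) = ENNReal.ofReal (M ^ p) * ∫⁻ s in Set.Ioo 0 t,
          ENNReal.ofReal ((t - s) ^ (-κ) * s ^ (-(α * p))) := by
          rw [← lintegral_const_mul _ (by fun_prop)]
          refine lintegral_congr fun s => ?_
          rw [ENNReal.ofReal_mul hMp.le]
        _ ≤ ENNReal.ofReal (M ^ p) * ENNReal.ofReal (C2 * t ^ (1 - κ - α * p)) := by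
          gcongr
          exact fj_beta hκ0.le (by positivity) hκ1 hαp ht
        _ ≤ _ := by
          rw [← ENNReal.ofReal_mul hMp.le]
          apply ENNReal.ofReal_le_ofReal
          rw [show 1 - κ - α * p = -α by rw [← hαp1]; ring]
          have : 0 < t ^ (-α) := by positivity
          have := mul_pos hMp this
          nlinarith

/-- Picard iterates. -/
noncomputable def fjU (d : ℕ) (p : ℝ) (v : EuclideanSpace ℝ (Fin d) → ℝ≥0∞) :
    ℕ → ℝ → EuclideanSpace ℝ (Fin d) → ℝ≥0∞
  | 0 => fun _ _ => 0
  | n + 1 => fun t x => fjH d t v x + fjD d p (fjU d p v n) t x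

lemma fj_U_meas (d : ℕ) (p : ℝ) {v : EuclideanSpace ℝ (Fin d) → ℝ≥0∞} (hv : Measurable v) (n : ℕ) :
    Measurable (Function.uncurry (fjU d p v n)) := by
  induction n with
  | zero => exact measurable_const
  | succ n ih => exact (fj_heat_meas d hv).add (fj_D_meas d p ih)

lemma fj_H_mono (d : ℕ) (t : ℝ) {f g : EuclideanSpace ℝ (Fin d) → ℝ≥0∞} (h : ∀ y, f y ≤ g y)
    (x : EuclideanSpace ℝ (Fin d)) : fjH d t f x ≤ fjH d t g x := by
  unfold fjH
  refine lintegral_mono fun y => ?_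
  have := h y
  dsimp only
  gcongr

lemma fj_D_mono (d : ℕ) {p : ℝ} (hp : 0 ≤ p) {V W : ℝ → EuclideanSpace ℝ (Fin d) → ℝ≥0∞}
    (h : ∀ t x, V t x ≤ W t x) (t : ℝ) (x : EuclideanSpace ℝ (Fin d)) :
    fjD d p V t x ≤ fjD d p W t x := by
  unfold fjD
  refine lintegral_mono fun s => fj_H_mono d _ (fun y => ?_) x
  have := h s y
  gcongr

lemma fj_U_mono (d : ℕ) {p : ℝ} (hp : 0 ≤ p) (v : EuclideanSpace ℝ (Fin d) → ℝ≥0∞) :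
    ∀ t x, Monotone fun n => fjU d p v n t x := by
  have : ∀ n, ∀ t x, fjU d p v n t x ≤ fjU d p v (n + 1) t x := by
    intro n
    induction n with
    | zero => intro t x; simp [fjU]
    | succ n ih =>
      intro t x
      exact add_le_add le_rfl (fj_D_mono d hp ih t x)
  exact fun t x => monotone_nat_of_le_succ fun n => this n t x

lemma fj_D_iSup (d : ℕ) {p : ℝ} (hp : 0 < p) {V : ℕ → ℝ → EuclideanSpace ℝ (Fin d) → ℝ≥0∞}
    (hm : ∀ n, Measurable (Function.uncurry (V n))) (hmono : ∀ t x, Monotone fun n => V n t x)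
    (t : ℝ) (x : EuclideanSpace ℝ (Fin d)) :
    fjD d p (fun t x => ⨆ n, V n t x) t x = ⨆ n, fjD d p (V n) t x := by
  have key : ∀ s, fjH d (t - s) (fun y => (⨆ n, V n s y) ^ p) x =
      ⨆ n, fjH d (t - s) (fun y => V n s y ^ p) x := by
    intro s
    unfold fjH
    rw [← lintegral_iSup]
    · refine lintegral_congr fun y => ?_
      have : (⨆ n, V n s y) ^ p = ⨆ n, V n s y ^ p :=
        (ENNReal.orderIsoRpow p hp).map_iSup _
      simp only [this, ENNReal.mul_iSup]
    · intro n
      exact (fj_k_meas d _).of_uncurry_left.mul ((hm n).of_uncurry_left.pow_const p)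
    · intro n m hnm y
      have := hmono s y hnm
      dsimp only at this ⊢
      gcongr
  unfold fjD
  simp only [key]
  rw [lintegral_iSup]
  · intro n
    have h := (fj_F_meas d p (hm n)).comp (measurable_prodMk_left (x := (t, x)))
    exact h
  · intro n m hnm s
    refine fj_H_mono d _ (fun y => ?_) x
    have := hmono s y hnm
    dsimp only at this
    gcongr

lemma fj_root_le {a b : ℝ≥0∞} {q : ℝ} (hq : 0 < q) : a ^ (1 / q) ≤ b ↔ a ≤ b ^ q := by
  rw [← ENNReal.rpow_le_rpow_iff hq, ← ENNReal.rpow_mul, one_div_mul_cancel hq.ne',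
    ENNReal.rpow_one]

lemma fj_U_bound (d : ℕ) {p q α C ε : ℝ} (hq1 : 1 ≤ q) (hε : 0 < ε)
    (hstep : ∀ (V : ℝ → EuclideanSpace ℝ (Fin d) → ℝ≥0∞) (M : ℝ), 0 < M →
      Measurable (Function.uncurry V) →
      (∀ t, 0 < t → ∀ x, V t x ≤ ENNReal.ofReal M) →
      (∀ t, 0 < t → ∫⁻ x, V t x ^ q ≤ ENNReal.ofReal (M * t ^ (-α)) ^ q) →
      (∀ t, 0 < t → ∀ x, fjD d p V t x ≤ ENNReal.ofReal (C * M ^ p)) ∧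
      (∀ t, 0 < t → ∫⁻ x, fjD d p V t x ^ q ≤ ENNReal.ofReal (C * M ^ p * t ^ (-α)) ^ q))
    (hC : C * (2 * ε) ^ p ≤ ε)
    {v : EuclideanSpace ℝ (Fin d) → ℝ≥0∞} (hv : Measurable v)
    (h1 : ∀ t, 0 < t → ∀ x, fjH d t v x ≤ ENNReal.ofReal ε)
    (h2 : ∀ t, 0 < t → ∫⁻ x, fjH d t v x ^ q ≤ ENNReal.ofReal (ε * t ^ (-α)) ^ q) (n : ℕ) :
    (∀ t, 0 < t → ∀ x, fjU d p v n t x ≤ ENNReal.ofReal (2 * ε)) ∧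
      (∀ t, 0 < t → ∫⁻ x, fjU d p v n t x ^ q ≤ ENNReal.ofReal (2 * ε * t ^ (-α)) ^ q) := by
  have hq0 : 0 < q := by linarith
  induction n with
  | zero =>
    constructor
    · intro t _ x; simp [fjU]
    · intro t _; simp [fjU, ENNReal.zero_rpow_of_pos hq0]
  | succ n ih =>
    obtain ⟨s1, s2⟩ := hstep (fjU d p v n) (2 * ε) (by positivity) (fj_U_meas d p hv n) ih.1 ih.2
    constructor
    · intro t ht x
      calc fjU d p v (n + 1) t x ≤ ENNReal.ofReal ε + ENNReal.ofReal ε :=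
            add_le_add (h1 t ht x) ((s1 t ht x).trans (ENNReal.ofReal_le_ofReal hC))
        _ = _ := by rw [← ENNReal.ofReal_add hε.le hε.le, two_mul]
    · intro t ht
      have hta : 0 < t ^ (-α) := by positivity
      have m1 : Measurable (fjH d t v) := fj_H_meas d t hv
      have m2 : Measurable (fjD d p (fjU d p v n) t) :=
        (fj_D_meas d p (fj_U_meas d p hv n)).of_uncurry_left
      have hadd := ENNReal.lintegral_Lp_add_le (μ := volume) m1.aemeasurable m2.aemeasurable hq1
      have b1 : (∫⁻ x, fjH d t v x ^ q) ^ (1 / q) ≤ ENNReal.ofReal (ε * t ^ (-α)) := by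
        rw [fj_root_le hq0]; exact h2 t ht
      have b2 : (∫⁻ x, fjD d p (fjU d p v n) t x ^ q) ^ (1 / q) ≤
          ENNReal.ofReal (ε * t ^ (-α)) := by
        rw [fj_root_le hq0]
        refine (s2 t ht).trans ?_
        gcongr
      have b3 := hadd.trans (add_le_add b1 b2)
      rw [fj_root_le hq0, ← ENNReal.ofReal_add (by positivity) (by positivity)]
        at b3
      rw [show 2 * ε * t ^ (-α) = ε * t ^ (-α) + ε * t ^ (-α) by ring]
      exact b3

theorem fujita_global_existence (d : ℕ) (hd : 1 ≤ d) (p : ℝ)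
    (hp : 1 + 2 / (d : ℝ) < p) (r : ℝ) (hr : r = d * (p - 1) / 2) :
    ∃ ε : ℝ, 0 < ε ∧
      ∀ u₀ : EuclideanSpace ℝ (Fin d) → ℝ, Measurable u₀ → 0 ≤ᵐ[volume] u₀ →
        eLpNorm u₀ (ENNReal.ofReal r) volume + eLpNorm u₀ ⊤ volume ≤
          ENNReal.ofReal ε →
        ∃ u : ℝ → EuclideanSpace ℝ (Fin d) → ℝ,
          Measurable (Function.uncurry u) ∧
          (∀ t : ℝ, 0 ≤ t → 0 ≤ᵐ[volume] u t) ∧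
          (∀ T : ℝ, 0 < T →
            (⨆ t ∈ Set.Icc (0 : ℝ) T, eLpNorm (u t) ⊤ volume) < ⊤) ∧
          u 0 =ᵐ[volume] u₀ ∧
          (∀ t : ℝ, 0 < t → ∀ᵐ x ∂volume, u t x =
            (∫ y, heatKernel d t (x - y) * u₀ y) +
              ∫ s in Set.Ioc (0 : ℝ) t,
                ∫ y, heatKernel d (t - s) (x - y) * u s y ^ p) := by
  have hd0 : (0 : ℝ) < d := by exact_mod_cast hd
  have h2d : 0 < 2 / (d : ℝ) := by positivity
  have hp1 : 1 < p := by linarith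
  have hp0 : 0 < p := by linarith
  have hpm : 0 < p - 1 := by linarith
  have hr1 : 1 < r := by
    have : 2 / (d : ℝ) < p - 1 := by linarith
    rw [div_lt_iff₀ hd0] at this
    rw [hr]; linarith
  have hr0 : 0 < r := by linarith
  obtain ⟨q, hq1, hq2⟩ : ∃ q, max p r < q ∧ q < p * r :=
    exists_between (max_lt (by nlinarith) (by nlinarith))
  have hpq : p < q := (le_max_left _ _).trans_lt hq1
  have hrq : r < q := (le_max_right _ _).trans_lt hq1
  have hq0 : 0 < q := by linarith
  set κ : ℝ := d * (p - 1) / (2 * q) with hκ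
  have hκr : κ = r / q := by rw [hκ, hr]; field_simp
  have hκ1 : κ < 1 := by rw [hκr, div_lt_one hq0]; exact hrq
  have hκp : 1 / p < κ := by rw [hκr, div_lt_div_iff₀ hp0 hq0]; linarith
  set α : ℝ := (1 - κ) / (p - 1) with hα
  obtain ⟨C, hC0, hstep⟩ := fj_step d hp1 hpq.le hκ hκ1 hκp hα
  set ε : ℝ := (C * 2 ^ p) ^ (-(1 / (p - 1))) with hεdef
  have hε : 0 < ε := by positivity
  have hC : C * (2 * ε) ^ p ≤ ε := by
    have e1 : ε ^ (p - 1) = (C * 2 ^ p)⁻¹ := by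
      rw [hεdef, ← Real.rpow_mul (by positivity), neg_mul, one_div_mul_cancel hpm.ne',
        Real.rpow_neg_one]
    have e2 : ε ^ p = ε * ε ^ (p - 1) := by
      conv_rhs => rw [← Real.rpow_one_add' hε.le (by linarith)]
      congr 1; ring
    rw [Real.mul_rpow (by norm_num) hε.le, e2, e1]
    apply le_of_eq
    field_simp
  refine ⟨ε, hε, ?_⟩
  intro u₀ hu₀ hpos hnorm
  have hn1 : eLpNorm u₀ (ENNReal.ofReal r) volume ≤ ENNReal.ofReal ε := le_self_add.trans hnorm
  have hn2 : eLpNorm u₀ ⊤ volume ≤ ENNReal.ofReal ε := le_add_self.trans hnorm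
  set v : EuclideanSpace ℝ (Fin d) → ℝ≥0∞ := fun y => ENNReal.ofReal (u₀ y) with hvdef
  have hv : Measurable v := hu₀.ennreal_ofReal
  have hvle : ∀ y, v y ≤ ‖u₀ y‖ₑ := fun y => Real.ofReal_le_enorm _
  have hvsup : ∀ᵐ y, v y ≤ ENNReal.ofReal ε := by
    rw [eLpNorm_exponent_top] at hn2
    filter_upwards [enorm_ae_le_eLpNormEssSup u₀ volume] with y hy
    exact (hvle y).trans (hy.trans hn2)
  have hvr : ∫⁻ y, v y ^ r ≤ ENNReal.ofReal ε ^ r := by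
    rw [eLpNorm_eq_lintegral_rpow_enorm_toReal (by simpa using hr0) ENNReal.ofReal_ne_top,
      ENNReal.toReal_ofReal hr0.le, fj_root_le hr0] at hn1
    refine le_trans (lintegral_mono fun y => ?_) hn1
    have := hvle y
    dsimp only
    gcongr
  have h1 : ∀ t, 0 < t → ∀ x, fjH d t v x ≤ ENNReal.ofReal ε :=
    fun t ht x => fj_H_const d ht hvsup x
  have h2 : ∀ t, 0 < t → ∫⁻ x, fjH d t v x ^ q ≤ ENNReal.ofReal (ε * t ^ (-α)) ^ q := by
    intro t ht
    refine (fj_H_Lq d ht hv hr1.le hrq.le hε.le hvr).trans (le_of_eq ?_)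
    have : -(d : ℝ) / 2 * (1 / r - 1 / q) = -α := by
      rw [hα, hκ, hr]; field_simp
    rw [this, mul_comm]
  have hU := fj_U_bound d (by linarith) hε hstep hC hv h1 h2
  set U : ℝ → EuclideanSpace ℝ (Fin d) → ℝ≥0∞ := fun t x => ⨆ n, fjU d p v n t x with hUdef
  have hUm : Measurable (Function.uncurry U) :=
    Measurable.iSup fun n => fj_U_meas d p hv n
  have hUb : ∀ t, 0 < t → ∀ x, U t x ≤ ENNReal.ofReal (2 * ε) :=
    fun t ht x => iSup_le fun n => (hU n).1 t ht x
  have hUtop : ∀ t, 0 < t → ∀ x, U t x ≠ ⊤ :=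
    fun t ht x => ne_top_of_le_ne_top ENNReal.ofReal_ne_top (hUb t ht x)
  have hUeq : ∀ t x, U t x = fjH d t v x + fjD d p U t x := by
    intro t x
    rw [hUdef, fj_D_iSup d hp0 (fun n => fj_U_meas d p hv n) (fj_U_mono d hp0.le v),
      ENNReal.add_iSup]
    exact ((fj_U_mono d hp0.le v t x).iSup_nat_add 1).symm
  set u : ℝ → EuclideanSpace ℝ (Fin d) → ℝ :=
    fun t x => if t = 0 then u₀ x else (U t x).toReal with hudef
  have hut : ∀ t, 0 < t → ∀ x, u t x = (U t x).toReal := fun t ht x => by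
    simp [hudef, ht.ne']
  have hu0 : u 0 = u₀ := by funext x; simp [hudef]
  refine ⟨u, ?_, ?_, ?_, ?_, ?_⟩
  · refine Measurable.ite (p := fun z : ℝ × EuclideanSpace ℝ (Fin d) => z.1 = 0)
      (measurableSet_eq_fun measurable_fst measurable_const) (hu₀.comp measurable_snd)
      hUm.ennreal_toReal
  · intro t ht
    rcases ht.eq_or_lt with rfl | ht
    · rw [hu0]; exact hpos
    · refine Filter.Eventually.of_forall fun x => ?_
      rw [hut t ht]; exact ENNReal.toReal_nonneg
  · intro T hT
    refine lt_of_le_of_lt (iSup₂_le fun t ht => ?_) (ENNReal.ofReal_lt_top (r := 2 * ε))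
    rcases ht.1.eq_or_lt with rfl | ht
    · rw [hu0]; exact hn2.trans (ENNReal.ofReal_le_ofReal (by linarith))
    · rw [eLpNorm_exponent_top]
      refine eLpNormEssSup_le_of_ae_enorm_bound (Filter.Eventually.of_forall fun x => ?_)
      rw [hut t ht, Real.enorm_of_nonneg ENNReal.toReal_nonneg, ENNReal.ofReal_toReal (hUtop t ht x)]
      exact hUb t ht x
  · rw [hu0]
  · intro t ht
    refine Filter.Eventually.of_forall fun x => ?_
    have hH : fjH d t v x ≠ ⊤ := ne_top_of_le_ne_top ENNReal.ofReal_ne_top (h1 t ht x)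
    have hD : fjD d p U t x ≠ ⊤ := by
      refine ne_top_of_le_ne_top (hUtop t ht x) ?_
      rw [hUeq]; exact le_add_self
    rw [hut t ht, hUeq, ENNReal.toReal_add hH hD]
    have kmeas : ∀ s : ℝ, Measurable fun y => heatKernel d s (x - y) := by
      intro s
      have h : Measurable fun y : EuclideanSpace ℝ (Fin d) =>
        ((s, x - y) : ℝ × EuclideanSpace ℝ (Fin d)) := by fun_prop
      have h' := (fj_hk_meas d).comp h
      exact h'
    congr 1
    · rw [integral_eq_lintegral_of_nonneg_ae]
      · unfold fjH
        congr 1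
        refine lintegral_congr fun y => ?_
        rw [ENNReal.ofReal_mul (fj_hk_nonneg d ht.le _)]
      · filter_upwards [hpos] with y hy
        exact mul_nonneg (fj_hk_nonneg d ht.le _) hy
      · exact ((kmeas t).mul hu₀).aestronglyMeasurable
    · rw [integral_Ioc_eq_integral_Ioo]
      have hin : ∀ s ∈ Set.Ioo 0 t, ∫ y, heatKernel d (t - s) (x - y) * u s y ^ p =
          (fjH d (t - s) (fun y => U s y ^ p) x).toReal := by
        intro s hs
        have hs0 : 0 < s := hs.1
        have hts : 0 ≤ t - s := by linarith [hs.2]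
        have e : ∀ y, u s y ^ p = (U s y ^ p).toReal := fun y => by
          rw [hut s hs0, ENNReal.toReal_rpow]
        simp only [e]
        rw [integral_eq_lintegral_of_nonneg_ae]
        · unfold fjH
          congr 1
          refine lintegral_congr fun y => ?_
          rw [ENNReal.ofReal_mul (fj_hk_nonneg d hts _), ENNReal.ofReal_toReal]
          exact ENNReal.rpow_ne_top_of_nonneg hp0.le (hUtop s hs0 y)
        · exact Filter.Eventually.of_forall fun y =>
            mul_nonneg (fj_hk_nonneg d hts _) ENNReal.toReal_nonneg
        · exact ((kmeas (t - s)).mul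
            (hUm.of_uncurry_left.pow_const p).ennreal_toReal).aestronglyMeasurable
      rw [setIntegral_congr_fun measurableSet_Ioo hin, integral_toReal]
      · rfl
      · have h := (fj_F_meas d p hUm).comp (measurable_prodMk_left (x := (t, x)))
        exact Measurable.aemeasurable h
      · refine (ae_restrict_iff' measurableSet_Ioo).2 (Filter.Eventually.of_forall fun s hs => ?_)
        have hs0 : 0 < s := hs.1
        have hts : 0 < t - s := by linarith [hs.2]
        refine lt_of_le_of_lt (fj_H_const d hts (c := ENNReal.ofReal (2 * ε) ^ p)
          (Filter.Eventually.of_forall fun y => ?_) x) ?_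
        · have := hUb s hs0 y
          gcongr
        · exact ENNReal.rpow_lt_top_of_nonneg hp0.le ENNReal.ofReal_ne_top
end
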